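/- arXiv:math/0401309 — 9 statements merged into one kernel-verified Lean document; each statement's English description precedes it below -/
import Mathlib

section
/- Let n ≥ 2 and α ∈ (0,2). For every ε > 0 there exists λ₀ = λ₀(ε, α, n) ∈ (0,1) such that for every bounded open set D ⊆ ℝⁿ, every function u that is α-harmonic in D and positive on D, every y ∈ D, and every z ∈ B(y, λ₀ δ_D(y)), one has (1+ε)^{−1} u(z) ≤ u(y) ≤ (1+ε) u(z). -/
open Metric Set MeasureTheory

/-- The α-stable Poisson kernel of the ball `B(x₀, r)`. -/
noncomputable def stablePoissonKernel (n : ℕ) (α : ℝ) (x₀ : EuclideanSpace ℝ (Fin n))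
    (r : ℝ) (x v : EuclideanSpace ℝ (Fin n)) : ℝ :=
  (Real.Gamma (n / 2) * Real.pi ^ (-(n : ℝ) / 2 - 1) * Real.sin (Real.pi * α / 2)) *
    ((r ^ 2 - dist x x₀ ^ 2) / (dist v x₀ ^ 2 - r ^ 2)) ^ (α / 2) *
    dist x v ^ (-(n : ℝ))

/-- `u : ℝⁿ → [0,∞)` Borel with `∫ u(x)(1+|x|)^{−n−α} dx < ∞` is α-harmonic in the
open set `D` if, for every ball whose closure lies in `D` and every point `x` of the
ball, `∫_{|v−x₀|>r} P_{x₀,r}(x,v) u(v) dv` is finite and equals `u(x)`. -/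
def IsAlphaHarmonic (n : ℕ) (α : ℝ) (D : Set (EuclideanSpace ℝ (Fin n)))
    (u : EuclideanSpace ℝ (Fin n) → ℝ) : Prop :=
  Measurable u ∧ (∀ x, 0 ≤ u x) ∧
    Integrable (fun x => u x * (1 + ‖x‖) ^ (-(n : ℝ) - α)) ∧
    ∀ (x₀ : EuclideanSpace ℝ (Fin n)) (r : ℝ), 0 < r → closedBall x₀ r ⊆ D →
      ∀ x ∈ ball x₀ r,
        IntegrableOn (fun v => stablePoissonKernel n α x₀ r x v * u v)
          {v | r < dist v x₀} ∧
        ∫ v in {v | r < dist v x₀}, stablePoissonKernel n α x₀ r x v * u v = u x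

theorem aux_t (n : ℕ) (ε : ℝ) (hε : 0 < ε) : ∃ t : ℝ, 0 < t ∧ t < 1 ∧
    (1 + t) ^ n ≤ (1 + ε) * (1 - t ^ 2) ∧ 1 ≤ (1 + ε) * (1 - t) ^ n := by
  have h1 : ∀ᶠ t : ℝ in nhds 0, (1 + t) ^ n < (1 + ε) * (1 - t ^ 2) := by
    apply Filter.Tendsto.eventually_lt (y := 1) (z := 1 + ε)
    · have : Continuous (fun t : ℝ => (1 + t) ^ n) := by fun_prop
      simpa using this.tendsto 0
    · have : Continuous (fun t : ℝ => (1 + ε) * (1 - t ^ 2)) := by fun_prop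
      simpa using this.tendsto 0
    · linarith
  have h2 : ∀ᶠ t : ℝ in nhds 0, 1 < (1 + ε) * (1 - t) ^ n := by
    have : Continuous (fun t : ℝ => (1 + ε) * (1 - t) ^ n) := by fun_prop
    have h := this.tendsto 0
    apply h.eventually_const_lt
    simpa using hε
  have h3 : ∀ᶠ t : ℝ in nhds 0, t < 1 := eventually_lt_nhds one_pos
  have h4 := ((h1.and (h2.and h3)).filter_mono
    (nhdsWithin_le_nhds (s := Ioi (0 : ℝ)))).and self_mem_nhdsWithin
  obtain ⟨t, ⟨a, b, c⟩, d⟩ := h4.exists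
  exact ⟨t, d, c, a.le, b.le⟩

theorem aux_kernel (n : ℕ) (α : ℝ) (hα : α ∈ Set.Ioo (0 : ℝ) 2) (ε t r : ℝ) (hε : 0 < ε)
    (ht : 0 < t) (ht1 : t < 1) (h1 : (1 + t) ^ n ≤ (1 + ε) * (1 - t ^ 2))
    (h2 : 1 ≤ (1 + ε) * (1 - t) ^ n) (hr : 0 < r)
    (y z v : EuclideanSpace ℝ (Fin n)) (hz : dist z y < t * r) (hv : r < dist v y) :
    stablePoissonKernel n α y r y v ≤ (1 + ε) * stablePoissonKernel n α y r z v ∧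
    stablePoissonKernel n α y r z v ≤ (1 + ε) * stablePoissonKernel n α y r y v := by
  obtain ⟨ha0, ha2⟩ := hα
  unfold stablePoissonKernel
  have hC : 0 ≤ Real.Gamma (n / 2) * Real.pi ^ (-(n : ℝ) / 2 - 1) *
      Real.sin (Real.pi * α / 2) := by
    have := Real.Gamma_nonneg_of_nonneg (s := (n : ℝ) / 2) (by positivity)
    have : 0 ≤ Real.sin (Real.pi * α / 2) := by
      apply Real.sin_nonneg_of_nonneg_of_le_pi
      · have := Real.pi_pos
        positivity
      · nlinarith [Real.pi_pos]
    positivity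
  set C := Real.Gamma (n / 2) * Real.pi ^ (-(n : ℝ) / 2 - 1) * Real.sin (Real.pi * α / 2)
  have hd0 : 0 ≤ dist z y := dist_nonneg
  have htr : t * r < r := by nlinarith
  have hB : 0 < dist v y ^ 2 - r ^ 2 := by nlinarith
  have hd2 : dist z y ^ 2 ≤ t ^ 2 * r ^ 2 := by nlinarith
  have ht2 : 0 < 1 - t ^ 2 := by nlinarith
  have hA : 0 ≤ r ^ 2 - dist z y ^ 2 := by nlinarith [sq_nonneg r]
  have hp : 0 < dist y v := by rw [dist_comm]; linarith
  have hvy : dist v y = dist y v := dist_comm _ _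
  have hq1 : dist z v ≤ (1 + t) * dist y v := by
    have := dist_triangle z y v
    nlinarith
  have hq2 : (1 - t) * dist y v ≤ dist z v := by
    have := dist_triangle_left y v z
    nlinarith
  have hq : 0 < dist z v := lt_of_lt_of_le (mul_pos (by linarith) hp) hq2
  rw [dist_self, Real.div_rpow (by nlinarith) hB.le, Real.div_rpow hA hB.le,
    Real.rpow_neg hp.le, Real.rpow_neg hq.le, Real.rpow_natCast, Real.rpow_natCast]
  have hY : 0 ≤ (r ^ 2 - 0 ^ 2 : ℝ) ^ (α / 2) := Real.rpow_nonneg (by nlinarith) _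
  have hZY : (r ^ 2 - dist z y ^ 2) ^ (α / 2) ≤ (r ^ 2 - 0 ^ 2 : ℝ) ^ (α / 2) :=
    Real.rpow_le_rpow hA (by nlinarith) (by linarith)
  have hYZ : (r ^ 2 - 0 ^ 2 : ℝ) ^ (α / 2) * (1 - t ^ 2) ≤ (r ^ 2 - dist z y ^ 2) ^ (α / 2) := by
    calc (r ^ 2 - 0 ^ 2 : ℝ) ^ (α / 2) * (1 - t ^ 2)
        ≤ (r ^ 2 - 0 ^ 2 : ℝ) ^ (α / 2) * (1 - t ^ 2) ^ (α / 2) := by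
          apply mul_le_mul_of_nonneg_left _ hY
          exact Real.self_le_rpow_of_le_one ht2.le (by nlinarith) (by linarith)
      _ = ((r ^ 2 - 0 ^ 2) * (1 - t ^ 2)) ^ (α / 2) :=
          (Real.mul_rpow (by nlinarith) ht2.le).symm
      _ ≤ _ := Real.rpow_le_rpow (mul_nonneg (by nlinarith) ht2.le) (by nlinarith) (by linarith)
  have hB' : 0 < (dist v y ^ 2 - r ^ 2) ^ (α / 2) := Real.rpow_pos_of_pos hB _
  have hp' : 0 < dist y v ^ n := pow_pos hp n
  have hq' : 0 < dist z v ^ n := pow_pos hq n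
  have hq1' : dist z v ^ n ≤ (1 + t) ^ n * dist y v ^ n := by
    rw [← mul_pow]; exact pow_le_pow_left₀ hq.le hq1 n
  have hq2' : (1 - t) ^ n * dist y v ^ n ≤ dist z v ^ n := by
    rw [← mul_pow]
    exact pow_le_pow_left₀ (mul_nonneg (by linarith) hp.le) hq2 n
  generalize (r ^ 2 - 0 ^ 2 : ℝ) ^ (α / 2) = Y at *
  generalize (r ^ 2 - dist z y ^ 2) ^ (α / 2) = Z at *
  generalize (dist v y ^ 2 - r ^ 2) ^ (α / 2) = B at *
  generalize dist y v ^ n = p at *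
  generalize dist z v ^ n = q at *
  have k1 : Y * q ≤ (1 + ε) * Z * p := by
    calc Y * q ≤ Y * ((1 + t) ^ n * p) := by gcongr
      _ ≤ Y * (((1 + ε) * (1 - t ^ 2)) * p) := by gcongr
      _ = (1 + ε) * (Y * (1 - t ^ 2)) * p := by ring
      _ ≤ _ := by gcongr
  have k2 : Z * p ≤ (1 + ε) * Y * q := by
    calc Z * p ≤ Y * (1 * p) := by rw [one_mul]; gcongr
      _ ≤ Y * (((1 + ε) * (1 - t) ^ n) * p) := by gcongr
      _ = (1 + ε) * Y * ((1 - t) ^ n * p) := by ring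
      _ ≤ _ := by gcongr
  constructor
  · have : Y * p⁻¹ ≤ (1 + ε) * Z * q⁻¹ := by
      rw [← div_eq_mul_inv, ← div_eq_mul_inv, div_le_div_iff₀ hp' hq']; exact k1
    calc C * (Y / B) * p⁻¹ = (C / B) * (Y * p⁻¹) := by ring
      _ ≤ (C / B) * ((1 + ε) * Z * q⁻¹) := by gcongr
      _ = _ := by ring
  · have : Z * q⁻¹ ≤ (1 + ε) * Y * p⁻¹ := by
      rw [← div_eq_mul_inv, ← div_eq_mul_inv, div_le_div_iff₀ hq' hp']; exact k2
    calc C * (Z / B) * q⁻¹ = (C / B) * (Z * q⁻¹) := by ring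
      _ ≤ (C / B) * ((1 + ε) * Y * p⁻¹) := by gcongr
      _ = _ := by ring

/-- for every `ε > 0` there exists `λ₀ = λ₀(ε,α,n) ∈ (0,1)` such that for
every bounded open `D`, every positive α-harmonic `u` on `D`, every `y ∈ D` and every
`z ∈ B(y, λ₀ δ_D(y))`, one has `(1+ε)⁻¹ u(z) ≤ u(y) ≤ (1+ε) u(z)`. -/
theorem stmt3 (n : ℕ) (hn : 2 ≤ n) (α : ℝ) (hα : α ∈ Set.Ioo (0 : ℝ) 2)
    (ε : ℝ) (hε : 0 < ε) :
    ∃ lam₀ ∈ Set.Ioo (0 : ℝ) 1,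
      ∀ D : Set (EuclideanSpace ℝ (Fin n)), IsOpen D → Bornology.IsBounded D →
        ∀ u : EuclideanSpace ℝ (Fin n) → ℝ, IsAlphaHarmonic n α D u →
          (∀ x ∈ D, 0 < u x) →
          ∀ y ∈ D, ∀ z ∈ ball y (lam₀ * Metric.infDist y Dᶜ),
            (1 + ε)⁻¹ * u z ≤ u y ∧ u y ≤ (1 + ε) * u z := by
  obtain ⟨t, ht, ht1, h1, h2⟩ := aux_t n ε hε
  refine ⟨t / 2, ⟨by linarith, by linarith⟩, ?_⟩
  intro D _ _ u hu _ y _ z hz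
  obtain ⟨_, hu0, _, hu⟩ := hu
  set δ := Metric.infDist y Dᶜ with hδ
  rw [mem_ball] at hz
  have hδ0 : 0 < δ := by
    have : 0 ≤ dist z y := dist_nonneg
    by_contra h
    nlinarith
  have hsub : closedBall y (δ / 2) ⊆ D := by
    intro v hv
    by_contra hvD
    have := Metric.infDist_le_dist_of_mem (x := y) (s := Dᶜ) hvD
    rw [mem_closedBall, dist_comm] at hv
    linarith
  have hr : 0 < δ / 2 := by linarith
  have hz' : dist z y < t * (δ / 2) := by linarith
  obtain ⟨iy, ey⟩ := hu y (δ / 2) hr hsub y (mem_ball_self hr)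
  obtain ⟨iz, ez⟩ := hu y (δ / 2) hr hsub z (by rw [mem_ball]; nlinarith)
  have hS : MeasurableSet {v | δ / 2 < dist v y} :=
    measurableSet_lt measurable_const (by fun_prop)
  have key := fun v (hv : δ / 2 < dist v y) =>
    aux_kernel n α hα ε t (δ / 2) hε ht ht1 h1 h2 hr y z v hz' hv
  constructor
  · rw [inv_mul_le_iff₀ (by linarith), ← ey, ← ez, ← integral_const_mul]
    apply setIntegral_mono_on iz (iy.const_mul _) hS
    intro v hv
    rw [← mul_assoc]
    exact mul_le_mul_of_nonneg_right (key v hv).2 (hu0 v)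
  · rw [← ey, ← ez, ← integral_const_mul]
    apply setIntegral_mono_on iy (iz.const_mul _) hS
    intro v hv
    rw [← mul_assoc]
    exact mul_le_mul_of_nonneg_right (key v hv).1 (hu0 v)
end

section
/- (Harnack principle for the fractional Laplacian.) Let n ≥ 2 and α ∈ (0,2). There exists a constant J = J(n, α) ≥ 1 such that for every M ≥ 1, every r > 0, all x₁, x₂ ∈ ℝⁿ with |x₁ − x₂| < M r, and every function u that is nonnegative and α-harmonic in the open set B(x₁, r) ∪ B(x₂, r), one has J^{−1} M^{−(n+α)} u(x₂) ≤ u(x₁) ≤ J M^{n+α} u(x₂). -/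
open Metric Set MeasureTheory

lemma spk_const_pos (n : ℕ) (hn : 2 ≤ n) (α : ℝ) (hα : α ∈ Set.Ioo (0 : ℝ) 2) :
    0 < Real.Gamma (n / 2) * Real.pi ^ (-(n : ℝ) / 2 - 1) * Real.sin (Real.pi * α / 2) := by
  have hn' : (0 : ℝ) < n := by exact_mod_cast (by omega : 0 < n)
  have h1 := Real.Gamma_pos_of_pos (half_pos hn')
  have h2 : 0 < Real.sin (Real.pi * α / 2) := by
    apply Real.sin_pos_of_pos_of_lt_pi
    · have := hα.1
      positivity
    · have := hα.2
      nlinarith [Real.pi_pos]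
  have h3 := Real.rpow_pos_of_pos Real.pi_pos (-(n : ℝ) / 2 - 1)
  positivity

lemma near_bound (n : ℕ) (hn : 2 ≤ n) (α : ℝ) (hα : α ∈ Set.Ioo (0 : ℝ) 2)
    (D : Set (EuclideanSpace ℝ (Fin n))) (u : EuclideanSpace ℝ (Fin n) → ℝ)
    (hu : IsAlphaHarmonic n α D u) (x₀ x : EuclideanSpace ℝ (Fin n)) (R : ℝ) (hR : 0 < R)
    (hD : closedBall x₀ R ⊆ D) (hx : dist x x₀ ≤ R / 2) : u x ≤ 2 ^ n * u x₀ := by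
  obtain ⟨-, hpos, -, H⟩ := hu
  have hC := spk_const_pos n hn α hα
  obtain ⟨i1, e1⟩ := H x₀ R hR hD x (by rw [mem_ball]; linarith)
  obtain ⟨i0, e0⟩ := H x₀ R hR hD x₀ (mem_ball_self hR)
  rw [← e1, ← e0, ← integral_const_mul]
  refine setIntegral_mono_on i1 (i0.const_mul _)
    (measurableSet_lt measurable_const (measurable_id.dist measurable_const)) ?_
  intro v hv
  have hv : R < dist v x₀ := hv
  rw [← mul_assoc]
  refine mul_le_mul_of_nonneg_right ?_ (hpos v)
  unfold stablePoissonKernel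
  have hden : 0 < dist v x₀ ^ 2 - R ^ 2 := by nlinarith
  have hxn : 0 ≤ dist x x₀ := dist_nonneg
  have hnum : 0 ≤ R ^ 2 - dist x x₀ ^ 2 := by nlinarith
  have hA : ((R ^ 2 - dist x x₀ ^ 2) / (dist v x₀ ^ 2 - R ^ 2)) ^ (α / 2) ≤
      ((R ^ 2 - dist x₀ x₀ ^ 2) / (dist v x₀ ^ 2 - R ^ 2)) ^ (α / 2) := by
    apply Real.rpow_le_rpow (by positivity) _ (by linarith [hα.1])
    apply div_le_div_of_nonneg_right _ hden.le
    rw [dist_self]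
    nlinarith
  have hd : dist x₀ v / 2 ≤ dist x v := by
    have := dist_triangle x₀ x v
    rw [dist_comm x₀ x] at this
    rw [dist_comm v x₀] at hv
    linarith
  have hd0 : 0 < dist x₀ v := by rw [dist_comm]; linarith
  have hB : dist x v ^ (-(n : ℝ)) ≤ 2 ^ n * dist x₀ v ^ (-(n : ℝ)) := by
    rw [Real.rpow_neg dist_nonneg, Real.rpow_neg dist_nonneg, Real.rpow_natCast,
      Real.rpow_natCast]
    calc (dist x v ^ n)⁻¹ ≤ ((dist x₀ v / 2) ^ n)⁻¹ := by gcongr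
      _ = _ := by rw [div_pow, inv_div, div_eq_mul_inv]
  have hA0 : 0 ≤ ((R ^ 2 - dist x₀ x₀ ^ 2) / (dist v x₀ ^ 2 - R ^ 2)) ^ (α / 2) := by
    rw [dist_self]
    have : 0 ≤ R ^ 2 - 0 ^ 2 := by nlinarith
    positivity
  calc _ ≤ (Real.Gamma (n / 2) * Real.pi ^ (-(n : ℝ) / 2 - 1) * Real.sin (Real.pi * α / 2)) *
    ((R ^ 2 - dist x₀ x₀ ^ 2) / (dist v x₀ ^ 2 - R ^ 2)) ^ (α / 2) *
    (2 ^ n * dist x₀ v ^ (-(n : ℝ))) := by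
        apply mul_le_mul _ hB (by positivity) (mul_nonneg hC.le hA0)
        exact mul_le_mul_of_nonneg_left hA hC.le
    _ = _ := by ring

lemma far_bound (n : ℕ) (hn : 2 ≤ n) (α : ℝ) (hα : α ∈ Set.Ioo (0 : ℝ) 2) :
    ∃ K : ℝ, 0 < K ∧ ∀ M : ℝ, 1 ≤ M → ∀ r : ℝ, 0 < r →
        ∀ x₁ x₂ : EuclideanSpace ℝ (Fin n), dist x₁ x₂ < M * r → r / 4 < dist x₁ x₂ →
          ∀ u : EuclideanSpace ℝ (Fin n) → ℝ,
            IsAlphaHarmonic n α (ball x₁ r ∪ ball x₂ r) u →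
            K * u x₁ ≤ M ^ ((n : ℝ) + α) * u x₂ := by
  have hC := spk_const_pos n hn α hα
  set C := Real.Gamma (n / 2) * Real.pi ^ (-(n : ℝ) / 2 - 1) * Real.sin (Real.pi * α / 2) with hCdef
  set w := (volume : Measure (EuclideanSpace ℝ (Fin n))).real (ball 0 1) with hw
  have hwpos : 0 < w := by
    rw [hw, measureReal_def]
    exact ENNReal.toReal_pos (measure_ball_pos _ _ one_pos).ne' measure_ball_lt_top.ne
  refine ⟨C * w * (32 ^ α)⁻¹ * (64 ^ n)⁻¹, by positivity, ?_⟩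
  intro M hM r hr x₁ x₂ h1 h2 u hu
  have hu' := hu
  obtain ⟨-, hpos, -, H⟩ := hu'
  have hM0 : 0 < M := by linarith
  have hMr : r ≤ M * r := by nlinarith
  obtain ⟨i0, e0⟩ := H x₂ (r / 16) (by positivity)
    ((closedBall_subset_ball (by linarith)).trans subset_union_right) x₂
    (mem_ball_self (by positivity))
  have hsub : ball x₁ (r / 16) ⊆ {v | r / 16 < dist v x₂} := by
    intro v hv
    rw [mem_ball] at hv
    have := dist_triangle x₁ v x₂
    rw [dist_comm x₁ v] at this
    show r / 16 < dist v x₂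
    linarith
  have hms : MeasurableSet {v : EuclideanSpace ℝ (Fin n) | r / 16 < dist v x₂} :=
    measurableSet_lt measurable_const (measurable_id.dist measurable_const)
  have hvol : (volume : Measure (EuclideanSpace ℝ (Fin n))).real (ball x₁ (r / 16))
      = (r / 16) ^ n * w := by
    rw [measureReal_def, Measure.addHaar_ball_of_pos _ _ (by positivity : 0 < r / 16), ENNReal.toReal_mul,
      ENNReal.toReal_ofReal (by positivity), finrank_euclideanSpace_fin]
    rfl
  set c : ℝ := (C * ((32 * M) ^ α)⁻¹ * ((2 * M * r) ^ n)⁻¹) * ((2 ^ n)⁻¹ * u x₁) with hc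
  have key : (r / 16) ^ n * w * c ≤ u x₂ := by
    calc (r / 16) ^ n * w * c = ∫ v in ball x₁ (r / 16), c := by
          rw [setIntegral_const, hvol, smul_eq_mul]
      _ ≤ ∫ v in ball x₁ (r / 16), stablePoissonKernel n α x₂ (r / 16) x₂ v * u v := by
          refine setIntegral_mono_on (integrableOn_const measure_ball_lt_top.ne) (i0.mono_set hsub)
            measurableSet_ball ?_
          intro v hv
          have hv2 : r / 16 < dist v x₂ := hsub hv
          rw [mem_ball] at hv
          have hnb := near_bound n hn α hα _ u hu v x₁ (r / 8) (by positivity)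
            ((closedBall_subset_ball' (by linarith : r / 8 + dist v x₁ < r)).trans
              subset_union_left)
            (by rw [dist_comm]; linarith)
          have hd : dist v x₂ ≤ 2 * M * r := by
            have := dist_triangle v x₁ x₂
            linarith
          have hd0 : 0 < dist v x₂ := by linarith
          refine mul_le_mul ?_ ?_ (by have := hpos x₁; positivity) ?_
          · unfold stablePoissonKernel
            rw [← hCdef, dist_self, dist_comm x₂ v, Real.rpow_neg dist_nonneg, Real.rpow_natCast]
            have hden : 0 < dist v x₂ ^ 2 - (r / 16) ^ 2 := by nlinarith
            have hA : ((32 * M) ^ α)⁻¹ ≤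
                (((r / 16) ^ 2 - 0 ^ 2) / (dist v x₂ ^ 2 - (r / 16) ^ 2)) ^ (α / 2) := by
              have e : ((32 * M) ^ α)⁻¹ = (((32 * M)⁻¹) ^ 2) ^ (α / 2) := by
                rw [← Real.rpow_natCast_mul (by positivity), ← Real.inv_rpow (by positivity)]
                congr 1
                push_cast
                ring
              rw [e]
              apply Real.rpow_le_rpow (by positivity) _ (by linarith [hα.1])
              rw [le_div_iff₀ hden]
              calc _ ≤ (32 * M)⁻¹ ^ 2 * (2 * M * r) ^ 2 := by
                    gcongr
                    nlinarith
                _ = _ := by field_simp; ring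
            have hA0 : 0 ≤ (((r / 16) ^ 2 - 0 ^ 2) / (dist v x₂ ^ 2 - (r / 16) ^ 2)) ^ (α / 2) :=
              le_trans (by positivity) hA
            gcongr
          · rw [inv_mul_le_iff₀ (by positivity)]
            exact hnb
          · unfold stablePoissonKernel
            rw [← hCdef]
            have hden : 0 < dist v x₂ ^ 2 - (r / 16) ^ 2 := by nlinarith
            rw [dist_self]
            have : 0 ≤ (r / 16) ^ 2 - 0 ^ 2 := by nlinarith
            positivity
      _ ≤ ∫ v in {v | r / 16 < dist v x₂}, stablePoissonKernel n α x₂ (r / 16) x₂ v * u v := by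
          refine setIntegral_mono_set i0 ?_ hsub.eventuallyLE
          filter_upwards [ae_restrict_mem hms] with v hv
          have hv : r / 16 < dist v x₂ := hv
          refine mul_nonneg ?_ (hpos v)
          unfold stablePoissonKernel
          rw [← hCdef]
          have hden : 0 < dist v x₂ ^ 2 - (r / 16) ^ 2 := by nlinarith
          rw [dist_self]
          have : 0 ≤ (r / 16) ^ 2 - 0 ^ 2 := by nlinarith
          positivity
      _ = u x₂ := e0
  have hid : C * w * (32 ^ α)⁻¹ * (64 ^ n)⁻¹ * u x₁ =
      M ^ ((n : ℝ) + α) * ((r / 16) ^ n * w * c) := by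
    rw [hc, Real.rpow_add hM0, Real.rpow_natCast, Real.mul_rpow (by norm_num) hM0.le]
    have h64 : (64 : ℝ) ^ n = 16 ^ n * 2 ^ n * 2 ^ n := by
      rw [← mul_pow, ← mul_pow]; norm_num
    rw [h64, div_pow, mul_pow, mul_pow]
    have : M ^ α ≠ 0 := (Real.rpow_pos_of_pos hM0 α).ne'
    field_simp
  rw [hid]
  gcongr

lemma harnack_one (n : ℕ) (hn : 2 ≤ n) (α : ℝ) (hα : α ∈ Set.Ioo (0 : ℝ) 2) :
    ∃ J : ℝ, 1 ≤ J ∧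
      ∀ M : ℝ, 1 ≤ M → ∀ r : ℝ, 0 < r →
        ∀ x₁ x₂ : EuclideanSpace ℝ (Fin n), dist x₁ x₂ < M * r →
          ∀ u : EuclideanSpace ℝ (Fin n) → ℝ,
            IsAlphaHarmonic n α (ball x₁ r ∪ ball x₂ r) u →
              u x₁ ≤ J * M ^ ((n : ℝ) + α) * u x₂ := by
  obtain ⟨K, hK, hfar⟩ := far_bound n hn α hα
  refine ⟨1 + K⁻¹ + 2 ^ n, ?_, ?_⟩
  · have : 0 < K⁻¹ + 2 ^ n := by positivity
    linarith
  intro M hM r hr x₁ x₂ h u hu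
  have hp : 0 ≤ u x₂ := hu.2.1 x₂
  have hα0 := hα.1
  have hMp : 1 ≤ M ^ ((n : ℝ) + α) := Real.one_le_rpow hM (by positivity)
  have hMu : u x₂ ≤ M ^ ((n : ℝ) + α) * u x₂ := le_mul_of_one_le_left hp hMp
  have hMu0 : 0 ≤ M ^ ((n : ℝ) + α) * u x₂ := by positivity
  rw [mul_assoc]
  by_cases hd : dist x₁ x₂ ≤ r / 4
  · have := near_bound n hn α hα _ u hu x₂ x₁ (r / 2) (by positivity)
      ((closedBall_subset_ball (by linarith)).trans subset_union_right) (by linarith)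
    calc u x₁ ≤ 2 ^ n * u x₂ := this
      _ ≤ 2 ^ n * (M ^ ((n : ℝ) + α) * u x₂) := by gcongr
      _ ≤ _ := by
        gcongr
        have : 0 < K⁻¹ := by positivity
        linarith
  · have := hfar M hM r hr x₁ x₂ h (not_le.mp hd) u hu
    calc u x₁ ≤ K⁻¹ * (M ^ ((n : ℝ) + α) * u x₂) := by
          rw [le_inv_mul_iff₀ hK]
          exact this
      _ ≤ _ := by
        gcongr
        have : (0 : ℝ) < 2 ^ n := by positivity
        linarith

/-- Harnack principle for the fractional Laplacian: there is
`J = J(n,α) ≥ 1` such that for all `M ≥ 1`, `r > 0`, `x₁, x₂` with `|x₁−x₂| < Mr`,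
and every `u ≥ 0` α-harmonic in `B(x₁,r) ∪ B(x₂,r)`,
`J⁻¹ M^{−(n+α)} u(x₂) ≤ u(x₁) ≤ J M^{n+α} u(x₂)`. -/
theorem stmt4 (n : ℕ) (hn : 2 ≤ n) (α : ℝ) (hα : α ∈ Set.Ioo (0 : ℝ) 2) :
    ∃ J : ℝ, 1 ≤ J ∧
      ∀ M : ℝ, 1 ≤ M → ∀ r : ℝ, 0 < r →
        ∀ x₁ x₂ : EuclideanSpace ℝ (Fin n), dist x₁ x₂ < M * r →
          ∀ u : EuclideanSpace ℝ (Fin n) → ℝ,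
            IsAlphaHarmonic n α (ball x₁ r ∪ ball x₂ r) u →
            J⁻¹ * M ^ (-((n : ℝ) + α)) * u x₂ ≤ u x₁ ∧
              u x₁ ≤ J * M ^ ((n : ℝ) + α) * u x₂ := by
  obtain ⟨J, hJ, hh⟩ := harnack_one n hn α hα
  refine ⟨J, hJ, ?_⟩
  intro M hM r hr x₁ x₂ h u hu
  refine ⟨?_, hh M hM r hr x₁ x₂ h u hu⟩
  have h' := hh M hM r hr x₂ x₁ (by rwa [dist_comm]) u (by rwa [union_comm])
  have hM0 : 0 < M := by linarith
  have hJ0 : 0 < J := by linarith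
  have hMp := Real.rpow_pos_of_pos hM0 ((n : ℝ) + α)
  rw [Real.rpow_neg hM0.le, ← mul_inv, inv_mul_le_iff₀ (by positivity)]
  exact h'
end

section
/- Let θ₀, θ ∈ ℝ and λ, ρ, δ ∈ ℝ satisfy 0 < λ < |θ₀ − θ| ≤ π, 0 < ρ < 1, and (1−ρ)/λ < δ < 2/π. Then the complex numbers ρe^{iθ₀} and e^{iθ} satisfy |ρe^{iθ₀} − e^{iθ}| ≥ (2/π − δ) |θ₀ − θ|. -/
/-- if `0 < λ < |θ₀ − θ| ≤ π`, `0 < ρ < 1` and `(1−ρ)/λ < δ < 2/π`,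
then `|ρ e^{iθ₀} − e^{iθ}| ≥ (2/π − δ) |θ₀ − θ|`. -/
theorem stmt6 (θ₀ θ lam ρ δ : ℝ)
    (h1 : 0 < lam) (h2 : lam < |θ₀ - θ|) (h3 : |θ₀ - θ| ≤ Real.pi)
    (h4 : 0 < ρ) (h5 : ρ < 1)
    (h6 : (1 - ρ) / lam < δ) (h7 : δ < 2 / Real.pi) :
    (2 / Real.pi - δ) * |θ₀ - θ| ≤
      ‖(ρ : ℂ) * Complex.exp (θ₀ * Complex.I) -
        Complex.exp (θ * Complex.I)‖ := by
  have hA : ‖Complex.exp (θ₀ * Complex.I) - Complex.exp (θ * Complex.I)‖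
      = ‖2 * Real.sin ((θ₀ - θ) / 2)‖ := by
    rw [← Complex.norm_exp_I_mul_ofReal_sub_one]
    have : Complex.exp (θ₀ * Complex.I) - Complex.exp (θ * Complex.I)
        = Complex.exp (θ * Complex.I) * (Complex.exp (Complex.I * ((θ₀ - θ : ℝ) : ℂ)) - 1) := by
      rw [mul_sub, ← Complex.exp_add, mul_one]
      congr 2
      push_cast
      ring
    rw [this, norm_mul, Complex.norm_exp_ofReal_mul_I, one_mul]
  have hS : 2 / Real.pi * |θ₀ - θ| ≤ ‖2 * Real.sin ((θ₀ - θ) / 2)‖ := by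
    have h := Real.mul_le_sin (x := |θ₀ - θ| / 2) (by positivity) (by linarith)
    have h' : Real.sin (|θ₀ - θ| / 2) ≤ |Real.sin ((θ₀ - θ) / 2)| := by
      rcases abs_cases (θ₀ - θ) with ⟨e, _⟩ | ⟨e, _⟩
      · rw [e]; exact le_abs_self _
      · rw [e, neg_div, Real.sin_neg]; exact neg_le_abs _
    rw [Real.norm_eq_abs, abs_mul, abs_two]
    linarith
  have hT : ‖Complex.exp (θ₀ * Complex.I) - Complex.exp (θ * Complex.I)‖ ≤
      ‖(ρ : ℂ) * Complex.exp (θ₀ * Complex.I) - Complex.exp (θ * Complex.I)‖ + (1 - ρ) := by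
    have e : Complex.exp (θ₀ * Complex.I) - Complex.exp (θ * Complex.I) =
      ((ρ : ℂ) * Complex.exp (θ₀ * Complex.I) - Complex.exp (θ * Complex.I))
        + ((1 - ρ : ℝ) : ℂ) * Complex.exp (θ₀ * Complex.I) := by
      push_cast
      ring
    rw [e]
    refine (norm_add_le _ _).trans ?_
    rw [norm_mul ((1 - ρ : ℝ) : ℂ), Complex.norm_exp_ofReal_mul_I, mul_one, Complex.norm_real,
      Real.norm_of_nonneg (by linarith)]
  rw [div_lt_iff₀ h1] at h6
  have hd : 0 < δ := by
    by_contra hn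
    nlinarith
  nlinarith
end

section
/- Let α ∈ (0,2). There exists a constant c = c(α) > 0 such that for every θ₀ ∈ ℝ, every λ ∈ (0, π), every ρ ∈ (0,1), and every δ with (1−ρ)/λ < δ ≤ 1/π, one has ∫_{{θ ∈ [θ₀−π, θ₀+π] : |θ−θ₀| > λ}} (1−ρ²)^{α/2} |ρe^{iθ₀} − e^{iθ}|^{−2} dθ ≤ c δ (1−ρ)^{α/2−1}. -/
open MeasureTheory

lemma aux_norm (θ₀ θ ρ : ℝ) (h0 : 0 < ρ) (h1 : ρ < 1) (h : |θ - θ₀| ≤ Real.pi) :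
    |θ - θ₀| / Real.pi ≤ ‖(ρ : ℂ) * Complex.exp (θ₀ * Complex.I) -
                Complex.exp (θ * Complex.I)‖ := by
  set a := Complex.exp (θ₀ * Complex.I) with ha
  set b := Complex.exp (θ * Complex.I) with hb
  have na : ‖a‖ = 1 := Complex.norm_exp_ofReal_mul_I θ₀
  have nb : ‖b‖ = 1 := Complex.norm_exp_ofReal_mul_I θ
  have e1 : ‖b - a‖ = 2 * |Real.sin ((θ - θ₀) / 2)| := by
    have h2 := Complex.norm_exp_I_mul_ofReal_sub_one (θ - θ₀)
    have h3 : b - a = a * (Complex.exp (Complex.I * ((θ - θ₀ : ℝ) : ℂ)) - 1) := by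
      rw [mul_sub, ha, hb, ← Complex.exp_add]
      push_cast
      ring_nf
    rw [h3, norm_mul, na, h2, one_mul, norm_mul]
    simp
  have e2 : 2 / Real.pi * |(θ - θ₀) / 2| ≤ |Real.sin ((θ - θ₀) / 2)| := by
    apply Real.mul_abs_le_abs_sin
    rw [abs_div, abs_two]
    linarith
  have e3 : 2 / Real.pi * |(θ - θ₀) / 2| = |θ - θ₀| / Real.pi := by
    rw [abs_div, abs_two]; ring
  have e4 : 1 - ρ ≤ ‖(ρ : ℂ) * a - b‖ := by
    have := norm_sub_norm_le b ((ρ : ℂ) * a)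
    rw [norm_mul, na, nb, norm_sub_rev] at this
    simpa [abs_of_pos h0] using this
  have e5 : ‖b - a‖ ≤ ‖(ρ : ℂ) * a - b‖ + (1 - ρ) := by
    have h6 : b - a = -((ρ : ℂ) * a - b) + -(((1 - ρ : ℝ) : ℂ) * a) := by
      push_cast; ring
    have := norm_add_le (-((ρ : ℂ) * a - b)) (-(((1 - ρ : ℝ) : ℂ) * a))
    rw [← h6, norm_neg, norm_neg, norm_mul ((1 - ρ : ℝ) : ℂ), na, Complex.norm_real,
      Real.norm_of_nonneg (by linarith), mul_one] at this
    exact this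
  linarith

lemma aux_int (lam : ℝ) (h : 0 < lam) :
    ∫ t : ℝ, (Set.Ioi lam).indicator (fun x : ℝ => x ^ (-2 : ℝ)) |t| = 2 / lam := by
  rw [integral_comp_abs, setIntegral_indicator measurableSet_Ioi, Set.Ioi_inter_Ioi,
    sup_eq_right.2 h.le, integral_Ioi_rpow_of_lt (by norm_num) h]
  norm_num
  rw [Real.rpow_neg_one]; ring

/-- there exists `c = c(α) > 0` such that for all `θ₀ ∈ ℝ`,
`λ ∈ (0,π)`, `ρ ∈ (0,1)` and `δ` with `(1−ρ)/λ < δ ≤ 1/π`,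
`∫_{θ ∈ [θ₀−π, θ₀+π], |θ−θ₀| > λ} (1−ρ²)^{α/2} |ρe^{iθ₀} − e^{iθ}|^{−2} dθ
  ≤ c δ (1−ρ)^{α/2−1}`. -/
theorem stmt7 (α : ℝ) (hα : α ∈ Set.Ioo (0 : ℝ) 2) :
    ∃ c : ℝ, 0 < c ∧
      ∀ θ₀ lam ρ δ : ℝ, lam ∈ Set.Ioo 0 Real.pi → ρ ∈ Set.Ioo (0 : ℝ) 1 →
        (1 - ρ) / lam < δ → δ ≤ 1 / Real.pi →
        (∫ θ in {θ : ℝ | θ ∈ Set.Icc (θ₀ - Real.pi) (θ₀ + Real.pi) ∧ lam < |θ - θ₀|},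
            (1 - ρ ^ 2) ^ (α / 2) /
              ‖(ρ : ℂ) * Complex.exp (θ₀ * Complex.I) -
                Complex.exp (θ * Complex.I)‖ ^ 2)
          ≤ c * δ * (1 - ρ) ^ (α / 2 - 1) := by
  refine ⟨4 * Real.pi ^ 2, by positivity, ?_⟩
  intro θ₀ lam ρ δ hl hρ h1 h2
  obtain ⟨hl0, hl1⟩ := hl
  obtain ⟨hr0, hr1⟩ := hρ
  obtain ⟨ha0, ha2⟩ := hα
  set A := (1 - ρ ^ 2) ^ (α / 2) with hA
  have hA0 : 0 ≤ A := Real.rpow_nonneg (by nlinarith) _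
  have hA1 : A ≤ 2 * (1 - ρ) ^ (α / 2) := by
    calc A ≤ (2 * (1 - ρ)) ^ (α / 2) :=
          Real.rpow_le_rpow (by nlinarith) (by nlinarith) (by linarith)
      _ = 2 ^ (α / 2) * (1 - ρ) ^ (α / 2) := Real.mul_rpow (by norm_num) (by linarith)
      _ ≤ 2 * (1 - ρ) ^ (α / 2) := by
          apply mul_le_mul_of_nonneg_right _ (Real.rpow_nonneg (by linarith) _)
          calc (2 : ℝ) ^ (α / 2) ≤ 2 ^ (1 : ℝ) :=
                Real.rpow_le_rpow_of_exponent_le (by norm_num) (by linarith)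
            _ = 2 := Real.rpow_one 2
  set G : ℝ → ℝ := fun t => (Set.Ioi lam).indicator (fun x : ℝ => x ^ (-2 : ℝ)) |t| with hG
  have iG : ∫ t, G t = 2 / lam := aux_int lam hl0
  have intG : Integrable G := by
    by_contra hn
    rw [integral_undef hn] at iG
    have : 0 < 2 / lam := by positivity
    linarith
  have G0 : ∀ t, 0 ≤ G t := fun t =>
    Set.indicator_nonneg (fun x hx => Real.rpow_nonneg (hl0.trans hx).le _) _
  have hS : MeasurableSet {θ : ℝ | θ ∈ Set.Icc (θ₀ - Real.pi) (θ₀ + Real.pi) ∧ lam < |θ - θ₀|} := by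
    apply MeasurableSet.inter measurableSet_Icc
    exact (isOpen_lt continuous_const (by fun_prop : Continuous fun θ : ℝ => |θ - θ₀|)).measurableSet
  have key : (∫ θ in {θ : ℝ | θ ∈ Set.Icc (θ₀ - Real.pi) (θ₀ + Real.pi) ∧ lam < |θ - θ₀|},
            A / ‖(ρ : ℂ) * Complex.exp (θ₀ * Complex.I) -
                Complex.exp (θ * Complex.I)‖ ^ 2) ≤ ∫ θ, A * Real.pi ^ 2 * G (θ - θ₀) := by
    rw [← integral_indicator hS]
    apply integral_mono_of_nonneg
    · exact Filter.Eventually.of_forall fun θ =>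
        Set.indicator_nonneg (fun x _ => by positivity) _
    · exact (intG.comp_sub_right θ₀).const_mul _
    · refine Filter.Eventually.of_forall fun θ => ?_
      apply Set.indicator_le' (f := fun θ : ℝ => A / ‖(ρ : ℂ) * Complex.exp (θ₀ * Complex.I) -
                Complex.exp (θ * Complex.I)‖ ^ 2) (g := fun θ => A * Real.pi ^ 2 * G (θ - θ₀))
      · rintro x ⟨⟨hx1, hx2⟩, hx3⟩
        have hx0 : 0 < |x - θ₀| := hl0.trans hx3
        have hn := aux_norm θ₀ x ρ hr0 hr1 (abs_le.2 ⟨by linarith, by linarith⟩)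
        have hGx : G (x - θ₀) = (|x - θ₀| ^ 2)⁻¹ := by
          simp only [hG]
          rw [Set.indicator_of_mem (by exact hx3), Real.rpow_neg hx0.le]
          norm_num
        have hp := Real.pi_pos
        calc _ ≤ A / (|x - θ₀| / Real.pi) ^ 2 := by
              apply div_le_div_of_nonneg_left hA0 (by positivity)
              exact pow_le_pow_left₀ (by positivity) hn 2
          _ = A * Real.pi ^ 2 * G (x - θ₀) := by
              rw [hGx]; field_simp
      · intro x _
        exact mul_nonneg (by positivity) (G0 _)
  refine key.trans ?_
  rw [integral_const_mul, integral_sub_right_eq_self G θ₀, iG, Real.rpow_sub_one (by linarith)]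
  have hr : 0 < 1 - ρ := by linarith
  have h3 : 1 / lam ≤ δ / (1 - ρ) := by
    rw [div_lt_iff₀ hl0] at h1
    rw [div_le_div_iff₀ hl0 hr]; linarith
  calc A * Real.pi ^ 2 * (2 / lam) = 2 * Real.pi ^ 2 * (A * (1 / lam)) := by ring
    _ ≤ 2 * Real.pi ^ 2 * ((2 * (1 - ρ) ^ (α / 2)) * (δ / (1 - ρ))) := by
        gcongr
    _ = _ := by ring
end

section
/- Let n ≥ 2 and α ∈ (0,2). There exists a constant c > 0 such that for every x in the open unit ball B of ℝⁿ, ∫_S (1−|x|²)^{α/2} |x−w|^{−n} σ(dw) ≤ c (1−|x|)^{α/2−1}, where S is the unit sphere and σ is the surface measure on S. -/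
open Metric Set MeasureTheory

lemma aux_anti {X Y : Type*} [MetricSpace X] [MetricSpace Y] [MeasurableSpace X] [BorelSpace X]
    [MeasurableSpace Y] [BorelSpace Y] (f : X → Y) (A : Set X) (K : NNReal) (d : ℝ) (hd : 0 ≤ d)
    (h : ∀ x ∈ A, ∀ y ∈ A, dist x y ≤ K * dist (f x) (f y)) :
    μH[d] A ≤ (K : ENNReal) ^ d * μH[d] (f '' A) := by
  have h1 : AntilipschitzWith K (fun a : A => f a) := by
    apply AntilipschitzWith.of_le_mul_dist
    rintro ⟨x, hx⟩ ⟨y, hy⟩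
    exact h x hx y hy
  have h2 := h1.le_hausdorffMeasure_image hd Set.univ
  have h3 := (isometry_subtype_coe (s := A)).hausdorffMeasure_image (d := d) (Or.inl hd) Set.univ
  rw [← h3] at h2
  rw [Set.image_univ, Set.image_univ, Subtype.range_coe, ← Set.image_eq_range] at h2
  exact h2

lemma aux_piece (m : ℕ) (i : Fin (m+1)) (s : ℝ) (hs : s = 1 ∨ s = -1)
    (x : EuclideanSpace ℝ (Fin (m+1))) (t : ℝ) (ht : 0 ≤ t) :
    μH[(m:ℝ)] {w : EuclideanSpace ℝ (Fin (m+1)) | ‖w‖ = 1 ∧ 1 ≤ (m+1) * (s * w i) ∧ dist x w ≤ t}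
      ≤ ENNReal.ofReal ((((m:ℝ)+1)^3) ^ m * (2 * t) ^ m) := by
  set A := {w : EuclideanSpace ℝ (Fin (m+1)) | ‖w‖ = 1 ∧ 1 ≤ (m+1) * (s * w i) ∧ dist x w ≤ t}
  let P : EuclideanSpace ℝ (Fin (m+1)) → (Fin m → ℝ) := fun w j => w (i.succAbove j)
  have hK : (0:ℝ) ≤ ((m:ℝ)+1)^3 := by positivity
  have h1 := aux_anti P A (Real.toNNReal (((m:ℝ)+1)^3)) m (by positivity) (by
    intro w hw v hv
    rw [Real.coe_toNNReal _ hK]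
    obtain ⟨hw1, hw2, -⟩ := hw
    obtain ⟨hv1, hv2, -⟩ := hv
    set D := dist (P w) (P v)
    have hD0 : 0 ≤ D := dist_nonneg
    have hD : ∀ j, |w (i.succAbove j) - v (i.succAbove j)| ≤ D := fun j => by
      have := dist_le_pi_dist (P w) (P v) j
      rwa [Real.dist_eq] at this
    have hle : ∀ (u : EuclideanSpace ℝ (Fin (m+1))), ‖u‖ = 1 → ∀ j, |u j| ≤ 1 := by
      intro u hu j
      have := PiLp.norm_apply_le u j
      rwa [hu] at this
    have hsq : ∀ (u : EuclideanSpace ℝ (Fin (m+1))), ‖u‖ = 1 →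
        u i ^ 2 + ∑ j, u (i.succAbove j) ^ 2 = 1 := by
      intro u hu
      have := EuclideanSpace.real_norm_sq_eq u
      rw [hu, Fin.sum_univ_succAbove _ i] at this
      linarith
    have e1 : w i ^ 2 - v i ^ 2 = ∑ j, (v (i.succAbove j) ^ 2 - w (i.succAbove j) ^ 2) := by
      rw [Finset.sum_sub_distrib]
      linarith [hsq w hw1, hsq v hv1]
    have e2 : |w i ^ 2 - v i ^ 2| ≤ m * (2 * D) := by
      rw [e1]
      refine (Finset.abs_sum_le_sum_abs _ _).trans ?_
      refine (Finset.sum_le_card_nsmul _ _ (2 * D) ?_).trans (by simp)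
      intro j _
      have a1 := hD j
      have a2 := hle w hw1 (i.succAbove j)
      have a3 := hle v hv1 (i.succAbove j)
      have : v (i.succAbove j) ^ 2 - w (i.succAbove j) ^ 2 =
        -((w (i.succAbove j) + v (i.succAbove j)) * (w (i.succAbove j) - v (i.succAbove j))) := by ring
      rw [this, abs_neg, abs_mul]
      have a4 := abs_add_le (w (i.succAbove j)) (v (i.succAbove j))
      gcongr
      linarith
    have e3 : |w i - v i| ≤ (m+1) * m * D := by
      have : w i ^ 2 - v i ^ 2 = (w i + v i) * (w i - v i) := by ring
      rw [this, abs_mul] at e2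
      have b1 : 2 ≤ (m+1) * |w i + v i| := by
        have : s * (w i + v i) ≤ |w i + v i| := by
          rcases hs with rfl | rfl
          · simpa using le_abs_self (w i + v i)
          · rw [neg_one_mul]; exact neg_le_abs _
        nlinarith
      have : 2 * |w i - v i| ≤ (m+1) * |w i + v i| * |w i - v i| := by gcongr
      have b3 : (m+1 : ℝ) * (|w i + v i| * |w i - v i|) ≤ (m+1) * (m * (2*D)) := by gcongr
      linarith
    have e4 : ∀ j, |w j - v j| ≤ (m+1)^2 * D := by
      intro j
      rcases eq_or_ne j i with rfl | hj
      · refine e3.trans ?_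
        gcongr
        nlinarith
      · obtain ⟨k, rfl⟩ := Fin.exists_succAbove_eq hj
        refine (hD k).trans ?_
        have : (1:ℝ) ≤ (m+1)^2 := by nlinarith [(Nat.cast_nonneg m : (0:ℝ) ≤ m)]
        nlinarith
    rw [EuclideanSpace.dist_eq]
    have hX : 0 ≤ ((m:ℝ)+1)^2 * D := by positivity
    calc √(∑ j, dist (w j) (v j) ^ 2) ≤ √((((m:ℝ)+1)^3 * D)^2) := by
          apply Real.sqrt_le_sqrt
          refine (Finset.sum_le_card_nsmul _ _ ((((m:ℝ)+1)^2 * D)^2) ?_).trans ?_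
          · intro j _
            rw [Real.dist_eq]
            have := e4 j
            gcongr
          · simp only [Finset.card_univ, Fintype.card_fin, nsmul_eq_mul]
            push_cast
            have : (((m:ℝ)+1)^3 * D)^2 = (m+1) * ((m+1) * (((m:ℝ)+1)^2 * D)^2) := by ring
            rw [this]
            have h0 : 0 ≤ ((m:ℝ)+1) * (((m:ℝ)+1)^2 * D)^2 := by positivity
            nlinarith [(Nat.cast_nonneg m : (0:ℝ) ≤ m)]
      _ = _ := Real.sqrt_sq (by positivity))
  refine h1.trans ?_
  have h2 : μH[(m:ℝ)] (P '' A) ≤ ENNReal.ofReal ((2 * t) ^ m) := by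
    have h3 : P '' A ⊆ closedBall (P x) t := by
      rintro _ ⟨w, ⟨-, -, hw⟩, rfl⟩
      rw [mem_closedBall, dist_comm, dist_pi_le_iff ht]
      intro j
      have := PiLp.norm_apply_le (x - w) (i.succAbove j)
      rw [← dist_eq_norm] at this
      rw [Real.dist_eq]
      exact this.trans hw
    have h4 : (μH[(m:ℝ)] : Measure (Fin m → ℝ)) = volume := by
      have := hausdorffMeasure_pi_real (ι := Fin m)
      simpa using this
    rw [h4]
    refine (measure_mono h3).trans ?_
    rw [Real.volume_pi_closedBall _ ht]
    simp
  rw [ENNReal.ofReal_mul (by positivity), ENNReal.rpow_natCast, ENNReal.ofReal_pow hK]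
  gcongr
  rfl

lemma aux_ball (m : ℕ) : ∃ C : ℝ, 0 < C ∧ ∀ (x : EuclideanSpace ℝ (Fin (m+1))) (t : ℝ), 0 ≤ t →
    μH[(m:ℝ)] (sphere (0 : EuclideanSpace ℝ (Fin (m+1))) 1 ∩ closedBall x t)
      ≤ ENNReal.ofReal (C * t ^ m) := by
  refine ⟨(m+1) * (2 * ((((m:ℝ)+1)^3) ^ m * 2 ^ m)), by positivity, fun x t ht => ?_⟩
  let A : Fin (m+1) → ℝ → Set (EuclideanSpace ℝ (Fin (m+1))) := fun i s =>
    {w | ‖w‖ = 1 ∧ 1 ≤ (m+1) * (s * w i) ∧ dist x w ≤ t}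
  have hsub : sphere (0 : EuclideanSpace ℝ (Fin (m+1))) 1 ∩ closedBall x t ⊆
      ⋃ i, (A i 1 ∪ A i (-1)) := by
    rintro w ⟨hw, hw2⟩
    rw [mem_sphere_zero_iff_norm] at hw
    rw [mem_closedBall, dist_comm] at hw2
    have : ∃ i, 1 ≤ (m+1) * |w i| := by
      by_contra! hcon
      have h1 := EuclideanSpace.real_norm_sq_eq w
      rw [hw] at h1
      have h2 : ∑ i, (w i)^2 < ∑ i : Fin (m+1), (1 / ((m:ℝ)+1)) := by
        apply Finset.sum_lt_sum_of_nonempty Finset.univ_nonempty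
        intro i _
        have h3 := hcon i
        have h5 : |w i| ≤ 1 := by
          have := PiLp.norm_apply_le w i
          rwa [hw] at this
        rw [lt_div_iff₀ (by positivity), ← sq_abs]
        have := abs_nonneg (w i)
        nlinarith
      simp at h2
      rw [mul_inv_cancel₀ (by positivity)] at h2
      linarith
    obtain ⟨i, hi⟩ := this
    refine mem_iUnion.2 ⟨i, ?_⟩
    rcases abs_cases (w i) with ⟨h, -⟩ | ⟨h, -⟩
    · left; refine ⟨hw, ?_, hw2⟩; rw [h] at hi; simpa using hi
    · right; refine ⟨hw, ?_, hw2⟩; rw [h] at hi; simpa using hi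
  refine (measure_mono hsub).trans ((measure_iUnion_le _).trans ?_)
  rw [tsum_fintype]
  set c := (((m:ℝ)+1)^3) ^ m * (2 * t) ^ m with hc
  have hc0 : 0 ≤ c := by positivity
  have : ∀ i ∈ (Finset.univ : Finset (Fin (m+1))),
      μH[(m:ℝ)] (A i 1 ∪ A i (-1)) ≤ ENNReal.ofReal (2 * c) := by
    intro i _
    refine (measure_union_le _ _).trans ?_
    rw [two_mul, ENNReal.ofReal_add hc0 hc0]
    exact add_le_add (aux_piece m i 1 (Or.inl rfl) x t ht) (aux_piece m i (-1) (Or.inr rfl) x t ht)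
  refine (Finset.sum_le_card_nsmul _ _ _ this).trans ?_
  simp only [Finset.card_univ, Fintype.card_fin, nsmul_eq_mul]
  rw [← ENNReal.ofReal_natCast, ← ENNReal.ofReal_mul (by positivity)]
  apply ENNReal.ofReal_le_ofReal
  rw [hc, mul_pow]
  push_cast
  apply le_of_eq
  ring

lemma aux_lint (m : ℕ) : ∃ C : ℝ, 0 < C ∧ ∀ x ∈ ball (0 : EuclideanSpace ℝ (Fin (m+1))) 1,
    ∫⁻ w in sphere (0 : EuclideanSpace ℝ (Fin (m+1))) 1,
      ENNReal.ofReal (dist x w ^ (m+1))⁻¹ ∂μH[(m:ℝ)] ≤ ENNReal.ofReal (C / (1 - ‖x‖)) := by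
  obtain ⟨C, hC, hball⟩ := aux_ball m
  refine ⟨C * 2 ^ m * 2, by positivity, fun x hx => ?_⟩
  rw [mem_ball_zero_iff] at hx
  set d := 1 - ‖x‖ with hd
  have hd0 : 0 < d := by linarith
  let F : ℕ → EuclideanSpace ℝ (Fin (m+1)) → ENNReal := fun k =>
    (closedBall x (2^(k+1) * d)).indicator (fun _ => ENNReal.ofReal ((2^k * d)^(m+1))⁻¹)
  have hpt : ∀ w ∈ sphere (0 : EuclideanSpace ℝ (Fin (m+1))) 1,
      ENNReal.ofReal (dist x w ^ (m+1))⁻¹ ≤ ∑' k, F k w := by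
    intro w hw
    rw [mem_sphere_zero_iff_norm] at hw
    have hdist : d ≤ dist x w := by
      rw [dist_comm, dist_eq_norm]
      have := norm_sub_norm_le w x
      linarith
    obtain ⟨k, hk1, hk2⟩ := exists_nat_pow_near (x := dist x w / d) (y := (2:ℝ))
      ((one_le_div hd0).2 hdist) one_lt_two
    rw [le_div_iff₀ hd0] at hk1
    rw [div_lt_iff₀ hd0] at hk2
    refine le_trans ?_ (ENNReal.le_tsum k)
    have : w ∈ closedBall x (2^(k+1) * d) := by
      rw [mem_closedBall, dist_comm]; exact hk2.le
    simp only [F, indicator_of_mem this]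
    apply ENNReal.ofReal_le_ofReal
    gcongr
  refine (setLIntegral_mono' isClosed_sphere.measurableSet hpt).trans ?_
  rw [lintegral_tsum (fun k => (Measurable.indicator measurable_const
    isClosed_closedBall.measurableSet).aemeasurable)]
  have hterm : ∀ k, ∫⁻ w in sphere (0 : EuclideanSpace ℝ (Fin (m+1))) 1, F k w ∂μH[(m:ℝ)] ≤
      ENNReal.ofReal (C * 2 ^ m / d * (1/2)^k) := by
    intro k
    simp only [F]
    rw [lintegral_indicator_const isClosed_closedBall.measurableSet,
      Measure.restrict_apply isClosed_closedBall.measurableSet, inter_comm]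
    refine (mul_le_mul_right (hball x (2^(k+1)*d) (by positivity)) _).trans ?_
    rw [← ENNReal.ofReal_mul (by positivity)]
    apply ENNReal.ofReal_le_ofReal
    apply le_of_eq
    rw [one_div, inv_pow]
    have h2k : (2:ℝ)^k ≠ 0 := by positivity
    have hd1 : d ≠ 0 := hd0.ne'
    rw [pow_succ (2:ℝ) k, pow_succ (2^k * d) m, mul_right_comm ((2:ℝ)^k), mul_pow _ (2:ℝ) m]
    field_simp
  refine (ENNReal.tsum_le_tsum hterm).trans ?_
  rw [← ENNReal.ofReal_tsum_of_nonneg (fun k => by positivity)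
    (summable_geometric_two.mul_left _), tsum_mul_left, tsum_geometric_two]
  apply ENNReal.ofReal_le_ofReal
  apply le_of_eq
  ring

/-- there exists `c > 0` such that for every `x` in the open unit ball
`B ⊆ ℝⁿ`, `∫_S (1−|x|²)^{α/2} |x−w|^{−n} σ(dw) ≤ c (1−|x|)^{α/2−1}`, where `σ` is the
(n−1)-dimensional surface (Hausdorff) measure on the unit sphere `S`. -/
theorem stmt8 (n : ℕ) (hn : 2 ≤ n) (α : ℝ) (hα : α ∈ Set.Ioo (0 : ℝ) 2) :
    ∃ c : ℝ, 0 < c ∧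
      ∀ x ∈ ball (0 : EuclideanSpace ℝ (Fin n)) 1,
        (∫ w in sphere (0 : EuclideanSpace ℝ (Fin n)) 1,
            (1 - ‖x‖ ^ 2) ^ (α / 2) * dist x w ^ (-(n : ℝ)) ∂μH[(n : ℝ) - 1])
          ≤ c * (1 - ‖x‖) ^ (α / 2 - 1) := by
  obtain ⟨m, rfl⟩ : ∃ m, n = m + 1 := ⟨n - 1, by omega⟩
  obtain ⟨C, hC, hint⟩ := aux_lint m
  refine ⟨2 ^ (α/2) * C, by positivity, fun x hx => ?_⟩
  have hx' := hx
  rw [mem_ball_zero_iff] at hx'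
  have hd0 : 0 < 1 - ‖x‖ := by linarith
  have e : ((m + 1 : ℕ) : ℝ) - 1 = m := by push_cast; ring
  rw [e, integral_const_mul]
  have h1 : ∫ w in sphere (0 : EuclideanSpace ℝ (Fin (m+1))) 1,
      dist x w ^ (-((m+1 : ℕ) : ℝ)) ∂μH[(m:ℝ)] ≤ C / (1 - ‖x‖) := by
    have h2 : ∀ w, dist x w ^ (-((m+1 : ℕ) : ℝ)) = (dist x w ^ (m+1))⁻¹ := fun w => by
      rw [Real.rpow_neg dist_nonneg, Real.rpow_natCast]
    simp_rw [h2]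
    rw [integral_eq_lintegral_of_nonneg_ae (Filter.Eventually.of_forall fun w => by positivity)
      (by apply Measurable.aestronglyMeasurable; fun_prop)]
    exact ENNReal.toReal_le_of_le_ofReal (by positivity) (hint x hx)
  have h3 : (1 - ‖x‖ ^ 2) ^ (α / 2) ≤ 2 ^ (α/2) * (1 - ‖x‖) ^ (α/2) := by
    rw [← Real.mul_rpow (by norm_num) hd0.le]
    apply Real.rpow_le_rpow
    · nlinarith [norm_nonneg x]
    · nlinarith [norm_nonneg x]
    · linarith [hα.1]
  calc _ ≤ (2 ^ (α/2) * (1 - ‖x‖) ^ (α/2)) * (C / (1 - ‖x‖)) := by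
        apply mul_le_mul h3 h1
        · exact integral_nonneg fun w => by positivity
        · positivity
    _ = _ := by
        rw [Real.rpow_sub_one hd0.ne']
        ring
end

section
/- Let n ≥ 2 and α ∈ (0,2). There exists a constant c > 0 such that for every x in the open unit ball B of ℝⁿ, ∫_S (1−|x|²)^{α/2} |x−w|^{−n} σ(dw) ≥ c (1−|x|)^{α/2−1}, where S is the unit sphere and σ is the surface measure on S. -/
open Metric Set MeasureTheory

open Module in
lemma aux_half (m : ℕ) (v : EuclideanSpace ℝ (Fin (m + 1))) (hv : ‖v‖ = 1) :
    μH[(m : ℝ)] (sphere (0 : EuclideanSpace ℝ (Fin (m + 1))) 1 ∩ {w | inner ℝ v w ≤ 0}) < ⊤ := by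
  have : Fact (finrank ℝ (EuclideanSpace ℝ (Fin (m + 1))) = m + 1) := ⟨by simp⟩
  have hv0 : v ≠ 0 := by
    rintro rfl
    simp at hv
  have hfr : finrank ℝ (Submodule.span ℝ {v})ᗮ = m :=
    Submodule.finrank_orthogonal_span_singleton hv0
  have hC : ContDiff ℝ 1 (fun y : (Submodule.span ℝ {v})ᗮ => stereoInvFunAux v (y : EuclideanSpace ℝ (Fin (m + 1)))) :=
    contDiff_stereoInvFunAux.comp (Submodule.span ℝ {v})ᗮ.subtypeL.contDiff
  have hcomp : IsCompact (closedBall (0 : (Submodule.span ℝ {v})ᗮ) 2) := isCompact_closedBall _ _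
  obtain ⟨K, hK⟩ := hC.contDiffOn.exists_lipschitzOnWith (s := closedBall 0 2) one_ne_zero
    (convex_closedBall _ _) hcomp
  have h1 := hK.hausdorffMeasure_image_le (d := (m : ℝ)) (by positivity)
  have hH : Measure.IsAddHaarMeasure (G := (Submodule.span ℝ {v})ᗮ) μH[(m : ℝ)] := by
    have := isAddHaarMeasure_hausdorffMeasure (E := (Submodule.span ℝ {v})ᗮ)
    rwa [hfr] at this
  have h2 : μH[(m : ℝ)] (closedBall (0 : (Submodule.span ℝ {v})ᗮ) 2) < ⊤ := hcomp.measure_lt_top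
  refine lt_of_le_of_lt (measure_mono ?_) (lt_of_le_of_lt h1 (ENNReal.mul_lt_top
    (ENNReal.rpow_lt_top_of_nonneg (by positivity) (by simp)) h2))
  rintro w ⟨hw, hvw⟩
  simp only [mem_ofPred_eq] at hvw
  have hne : w ≠ v := by
    rintro rfl
    rw [real_inner_self_eq_norm_sq, hv] at hvw
    norm_num at hvw
  refine ⟨stereoToFun v w, ?_, ?_⟩
  · rw [mem_closedBall_zero_iff, stereoToFun_apply, norm_smul]
    have hp := (Submodule.span ℝ {v})ᗮ.lipschitzWith_orthogonalProjectionOnto.norm_sub_le w 0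
    simp only [map_zero, sub_zero, NNReal.coe_one, one_mul] at hp
    rw [mem_sphere_zero_iff_norm.1 hw] at hp
    have : ‖2 / ((1 : ℝ) - innerSL ℝ v w)‖ ≤ 2 := by
      simp only [innerSL_apply_apply]
      rw [Real.norm_eq_abs, abs_of_nonneg (by apply div_nonneg <;> linarith),
        div_le_iff₀ (by linarith)]
      linarith
    calc _ ≤ (2 : ℝ) * 1 := by gcongr
      _ = 2 := by norm_num
  · exact congrArg Subtype.val (stereo_left_inv hv (x := ⟨w, hw⟩) hne)

lemma aux_fin (m : ℕ) :
    μH[(m : ℝ)] (sphere (0 : EuclideanSpace ℝ (Fin (m + 1))) 1) < ⊤ := by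
  set v : EuclideanSpace ℝ (Fin (m + 1)) := EuclideanSpace.single 0 1
  have hv : ‖v‖ = 1 := by simp [v]
  refine lt_of_le_of_lt (measure_mono ?_) (lt_of_le_of_lt (measure_union_le _ _)
    (ENNReal.add_lt_top.2 ⟨aux_half m v hv, aux_half m (-v) (by simpa using hv)⟩))
  intro w hw
  rcases le_total (inner ℝ v w) 0 with h | h
  · exact Or.inl ⟨hw, h⟩
  · exact Or.inr ⟨hw, by simpa using h⟩

open Module in
lemma aux_cap (m : ℕ) (e : EuclideanSpace ℝ (Fin (m + 1))) (he : ‖e‖ = 1) (r : ℝ) (hr : 0 < r)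
    (hr1 : r ≤ 1) :
    ENNReal.ofReal ((r / 2) ^ m) * μH[(m : ℝ)] (ball (0 : EuclideanSpace ℝ (Fin m)) 1) ≤
    μH[(m : ℝ)] (sphere (0 : EuclideanSpace ℝ (Fin (m + 1))) 1 ∩ closedBall e r) := by
  have : Fact (finrank ℝ (EuclideanSpace ℝ (Fin (m + 1))) = m + 1) := ⟨by simp⟩
  have he0 : e ≠ 0 := by
    rintro rfl
    simp at he
  have hH : Measure.IsAddHaarMeasure (G := EuclideanSpace ℝ (Fin m)) μH[(m : ℝ)] := by
    have := isAddHaarMeasure_hausdorffMeasure (E := EuclideanSpace ℝ (Fin m))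
    rwa [finrank_euclideanSpace_fin] at this
  have hb := Measure.addHaar_ball_of_pos (μH[(m : ℝ)]) (0 : EuclideanSpace ℝ (Fin m))
    (half_pos hr)
  rw [finrank_euclideanSpace_fin] at hb
  rw [← hb]
  let U := (OrthonormalBasis.fromOrthogonalSpanSingleton (𝕜 := ℝ) m he0).repr
  let P := (Submodule.span ℝ {e})ᗮ.orthogonalProjectionOnto
  have hL : LipschitzWith 1 (fun w => U (P w)) := by
    have := U.isometry.lipschitz.comp
      (Submodule.span ℝ {e})ᗮ.lipschitzWith_orthogonalProjectionOnto
    rw [one_mul] at this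
    exact this
  have h1 := hL.hausdorffMeasure_image_le (d := (m : ℝ)) (by positivity)
    (sphere (0 : EuclideanSpace ℝ (Fin (m + 1))) 1 ∩ closedBall e r)
  simp only [ENNReal.coe_one, ENNReal.one_rpow, one_mul] at h1
  refine le_trans (measure_mono ?_) h1
  intro y hy
  rw [mem_ball_zero_iff] at hy
  set z := U.symm y with hz
  have hzn : ‖(z : EuclideanSpace ℝ (Fin (m + 1)))‖ < r / 2 := by
    have : ‖z‖ = ‖y‖ := U.symm.norm_map y
    rw [← this] at hy
    exact hy
  have horth : inner ℝ (z : EuclideanSpace ℝ (Fin (m + 1))) e = 0 :=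
    Submodule.mem_orthogonal_singleton_iff_inner_left.mp z.2
  set t := ‖(z : EuclideanSpace ℝ (Fin (m + 1)))‖ with ht
  have ht0 : 0 ≤ t := norm_nonneg _
  have hts : 0 ≤ 1 - t ^ 2 := by nlinarith
  have hs2 := Real.sq_sqrt hts
  have hs0 := Real.sqrt_nonneg (1 - t ^ 2)
  set s := √(1 - t ^ 2)
  have hn (a : ℝ) : ‖(z : EuclideanSpace ℝ (Fin (m + 1))) + a • e‖ ^ 2 = t ^ 2 + a ^ 2 := by
    rw [norm_add_sq_real, inner_smul_right, horth, norm_smul, he]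
    simp [ht]
  refine ⟨z + s • e, ⟨?_, ?_⟩, ?_⟩
  · rw [mem_sphere_zero_iff_norm]
    have := hn s
    rw [hs2] at this
    have h3 := norm_nonneg ((z : EuclideanSpace ℝ (Fin (m + 1))) + s • e)
    nlinarith
  · rw [mem_closedBall, dist_eq_norm]
    have : (z : EuclideanSpace ℝ (Fin (m + 1))) + s • e - e = z + (s - 1) • e := by
      module
    rw [this]
    refine (sq_le_sq₀ (norm_nonneg _) hr.le).1 ?_
    rw [hn]
    have : s ≤ 1 := by nlinarith
    have : t ^ 2 ≤ (r/2) ^ 2 := by gcongr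
    nlinarith
  · have h1 : P e = 0 :=
      Submodule.orthogonalProjectionOnto_orthogonalComplement_singleton_eq_zero e
    have h2 : P z = z := Submodule.orthogonalProjectionOnto_mem_subspace_eq_self z
    simp only [map_add, map_smul, h1, h2, smul_zero, add_zero]
    simp [hz]

/-- there exists `c > 0` such that for every `x` in the open unit ball
`B ⊆ ℝⁿ`, `∫_S (1−|x|²)^{α/2} |x−w|^{−n} σ(dw) ≥ c (1−|x|)^{α/2−1}`, where `σ` is the
(n−1)-dimensional surface (Hausdorff) measure on the unit sphere `S`. -/
theorem stmt9 (n : ℕ) (hn : 2 ≤ n) (α : ℝ) (hα : α ∈ Set.Ioo (0 : ℝ) 2) :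
    ∃ c : ℝ, 0 < c ∧
      ∀ x ∈ ball (0 : EuclideanSpace ℝ (Fin n)) 1,
        (∫ w in sphere (0 : EuclideanSpace ℝ (Fin n)) 1,
            (1 - ‖x‖ ^ 2) ^ (α / 2) * dist x w ^ (-(n : ℝ)) ∂μH[(n : ℝ) - 1])
          ≥ c * (1 - ‖x‖) ^ (α / 2 - 1) := by
  obtain ⟨m, rfl⟩ : ∃ m, n = m + 1 := ⟨n - 1, by omega⟩
  have hcast : ((m + 1 : ℕ) : ℝ) - 1 = m := by push_cast; ring
  rw [hcast]
  have hH : Measure.IsAddHaarMeasure (G := EuclideanSpace ℝ (Fin m)) μH[(m : ℝ)] := by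
    have := isAddHaarMeasure_hausdorffMeasure (E := EuclideanSpace ℝ (Fin m))
    rwa [finrank_euclideanSpace_fin] at this
  set C : ℝ := (μH[(m : ℝ)] (ball (0 : EuclideanSpace ℝ (Fin m)) 1)).toReal with hCdef
  have hC : 0 < C := ENNReal.toReal_pos (measure_ball_pos _ _ one_pos).ne' measure_ball_lt_top.ne
  refine ⟨(2 : ℝ) ^ (-((m + 1 : ℕ) : ℝ)) * (1 / 2) ^ m * C, by positivity, ?_⟩
  intro x hx
  rw [mem_ball_zero_iff] at hx
  have hx0 := norm_nonneg x
  set r := 1 - ‖x‖ with hr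
  have hr0 : 0 < r := by linarith
  have hr1 : r ≤ 1 := by linarith
  obtain ⟨e, he, hxe⟩ : ∃ e : EuclideanSpace ℝ (Fin (m + 1)), ‖e‖ = 1 ∧ dist x e ≤ r := by
    by_cases h : x = 0
    · refine ⟨EuclideanSpace.single 0 1, by simp, ?_⟩
      subst h
      simp [hr]
    · have hxn : ‖x‖ ≠ 0 := by simpa using h
      refine ⟨‖x‖⁻¹ • x, by simp [norm_smul, hxn], ?_⟩
      have : x - ‖x‖⁻¹ • x = (1 - ‖x‖⁻¹) • x := by module
      rw [dist_eq_norm, this, norm_smul, Real.norm_eq_abs, ← abs_norm x, ← abs_mul, abs_norm,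
        sub_mul, inv_mul_cancel₀ hxn, abs_of_nonpos (by linarith)]
      linarith
  set S := sphere (0 : EuclideanSpace ℝ (Fin (m + 1))) 1 with hS
  have hSm : MeasurableSet S := isClosed_sphere.measurableSet
  set μ := (μH[(m : ℝ)] : Measure (EuclideanSpace ℝ (Fin (m + 1)))).restrict S with hμ
  have hfin : IsFiniteMeasure μ := ⟨by rw [hμ, Measure.restrict_apply_univ]; exact aux_fin m⟩
  have hdist : ∀ w ∈ S, r ≤ dist x w := by
    intro w hw
    have h1 := norm_sub_norm_le w x
    rw [mem_sphere_zero_iff_norm.1 hw] at h1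
    rw [dist_comm, dist_eq_norm]
    exact h1
  set f : EuclideanSpace ℝ (Fin (m + 1)) → ℝ :=
    fun w => (1 - ‖x‖ ^ 2) ^ (α / 2) * dist x w ^ (-((m + 1 : ℕ) : ℝ)) with hf
  have hA : 0 ≤ 1 - ‖x‖ ^ 2 := by nlinarith
  have hf0 : ∀ w, 0 ≤ f w := fun w => by
    have := Real.rpow_nonneg hA (α / 2)
    positivity
  have hneg : -((m + 1 : ℕ) : ℝ) ≤ 0 := by
    have : (0 : ℝ) ≤ ((m + 1 : ℕ) : ℝ) := by positivity
    linarith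
  have hint : Integrable f μ := by
    refine Integrable.of_bound (C := (1 - ‖x‖ ^ 2) ^ (α / 2) * r ^ (-((m + 1 : ℕ) : ℝ))) ?_ ?_
    · apply Measurable.aestronglyMeasurable
      fun_prop
    · filter_upwards [ae_restrict_mem hSm] with w hw
      rw [Real.norm_of_nonneg (hf0 w)]
      exact mul_le_mul_of_nonneg_left (Real.rpow_le_rpow_of_nonpos hr0 (hdist w hw) hneg)
        (Real.rpow_nonneg hA _)
  set ε := r ^ (α / 2) * (2 * r) ^ (-((m + 1 : ℕ) : ℝ)) with hε
  have hmk := mul_meas_ge_le_integral_of_nonneg (μ := μ) (Filter.Eventually.of_forall hf0) hint ε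
  have hcap : (r / 2) ^ m * C ≤ μ.real {w | ε ≤ f w} := by
    have h1 := aux_cap m e he r hr0 hr1
    have h2 : μH[(m : ℝ)] (S ∩ closedBall e r) ≤ μ {w | ε ≤ f w} := by
      rw [inter_comm, ← Measure.restrict_apply' hSm, ← hμ]
      have : μ (closedBall e r) = μ (closedBall e r ∩ S) := by
        rw [hμ, Measure.restrict_apply' hSm, Measure.restrict_apply' hSm, inter_assoc, inter_self]
      rw [this]
      apply measure_mono
      rintro w ⟨hwe, hwS⟩
      have hd : dist x w ≤ 2 * r := by
        have := dist_triangle x e w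
        rw [mem_closedBall, dist_comm] at hwe
        linarith
      have hd0 : 0 < dist x w := lt_of_lt_of_le hr0 (hdist w hwS)
      change ε ≤ f w
      have hα0 : 0 ≤ α / 2 := by linarith [hα.1]
      have hrr : r ≤ 1 - ‖x‖ ^ 2 := by nlinarith
      exact mul_le_mul (Real.rpow_le_rpow hr0.le hrr hα0)
        (Real.rpow_le_rpow_of_nonpos hd0 hd hneg) (by positivity) (Real.rpow_nonneg hA _)
    have h3 := ENNReal.toReal_mono (measure_ne_top μ _) (h1.trans h2)
    rw [ENNReal.toReal_mul, ENNReal.toReal_ofReal (by positivity)] at h3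
    exact h3
  refine le_trans ?_ hmk
  refine le_trans (le_of_eq ?_) (mul_le_mul_of_nonneg_left hcap (by positivity))
  have e1 : r ^ (α / 2 - 1) = r ^ (α / 2) * (r ^ (-((m + 1 : ℕ) : ℝ)) * r ^ m) := by
    rw [← Real.rpow_natCast r m, ← Real.rpow_add hr0, ← Real.rpow_add hr0]
    congr 1
    push_cast
    ring
  rw [e1, hε, Real.mul_rpow (by norm_num) hr0.le, div_eq_mul_one_div r 2, mul_pow]
  ring
end

section
/- Let α ∈ (0,2) and let B be the open unit disk in ℂ. For every ε > 0 there exists δ = δ(ε, α) > 0 with the following property: for every θ₀ ∈ ℝ, every λ ∈ (0, π), every 2π-periodic Borel measurable U : ℝ → [0,1] satisfying U(θ) = 1 whenever the distance from θ to θ₀ + 2πℤ is at most λ, and every ρ with max(0, 1−λδ) < ρ < 1, one has 1 − ε ≤ u_U(ρe^{iθ₀}) / h(ρe^{iθ₀}) ≤ 1. -/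
open MeasureTheory Set

/-- Martin kernel of the unit disk `B ⊆ ℂ` for the symmetric α-stable process,
normalized at the origin: `M(x, e^{iθ}) = (1−|x|²)^{α/2} |x − e^{iθ}|^{−2}`. -/
noncomputable def diskMartin (α : ℝ) (x : ℂ) (θ : ℝ) : ℝ :=
  (1 - ‖x‖ ^ 2) ^ (α / 2) / ‖x - Complex.exp (θ * Complex.I)‖ ^ 2

/-- `u_U(x) = (1/2π) ∫₀^{2π} M(x, e^{iθ}) U(θ) dθ`. -/
noncomputable def diskIntegral (α : ℝ) (U : ℝ → ℝ) (x : ℂ) : ℝ :=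
  (1 / (2 * Real.pi)) * ∫ θ in (0 : ℝ)..(2 * Real.pi), diskMartin α x θ * U θ

lemma aux_norm_s10 (ρ θ₀ t : ℝ) :
    ‖(ρ : ℂ) * Complex.exp (θ₀ * Complex.I) - Complex.exp (((θ₀ + t : ℝ) : ℂ) * Complex.I)‖ ^ 2
      = (1 - ρ) ^ 2 + 2 * ρ * (1 - Real.cos t) := by
  have h : (ρ : ℂ) * Complex.exp (θ₀ * Complex.I) - Complex.exp (((θ₀ + t : ℝ) : ℂ) * Complex.I)
      = Complex.exp (θ₀ * Complex.I) * ((ρ : ℂ) - Complex.exp (t * Complex.I)) := by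
    push_cast
    rw [add_mul, Complex.exp_add]; ring
  rw [h, norm_mul, Complex.norm_exp_ofReal_mul_I, one_mul, ← Complex.normSq_eq_norm_sq,
    Complex.normSq_apply]
  simp only [Complex.sub_re, Complex.sub_im, Complex.ofReal_re, Complex.ofReal_im,
    Complex.exp_ofReal_mul_I_re, Complex.exp_ofReal_mul_I_im]
  nlinarith [Real.sin_sq_add_cos_sq t]

lemma aux_int_s10 (c : ℝ) (hc : 0 < c) :
    ∫ t in (-Real.pi)..Real.pi, (c ^ 2 + t ^ 2)⁻¹ = 2 * Real.arctan (Real.pi / c) / c := by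
  rw [integral_inv_sq_add_sq hc.ne', neg_div, Real.arctan_neg]
  ring

lemma aux_disk (α ρ θ₀ : ℝ) (hρ0 : 0 < ρ) (U : ℝ → ℝ)
    (hU : Function.Periodic U (2 * Real.pi)) :
    diskIntegral α U ((ρ : ℂ) * Complex.exp (θ₀ * Complex.I)) =
      ((1 - ρ ^ 2) ^ (α / 2) / (2 * Real.pi)) *
       ∫ t in (-Real.pi)..Real.pi, ((1 - ρ) ^ 2 + 2 * ρ * (1 - Real.cos t))⁻¹ * U (θ₀ + t) := by
  unfold diskIntegral
  set x := (ρ : ℂ) * Complex.exp (θ₀ * Complex.I) with hx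
  have hp : Function.Periodic (fun θ => diskMartin α x θ * U θ) (2 * Real.pi) := by
    intro θ
    simp only [diskMartin, hU θ]
    congr 5
    push_cast
    rw [add_mul, Complex.exp_add, Complex.exp_two_pi_mul_I, mul_one]
  have h1 := hp.intervalIntegral_add_eq 0 (θ₀ + -Real.pi)
  rw [zero_add] at h1
  rw [h1, show θ₀ + -Real.pi + 2 * Real.pi = θ₀ + Real.pi by ring,
    ← intervalIntegral.integral_comp_add_left (fun θ => diskMartin α x θ * U θ)]
  have h2 : ∀ t, diskMartin α x (θ₀ + t) * U (θ₀ + t) = (1 - ρ ^ 2) ^ (α / 2) *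
      (((1 - ρ) ^ 2 + 2 * ρ * (1 - Real.cos t))⁻¹ * U (θ₀ + t)) := by
    intro t
    have hn : ‖x‖ = ρ := by
      rw [hx, norm_mul, Complex.norm_exp_ofReal_mul_I, mul_one, Complex.norm_real,
        Real.norm_of_nonneg hρ0.le]
    rw [diskMartin, hn, hx, aux_norm_s10]; ring
  simp only [h2]
  rw [intervalIntegral.integral_const_mul]
  ring

/-- for every `ε > 0` there is `δ = δ(ε,α) > 0` such that for every
`θ₀ ∈ ℝ`, `λ ∈ (0,π)`, every 2π-periodic Borel `U : ℝ → [0,1]` with `U ≡ 1` at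
distance at most `λ` from `θ₀ + 2πℤ`, and every `ρ` with `max 0 (1−λδ) < ρ < 1`,
one has `1 − ε ≤ u_U(ρe^{iθ₀}) / h(ρe^{iθ₀}) ≤ 1` (where `h = u_1`). -/
theorem stmt10 (α : ℝ) (hα : α ∈ Set.Ioo (0 : ℝ) 2) (ε : ℝ) (hε : 0 < ε) :
    ∃ δ : ℝ, 0 < δ ∧
      ∀ θ₀ lam : ℝ, lam ∈ Set.Ioo 0 Real.pi →
        ∀ U : ℝ → ℝ, Measurable U → (∀ θ, U θ ∈ Set.Icc (0 : ℝ) 1) →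
          Function.Periodic U (2 * Real.pi) →
          (∀ θ : ℝ, (∃ k : ℤ, |θ - θ₀ - 2 * Real.pi * k| ≤ lam) → U θ = 1) →
          ∀ ρ : ℝ, max 0 (1 - lam * δ) < ρ → ρ < 1 →
            1 - ε ≤ diskIntegral α U ((ρ : ℂ) * Complex.exp (θ₀ * Complex.I)) /
                diskIntegral α (fun _ => 1) ((ρ : ℂ) * Complex.exp (θ₀ * Complex.I)) ∧
              diskIntegral α U ((ρ : ℂ) * Complex.exp (θ₀ * Complex.I)) /
                diskIntegral α (fun _ => 1) ((ρ : ℂ) * Complex.exp (θ₀ * Complex.I))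
                ≤ 1 := by
  have hpi := Real.pi_pos
  refine ⟨min (1 / (2 * Real.pi)) (ε / (2 * Real.pi ^ 2)), by positivity, ?_⟩
  set δ := min (1 / (2 * Real.pi)) (ε / (2 * Real.pi ^ 2)) with hδ
  intro θ₀ lam ⟨hl0, hlpi⟩ U hUm hU01 hUp hU1 ρ hρ hρ1
  have hδ1 : δ * (2 * Real.pi) ≤ 1 := (le_div_iff₀ (by positivity)).1 (min_le_left _ _)
  have hδ2 : δ * (2 * Real.pi ^ 2) ≤ ε := (le_div_iff₀ (by positivity)).1 (min_le_right _ _)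
  have hδ0 : 0 < δ := by positivity
  have hρ0 : 0 < ρ := (le_max_left _ _).trans_lt hρ
  have hs : 1 - ρ < lam * δ := by linarith [(le_max_right 0 (1 - lam * δ)).trans_lt hρ]
  have hρh : 1 / 2 ≤ ρ := by nlinarith
  have hs0 : 0 < 1 - ρ := by linarith
  rw [aux_disk α ρ θ₀ hρ0 U hUp, aux_disk α ρ θ₀ hρ0 (fun _ => 1) (fun _ => rfl)]
  have hK : (1 - ρ ^ 2) ^ (α / 2) / (2 * Real.pi) ≠ 0 := by
    have : 0 < 1 - ρ ^ 2 := by nlinarith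
    positivity
  rw [mul_div_mul_left _ _ hK]
  simp only [mul_one]
  set P : ℝ → ℝ := fun t => ((1 - ρ) ^ 2 + 2 * ρ * (1 - Real.cos t))⁻¹ with hP
  have hD : ∀ t, 0 < (1 - ρ) ^ 2 + 2 * ρ * (1 - Real.cos t) := by
    intro t
    have := Real.cos_le_one t
    have : 0 ≤ 2 * ρ * (1 - Real.cos t) := by apply mul_nonneg <;> linarith
    positivity
  have hPpos : ∀ t, 0 < P t := fun t => inv_pos.2 (hD t)
  have hPc : Continuous P := Continuous.inv₀ (by fun_prop) (fun t => (hD t).ne')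
  have hPi : IntervalIntegrable P volume (-Real.pi) Real.pi := hPc.intervalIntegrable _ _
  have hPUi : IntervalIntegrable (fun t => P t * U (θ₀ + t)) volume (-Real.pi) Real.pi := by
    refine hPi.mono_fun (by fun_prop) (Filter.Eventually.of_forall fun t => ?_)
    have := hU01 (θ₀ + t)
    simp only [norm_mul]
    refine mul_le_of_le_one_right (norm_nonneg _) ?_
    rw [Real.norm_of_nonneg this.1]; exact this.2
  have hle : -Real.pi ≤ Real.pi := by linarith
  have hci : ∀ c : ℝ, 0 < c → IntervalIntegrable (fun t : ℝ => (c ^ 2 + t ^ 2)⁻¹) volume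
      (-Real.pi) Real.pi := fun c hc => by
    apply Continuous.intervalIntegrable
    exact Continuous.inv₀ (by fun_prop) (fun t => by positivity)
  have hlow : Real.pi / (2 * (1 - ρ)) ≤ ∫ t in (-Real.pi)..Real.pi, P t := by
    have h1 : ∫ t in (-Real.pi)..Real.pi, ((1 - ρ) ^ 2 + t ^ 2)⁻¹ ≤
        ∫ t in (-Real.pi)..Real.pi, P t := by
      refine intervalIntegral.integral_mono_on hle (hci _ hs0) hPi fun t _ => ?_
      refine inv_anti₀ (hD t) ?_
      have := Real.one_sub_sq_div_two_le_cos (x := t)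
      nlinarith [sq_nonneg t]
    rw [aux_int_s10 _ hs0] at h1
    refine le_trans ?_ h1
    have h2 : Real.pi / 4 ≤ Real.arctan (Real.pi / (1 - ρ)) := by
      rw [← Real.arctan_one]
      refine Real.arctan_mono ?_
      rw [le_div_iff₀ hs0]; linarith [Real.pi_gt_three]
    rw [div_le_div_iff₀ (by positivity) hs0]
    nlinarith
  have hup : (∫ t in (-Real.pi)..Real.pi, P t) - ∫ t in (-Real.pi)..Real.pi, P t * U (θ₀ + t)
      ≤ Real.pi ^ 3 / lam := by
    rw [← intervalIntegral.integral_sub hPi hPUi]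
    have h1 : ∫ t in (-Real.pi)..Real.pi, (P t - P t * U (θ₀ + t)) ≤
        ∫ t in (-Real.pi)..Real.pi, Real.pi ^ 2 * (lam ^ 2 + t ^ 2)⁻¹ := by
      refine intervalIntegral.integral_mono_on hle (hPi.sub hPUi) ((hci _ hl0).const_mul _)
        fun t ht => ?_
      by_cases htl : |t| ≤ lam
      · rw [hU1 (θ₀ + t) ⟨0, by simpa using htl⟩]
        simp only [mul_one, sub_self]
        positivity
      · have hU0 := (hU01 (θ₀ + t)).1
        have h2 : P t - P t * U (θ₀ + t) ≤ P t := by nlinarith [hPpos t]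
        refine h2.trans ?_
        have hq := Real.cos_le_one_sub_mul_cos_sq (x := t) (abs_le.2 ⟨ht.1, ht.2⟩)
        have hsq : lam ^ 2 ≤ t ^ 2 := by
          rw [← sq_abs t]; push Not at htl; gcongr
        have h3 : (lam ^ 2 + t ^ 2) / Real.pi ^ 2 ≤ (1 - ρ) ^ 2 + 2 * ρ * (1 - Real.cos t) := by
          have e : (lam ^ 2 + t ^ 2) / Real.pi ^ 2 ≤ 2 / Real.pi ^ 2 * t ^ 2 := by
            rw [div_mul_eq_mul_div]; gcongr; linarith
          nlinarith [Real.cos_le_one t, sq_nonneg (1 - ρ)]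
        have h4 := inv_anti₀ (by positivity) h3
        rw [inv_div] at h4
        rw [← div_eq_mul_inv]; exact h4
    refine h1.trans ?_
    rw [intervalIntegral.integral_const_mul, aux_int_s10 _ hl0, ← mul_div_assoc]
    gcongr
    nlinarith [Real.arctan_lt_pi_div_two (Real.pi / lam), sq_nonneg Real.pi, pow_pos hpi 2]
  set T := ∫ t in (-Real.pi)..Real.pi, P t
  set V := ∫ t in (-Real.pi)..Real.pi, P t * U (θ₀ + t)
  have hVT : V ≤ T := intervalIntegral.integral_mono_on hle hPUi hPi fun t _ =>
    mul_le_of_le_one_right (hPpos t).le (hU01 _).2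
  have hT : 0 < T := lt_of_lt_of_le (by positivity) hlow
  refine ⟨?_, (div_le_one hT).2 hVT⟩
  rw [le_div_iff₀ hT]
  have : Real.pi ^ 3 / lam ≤ ε * T := by
    refine le_trans ?_ (mul_le_mul_of_nonneg_left hlow hε.le)
    rw [← mul_div_assoc, div_le_div_iff₀ hl0 (by positivity)]
    have h5 : 2 * Real.pi ^ 2 * (1 - ρ) ≤ ε * lam := by
      have := mul_le_mul_of_nonneg_right hδ2 hl0.le
      have := mul_le_mul_of_nonneg_left hs.le (by positivity : 0 ≤ 2 * Real.pi ^ 2)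
      linarith
    have := mul_le_mul_of_nonneg_right h5 hpi.le
    linarith
  linarith
end

section
/- (Relative Fatou theorem in the unit ball.) Let n ≥ 2, α ∈ (0,2), let ν be a nonzero finite Borel measure on the unit sphere S ⊆ ℝⁿ, and define h(x) := ∫_S M(x,w) ν(dw) for x in the open unit ball B. Then for every function u that is nonnegative and α-harmonic in B, for ν-almost every z ∈ S and every β > 1, the limit of u(x)/h(x) as x → z with x ∈ A^β_z exists and is finite. -/
open Metric Set MeasureTheory Filter

/-- Martin kernel of the unit ball for the symmetric α-stable process, normalized at
the origin: `M(x,w) = (1−|x|²)^{α/2} |x−w|^{−n}`. -/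
noncomputable def martinKernel (n : ℕ) (α : ℝ) (x w : EuclideanSpace ℝ (Fin n)) : ℝ :=
  (1 - ‖x‖ ^ 2) ^ (α / 2) * dist x w ^ (-(n : ℝ))

/-- Stolz open set of the unit ball at a boundary point `z`, with angle `β > 1`:
`A^β_z = { y ∈ B : 1−|y| < 1/3 ∧ |y−z| < β(1−|y|) }`. -/
def stolzSet (n : ℕ) (β : ℝ) (z : EuclideanSpace ℝ (Fin n)) :
    Set (EuclideanSpace ℝ (Fin n)) :=
  {y | y ∈ ball (0 : EuclideanSpace ℝ (Fin n)) 1 ∧ 1 - ‖y‖ < 1 / 3 ∧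
    dist y z < β * (1 - ‖y‖)}


namespace RF

/-- The normalized kernel. -/
noncomputable def K {n : ℕ} (x v : EuclideanSpace ℝ (Fin n)) : ℝ := (‖v‖ / dist x v) ^ n

lemma K_nonneg {n : ℕ} (x v : EuclideanSpace ℝ (Fin n)) : 0 ≤ K x v := by
  unfold K; positivity

lemma measurable_K {n : ℕ} (x : EuclideanSpace ℝ (Fin n)) : Measurable (fun v => K x v) := by
  unfold K; fun_prop

lemma layer {n : ℕ} (hn : n ≠ 0) (σ ν : Measure (EuclideanSpace ℝ (Fin n)))
    (z : EuclideanSpace ℝ (Fin n)) (t δ : ℝ) (ht : 0 < t) (hδ : 0 < δ) (e : ENNReal) (he : e ≠ ⊤)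
    (h : ∀ s, 0 < s → s ≤ δ → σ (closedBall z s) ≤ e * ν (closedBall z s)) :
    ∫⁻ v in closedBall z δ, ENNReal.ofReal ((max t (dist v z)) ^ n)⁻¹ ∂σ ≤
      e * ∫⁻ v in closedBall z δ, ENNReal.ofReal ((max t (dist v z)) ^ n)⁻¹ ∂ν := by
  have hm : Measurable (fun v : EuclideanSpace ℝ (Fin n) => ((max t (dist v z)) ^ n)⁻¹) := by
    fun_prop
  rw [lintegral_eq_lintegral_meas_le _ (Eventually.of_forall fun v => by positivity)
      hm.aemeasurable,
    lintegral_eq_lintegral_meas_le _ (Eventually.of_forall fun v => by positivity)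
      hm.aemeasurable, ← lintegral_const_mul' _ _ he]
  apply setLIntegral_mono' measurableSet_Ioi
  intro a ha
  have ha : 0 < a := ha
  rw [Measure.restrict_apply (measurableSet_le measurable_const hm),
    Measure.restrict_apply (measurableSet_le measurable_const hm)]
  set ρ : ℝ := (a⁻¹) ^ ((n : ℝ)⁻¹) with hρ
  have hρ0 : 0 < ρ := by positivity
  have hρn : ρ ^ n = a⁻¹ := Real.rpow_inv_natCast_pow (by positivity) hn
  have key : ∀ v, (a ≤ ((max t (dist v z)) ^ n)⁻¹) ↔ max t (dist v z) ≤ ρ := by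
    intro v
    have hp : 0 < max t (dist v z) := lt_max_of_lt_left ht
    rw [le_inv_comm₀ ha (by positivity), ← hρn]
    exact pow_le_pow_iff_left₀ hp.le hρ0.le hn
  by_cases hc : t ≤ ρ
  · have : {v | a ≤ ((max t (dist v z)) ^ n)⁻¹} ∩ closedBall z δ = closedBall z (min ρ δ) := by
      ext v
      simp only [mem_inter_iff, mem_ofPred_eq, key, mem_closedBall, max_le_iff, le_min_iff, hc,
        true_and]
    rw [this]
    exact h _ (lt_min hρ0 hδ) (min_le_right _ _)
  · have : {v | a ≤ ((max t (dist v z)) ^ n)⁻¹} ∩ closedBall z δ = ∅ := by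
      ext v
      simp only [mem_inter_iff, mem_ofPred_eq, key, max_le_iff, hc, false_and, mem_empty_iff_false]
    rw [this]; simp

/-- geometric comparison -/
lemma geom {n : ℕ} {β : ℝ} (hβ : 1 < β) {z x v : EuclideanSpace ℝ (Fin n)}
    (hx : x ∈ stolzSet n β z) (hv : 1 ≤ ‖v‖) :
    0 < 1 - ‖x‖ ∧ max (1 - ‖x‖) (dist v z) ≤ (β + 1) * dist x v ∧
      dist x v ≤ (β + 1) * max (1 - ‖x‖) (dist v z) := by
  obtain ⟨h1, -, h3⟩ := hx
  have h1 : ‖x‖ < 1 := by simpa using h1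
  have ht : 0 < 1 - ‖x‖ := by linarith
  have h4 : 1 - ‖x‖ ≤ dist x v := by
    rw [dist_comm, dist_eq_norm]
    have := norm_sub_norm_le v x
    linarith
  have h5 : dist v z ≤ dist x v + dist x z := by
    rw [dist_comm x v]; exact dist_triangle _ _ _
  have h6 : dist x v ≤ dist x z + dist v z := by
    rw [dist_comm v z]; exact dist_triangle _ _ _
  refine ⟨ht, max_le (by nlinarith) (by nlinarith), ?_⟩
  have h7 := le_max_left (1 - ‖x‖) (dist v z)
  have h8 := le_max_right (1 - ‖x‖) (dist v z)
  nlinarith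

lemma K_le {n : ℕ} {x v : EuclideanSpace ℝ (Fin n)} {d : ℝ} (hd : 0 < d) (hx : ‖x‖ ≤ 1)
    (hv : d ≤ dist x v) : K x v ≤ (1 + 1 / d) ^ n := by
  unfold K
  apply pow_le_pow_left₀ (by positivity)
  have : ‖v‖ ≤ dist x v + 1 := by
    rw [dist_comm, dist_eq_norm]
    have := norm_sub_norm_le v x
    linarith
  rw [div_le_iff₀ (by linarith)]
  have h2 : 1 ≤ 1 / d * dist x v := by
    rw [one_div, inv_mul_eq_div, le_div_iff₀ hd]; linarith
  linarith

lemma ev_stolz {n : ℕ} {β : ℝ} {z : EuclideanSpace ℝ (Fin n)} (hz : ‖z‖ = 1) :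
    Tendsto (fun x : EuclideanSpace ℝ (Fin n) => 1 - ‖x‖) (nhdsWithin z (stolzSet n β z))
      (nhdsWithin 0 (Ioi 0)) := by
  apply tendsto_nhdsWithin_of_tendsto_nhds_of_eventually_within
  · have : Continuous (fun x : EuclideanSpace ℝ (Fin n) => 1 - ‖x‖) := by fun_prop
    have h := this.tendsto z
    rw [hz, sub_self] at h
    exact h.mono_left nhdsWithin_le_nhds
  · filter_upwards [self_mem_nhdsWithin] with x hx
    have : ‖x‖ < 1 := by simpa using hx.1
    simp [this]

lemma div_ev {f g : ℝ → ENNReal} (hg : ∀ s, g s ≠ ⊤)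
    (h : Tendsto (fun s => f s / g s) (nhdsWithin 0 (Ioi 0)) (nhds 0)) {e : ENNReal} (he : 0 < e)
    (het : e ≠ ⊤) : ∀ᶠ s in nhdsWithin 0 (Ioi 0), f s ≤ e * g s := by
  filter_upwards [h.eventually (ge_mem_nhds he)] with s hs
  exact (ENNReal.div_le_iff_le_mul (Or.inr het) (Or.inl (hg s))).1 hs

lemma lower {n : ℕ} {β : ℝ} (hβ : 1 < β) {z : EuclideanSpace ℝ (Fin n)} (hz : ‖z‖ = 1)
    (ν : Measure (EuclideanSpace ℝ (Fin n))) [IsFiniteMeasure ν] (hν : ν (ball 0 1) = 0)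
    (h : Tendsto (fun s => volume (closedBall z s) / ν (closedBall z s)) (nhdsWithin 0 (Ioi 0))
      (nhds 0)) (M : ENNReal) (hM : M ≠ ⊤) :
    ∀ᶠ x in nhdsWithin z (stolzSet n β z), M ≤ ∫⁻ v, ENNReal.ofReal (K x v) ∂ν := by
  set c : ENNReal := volume (ball (0 : EuclideanSpace ℝ (Fin n)) 1) with hc
  have hc0 : c ≠ 0 := (measure_ball_pos _ _ one_pos).ne'
  have hct : c ≠ ⊤ := measure_ball_lt_top.ne
  set B : ENNReal := ENNReal.ofReal ((β + 1) ^ n) with hB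
  have hB0 : B ≠ 0 := by rw [hB]; simp; positivity
  have hBt : B ≠ ⊤ := ENNReal.ofReal_ne_top
  -- e = c / (B * (M+1))
  set e : ENNReal := c / (B * (M + 1)) with he
  have hD0 : B * (M + 1) ≠ 0 := by simp [hB0]
  have hDt : B * (M + 1) ≠ ⊤ := ENNReal.mul_ne_top hBt (by simp [hM])
  have he0 : 0 < e := ENNReal.div_pos hc0 hDt
  have het : e ≠ ⊤ := ENNReal.div_ne_top hct hD0
  have h1 := (ev_stolz (β := β) hz).eventually (div_ev (fun s => measure_ne_top _ _) h he0 het)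
  have hae : ∀ᵐ v ∂ν, 1 ≤ ‖v‖ := by
    rw [ae_iff]; convert hν using 2; ext v; simp
  filter_upwards [h1, self_mem_nhdsWithin] with x hx hxs
  set t := 1 - ‖x‖ with ht
  have ht0 : 0 < t := by
    have : ‖x‖ < 1 := by simpa using hxs.1
    linarith
  rw [Measure.addHaar_closedBall _ _ ht0.le] at hx
  simp only [finrank_euclideanSpace, Fintype.card_fin] at hx
  have h2 : ENNReal.ofReal (((β + 1) * t) ^ n)⁻¹ * ν (closedBall z t) ≤
      ∫⁻ v, ENNReal.ofReal (K x v) ∂ν := by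
    calc _ = ∫⁻ v in closedBall z t, ENNReal.ofReal (((β + 1) * t) ^ n)⁻¹ ∂ν := by simp
      _ ≤ ∫⁻ v in closedBall z t, ENNReal.ofReal (K x v) ∂ν := by
        apply lintegral_mono_ae
        filter_upwards [ae_restrict_mem measurableSet_closedBall, ae_restrict_of_ae hae] with v hv hv1
        apply ENNReal.ofReal_le_ofReal
        obtain ⟨g1, g2, g3⟩ := geom hβ hxs hv1
        have hv : dist v z ≤ t := hv
        rw [max_eq_left hv] at g2 g3
        unfold K
        rw [← inv_pow]
        apply pow_le_pow_left₀ (by positivity)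
        have : 0 < dist x v := by
          by_contra hh
          have : dist x v = 0 := le_antisymm (not_lt.1 hh) dist_nonneg
          rw [this] at g2; linarith
        rw [← one_div]
        apply div_le_div₀ (by positivity) hv1 this g3
      _ ≤ _ := setLIntegral_le_lintegral _ _
  refine le_trans ?_ h2
  have hT0 : ENNReal.ofReal (t ^ n) ≠ 0 := by simp; positivity
  have h3 : ENNReal.ofReal (((β + 1) * t) ^ n)⁻¹ = (B * ENNReal.ofReal (t ^ n))⁻¹ := by
    rw [mul_pow, hB, ← ENNReal.ofReal_mul (by positivity), ENNReal.ofReal_inv_of_pos (by positivity)]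
  rw [h3, mul_comm, ← div_eq_mul_inv,
    ENNReal.le_div_iff_mul_le (Or.inl (by simp [hB0, hT0])) (Or.inl (ENNReal.mul_ne_top hBt (by simp)))]
  have h4 : ENNReal.ofReal (t ^ n) * c * (B * (M + 1)) ≤ c * ν (closedBall z t) := by
    calc _ ≤ e * ν (closedBall z t) * (B * (M + 1)) := by gcongr
      _ = (c / (B * (M+1)) * (B * (M + 1))) * ν (closedBall z t) := by rw [he]; ring
      _ = _ := by rw [ENNReal.div_mul_cancel hD0 hDt]
  have h5 : c * (M * (B * ENNReal.ofReal (t ^ n))) ≤ c * ν (closedBall z t) := by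
    refine le_trans ?_ h4
    calc c * (M * (B * ENNReal.ofReal (t ^ n))) = ENNReal.ofReal (t ^ n) * c * (B * M) := by ring
      _ ≤ _ := by gcongr; exact le_self_add
  exact (ENNReal.mul_le_mul_iff_right hc0 hct).1 h5

lemma key {n : ℕ} (hn : n ≠ 0) {β : ℝ} (hβ : 1 < β) {z : EuclideanSpace ℝ (Fin n)} (hz : ‖z‖ = 1)
    (σ ν : Measure (EuclideanSpace ℝ (Fin n))) [IsFiniteMeasure ν] [IsFiniteMeasure σ]
    (hν : ν (ball 0 1) = 0) (hσ : σ (ball 0 1) = 0)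
    (h : Tendsto (fun s => volume (closedBall z s) / ν (closedBall z s)) (nhdsWithin 0 (Ioi 0))
      (nhds 0))
    (h' : Tendsto (fun s => σ (closedBall z s) / ν (closedBall z s)) (nhdsWithin 0 (Ioi 0))
      (nhds 0)) (e : ENNReal) (he : 0 < e) (het : e ≠ ⊤) :
    ∀ᶠ x in nhdsWithin z (stolzSet n β z),
      ∫⁻ v, ENNReal.ofReal (K x v) ∂σ ≤ e * ∫⁻ v, ENNReal.ofReal (K x v) ∂ν := by
  set B : ENNReal := ENNReal.ofReal ((β + 1) ^ n) with hB
  have hB0 : B ≠ 0 := by rw [hB]; simp; positivity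
  have hBt : B ≠ ⊤ := ENNReal.ofReal_ne_top
  set A : ENNReal := ENNReal.ofReal ((2 * (β + 1)) ^ n) with hA
  have hA0 : A ≠ 0 := by rw [hA]; simp; positivity
  have hAt : A ≠ ⊤ := ENNReal.ofReal_ne_top
  have hD0 : A * B ≠ 0 := by simp [hA0, hB0]
  have hDt : A * B ≠ ⊤ := ENNReal.mul_ne_top hAt hBt
  have he2 : 0 < e / 2 := ENNReal.half_pos he.ne'
  have he2t : e / 2 ≠ ⊤ := ENNReal.div_ne_top het (by simp)
  set e1 : ENNReal := (e / 2) / (A * B) with he1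
  have he10 : 0 < e1 := ENNReal.div_pos he2.ne' hDt
  have he1t : e1 ≠ ⊤ := ENNReal.div_ne_top he2t hD0
  have hd := div_ev (fun s => measure_ne_top _ _) h' he10 he1t
  rw [eventually_nhdsWithin_iff, Metric.eventually_nhds_iff] at hd
  obtain ⟨δ0, hδ0, hd⟩ := hd
  set δ := min (δ0 / 2) 1 with hδd
  have hδ : 0 < δ := by positivity
  have hδ1 : δ ≤ 1 := min_le_right _ _
  have hδδ : δ ≤ δ0 / 2 := min_le_left _ _
  have hd' : ∀ s, 0 < s → s ≤ δ → σ (closedBall z s) ≤ e1 * ν (closedBall z s) := by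
    intro s hs hs'
    refine hd ?_ hs
    rw [Real.dist_eq, sub_zero, abs_of_pos hs]; linarith
  set C : ENNReal := ENNReal.ofReal ((1 + 1 / (δ / 2)) ^ n) * σ univ with hC
  have hCt : C ≠ ⊤ := ENNReal.mul_ne_top ENNReal.ofReal_ne_top (measure_ne_top _ _)
  have hlow := lower hβ hz ν hν h (C / (e / 2)) (ENNReal.div_ne_top hCt he2.ne')
  have hae : ∀ᵐ v ∂ν, 1 ≤ ‖v‖ := by
    rw [ae_iff]; convert hν using 2; ext v; simp
  have haeσ : ∀ᵐ v ∂σ, 1 ≤ ‖v‖ := by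
    rw [ae_iff]; convert hσ using 2; ext v; simp
  have hnear : ∀ᶠ x in nhdsWithin z (stolzSet n β z), dist x z < δ / 2 :=
    nhdsWithin_le_nhds (Metric.eventually_nhds_iff.2 ⟨δ / 2, by positivity, fun _ h => h⟩)
  filter_upwards [hlow, hnear, self_mem_nhdsWithin] with x hx1 hx2 hxs
  have hxn : ‖x‖ < 1 := by simpa using hxs.1
  set t := 1 - ‖x‖ with ht
  have ht0 : 0 < t := by linarith
  set k : EuclideanSpace ℝ (Fin n) → ENNReal :=
    fun v => ENNReal.ofReal ((max t (dist v z)) ^ n)⁻¹ with hk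
  have dpos : ∀ v : EuclideanSpace ℝ (Fin n), 1 ≤ ‖v‖ → 0 < dist x v := by
    intro v hv
    rw [dist_comm, dist_eq_norm]
    have := norm_sub_norm_le v x
    linarith
  have hup : ∫⁻ v in closedBall z δ, ENNReal.ofReal (K x v) ∂σ ≤
      A * ∫⁻ v in closedBall z δ, k v ∂σ := by
    rw [← lintegral_const_mul' _ _ hAt]
    apply lintegral_mono_ae
    filter_upwards [ae_restrict_mem measurableSet_closedBall, ae_restrict_of_ae haeσ] with v hv hv1
    rw [hA, hk, ← ENNReal.ofReal_mul (by positivity)]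
    apply ENNReal.ofReal_le_ofReal
    obtain ⟨g1, g2, g3⟩ := geom hβ hxs hv1
    have hv : dist v z ≤ δ := hv
    have hv2 : ‖v‖ ≤ 2 := by
      have := norm_sub_norm_le v z
      rw [← dist_eq_norm] at this; linarith
    unfold K
    rw [← inv_pow, ← mul_pow]
    apply pow_le_pow_left₀ (by positivity)
    have hm : 0 < max t (dist v z) := lt_max_of_lt_left ht0
    rw [div_le_iff₀ (dpos v hv1), mul_assoc, mul_assoc]
    have : 1 ≤ (β + 1) * ((max t (dist v z))⁻¹ * dist x v) := by
      rw [mul_left_comm, inv_mul_eq_div, le_div_iff₀ hm]; linarith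
    linarith
  have hdn : ∫⁻ v in closedBall z δ, k v ∂ν ≤ B * ∫⁻ v, ENNReal.ofReal (K x v) ∂ν := by
    rw [← lintegral_const_mul' _ _ hBt]
    refine le_trans ?_ (setLIntegral_le_lintegral (closedBall z δ) _)
    apply lintegral_mono_ae
    filter_upwards [ae_restrict_of_ae hae] with v hv1
    rw [hB, hk, ← ENNReal.ofReal_mul (by positivity)]
    apply ENNReal.ofReal_le_ofReal
    obtain ⟨g1, g2, g3⟩ := geom hβ hxs hv1
    unfold K
    rw [← inv_pow, ← mul_pow]
    apply pow_le_pow_left₀ (by positivity)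
    have hm : 0 < max t (dist v z) := lt_max_of_lt_left ht0
    rw [inv_le_iff_one_le_mul₀ hm, mul_div_assoc', div_mul_eq_mul_div, le_div_iff₀ (dpos v hv1)]
    have : (β + 1) * max t (dist v z) ≤ (β + 1) * max t (dist v z) * ‖v‖ :=
      le_mul_of_one_le_right (by positivity) hv1
    linarith
  have hfar : ∫⁻ v in (closedBall z δ)ᶜ, ENNReal.ofReal (K x v) ∂σ ≤ C := by
    calc _ ≤ ∫⁻ v in (closedBall z δ)ᶜ, ENNReal.ofReal ((1 + 1 / (δ / 2)) ^ n) ∂σ := by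
          apply setLIntegral_mono' measurableSet_closedBall.compl
          intro v hv
          apply ENNReal.ofReal_le_ofReal
          apply K_le (by positivity) hxn.le
          have hv : δ < dist v z := by simpa using hv
          have := dist_triangle v x z
          rw [dist_comm v x] at this
          linarith
      _ ≤ C := by
          rw [setLIntegral_const, hC]; gcongr; exact subset_univ _
  have hlay := layer hn σ ν z t δ ht0 hδ e1 he1t hd'
  set I := ∫⁻ v, ENNReal.ofReal (K x v) ∂ν with hI
  rw [← lintegral_add_compl _ (measurableSet_closedBall (x := z) (ε := δ))]
  have h1 : A * ∫⁻ v in closedBall z δ, k v ∂σ ≤ (e / 2) * I := by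
    calc _ ≤ A * (e1 * (B * I)) := by gcongr; exact hlay.trans (by gcongr)
      _ = (e / 2) / (A * B) * (A * B) * I := by rw [he1]; ring
      _ = _ := by rw [ENNReal.div_mul_cancel hD0 hDt]
  have h2 : C ≤ (e / 2) * I := by
    rw [ENNReal.div_le_iff_le_mul (Or.inl he2.ne') (Or.inl he2t)] at hx1
    rwa [mul_comm]
  calc _ ≤ (e / 2) * I + (e / 2) * I := add_le_add (hup.trans h1) (hfar.trans h2)
    _ = e * I := by rw [← add_mul, ENNReal.add_halves]

lemma K_lint_ne_top {n : ℕ} (μ : Measure (EuclideanSpace ℝ (Fin n))) [IsFiniteMeasure μ]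
    (hμ : μ (ball 0 1) = 0) {x : EuclideanSpace ℝ (Fin n)} (hx : ‖x‖ < 1) :
    ∫⁻ v, ENNReal.ofReal (K x v) ∂μ ≠ ⊤ := by
  have hae : ∀ᵐ v ∂μ, 1 ≤ ‖v‖ := by
    rw [ae_iff]; convert hμ using 2; ext v; simp
  have ht0 : 0 < 1 - ‖x‖ := by linarith
  have : ∫⁻ v, ENNReal.ofReal (K x v) ∂μ ≤
      ∫⁻ v, ENNReal.ofReal ((1 + 1 / (1 - ‖x‖)) ^ n) ∂μ := by
    apply lintegral_mono_ae
    filter_upwards [hae] with v hv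
    apply ENNReal.ofReal_le_ofReal
    apply K_le ht0 hx.le
    rw [dist_comm, dist_eq_norm]
    have := norm_sub_norm_le v x
    linarith
  refine ne_top_of_le_ne_top ?_ this
  rw [lintegral_const]
  exact ENNReal.mul_ne_top ENNReal.ofReal_ne_top (measure_ne_top _ _)

lemma K_int {n : ℕ} (μ : Measure (EuclideanSpace ℝ (Fin n))) (x : EuclideanSpace ℝ (Fin n)) :
    ∫ v, K x v ∂μ = (∫⁻ v, ENNReal.ofReal (K x v) ∂μ).toReal :=
  integral_eq_lintegral_of_nonneg_ae (Eventually.of_forall fun v => K_nonneg x v)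
    (measurable_K x).aestronglyMeasurable

lemma ratio {n : ℕ} (hn : n ≠ 0) (P ν : Measure (EuclideanSpace ℝ (Fin n)))
    [IsFiniteMeasure ν] [IsFiniteMeasure P]
    (hνS : ν (sphere (0 : EuclideanSpace ℝ (Fin n)) 1)ᶜ = 0) (hP : P (ball 0 1) = 0) :
    ∀ᵐ z ∂ν, ∀ β : ℝ, 1 < β → ∃ L : ℝ,
      Tendsto (fun x => (∫ v, K x v ∂P) / ∫ v, K x v ∂ν)
        (nhdsWithin z (stolzSet n β z)) (nhds L) := by
  have hν : ν (ball 0 1) = 0 := by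
    refine measure_mono_null ?_ hνS
    intro v hv
    simp only [mem_ball, dist_zero_right] at hv
    simp [hv.ne]
  have hsph : ∀ᵐ z ∂ν, ‖z‖ = 1 := by
    rw [ae_iff]; convert hνS using 2; ext v; simp
  have hsing : (volume : Measure (EuclideanSpace ℝ (Fin n))).MutuallySingular ν := by
    refine ⟨sphere 0 1, isClosed_sphere.measurableSet, ?_, hνS⟩
    exact Measure.addHaar_sphere_of_ne_zero _ _ one_ne_zero
  set f : EuclideanSpace ℝ (Fin n) → ℝ := fun v => (P.rnDeriv ν v).toReal with hf
  have hfi : Integrable f ν := Measure.integrable_toReal_rnDeriv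
  have hfm : Measurable f := (Measure.measurable_rnDeriv P ν).ennreal_toReal
  have hrn : P.rnDeriv ν =ᵐ[ν] fun v => ENNReal.ofReal (f v) := by
    filter_upwards [Measure.rnDeriv_lt_top P ν] with v hv
    rw [hf, ENNReal.ofReal_toReal hv.ne]
  have hLD : P.HaveLebesgueDecomposition ν := Measure.haveLebesgueDecomposition_of_sigmaFinite P ν
  set Q := P.singularPart ν with hQ
  have hdec : P = Q + ν.withDensity (P.rnDeriv ν) := Measure.haveLebesgueDecomposition_add P ν
  have hQsing : Q.MutuallySingular ν := Measure.mutuallySingular_singularPart P ν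
  have l1 := Besicovitch.ae_tendsto_rnDeriv (volume : Measure (EuclideanSpace ℝ (Fin n))) ν
  have l2 := Besicovitch.ae_tendsto_rnDeriv Q ν
  have l3 := (Besicovitch.vitaliFamily ν).ae_tendsto_lintegral_enorm_sub_div_of_integrable hfi
  filter_upwards [hsph, l1, l2, l3, Measure.rnDeriv_eq_zero_of_mutuallySingular hsing
    (Measure.AbsolutelyContinuous.refl ν), Measure.rnDeriv_eq_zero_of_mutuallySingular hQsing
    (Measure.AbsolutelyContinuous.refl ν)] with z hz m1 m2 m3 m4 m5 β hβ
  rw [m4] at m1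
  rw [m5] at m2
  have m3 := m3.comp (Besicovitch.tendsto_filterAt ν z)
  set L := f z with hL
  have hL0 : 0 ≤ L := ENNReal.toReal_nonneg
  refine ⟨L, ?_⟩
  have hgm : Measurable fun v => ‖f v - L‖ₑ := by fun_prop
  set W := ν.withDensity (fun v => ‖f v - L‖ₑ) with hW
  have hWf : IsFiniteMeasure W := isFiniteMeasure_withDensity
    (by have : Integrable (fun v => f v - L) ν := hfi.sub (integrable_const L)
        exact this.2.ne)
  set σ := W + Q with hσd
  have hσ : σ (ball 0 1) = 0 := by
    rw [hσd, Measure.add_apply, add_eq_zero]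
    refine ⟨withDensity_absolutelyContinuous _ _ hν, ?_⟩
    exact le_antisymm ((Measure.singularPart_le P ν _).trans hP.le) zero_le
  have h' : Tendsto (fun s => σ (closedBall z s) / ν (closedBall z s)) (nhdsWithin 0 (Ioi 0))
      (nhds 0) := by
    have := m3.add m2
    simp only [Pi.zero_apply, add_zero] at this
    refine this.congr fun s => ?_
    simp only [Function.comp]
    rw [hσd, Measure.add_apply, hW, withDensity_apply _ measurableSet_closedBall, ENNReal.add_div]
  have up : ∀ x : EuclideanSpace ℝ (Fin n), ∫⁻ v, ENNReal.ofReal (K x v) ∂P ≤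
      ENNReal.ofReal L * ∫⁻ v, ENNReal.ofReal (K x v) ∂ν + ∫⁻ v, ENNReal.ofReal (K x v) ∂σ := by
    intro x
    have hle : P ≤ ENNReal.ofReal L • ν + σ := by
      rw [hdec, hσd, ← add_assoc, add_comm Q]
      gcongr
      rw [← withDensity_const, hW, ← withDensity_add_left measurable_const]
      apply withDensity_mono
      filter_upwards [hrn] with v hv
      rw [hv, Pi.add_apply, ← ofReal_norm, ← ENNReal.ofReal_add hL0 (norm_nonneg _)]
      apply ENNReal.ofReal_le_ofReal
      have := Real.le_norm_self (f v - L)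
      linarith
    calc _ ≤ _ := lintegral_mono' hle le_rfl
      _ = _ := by rw [lintegral_add_measure, lintegral_smul_measure, smul_eq_mul]
  have dn : ∀ x : EuclideanSpace ℝ (Fin n), ENNReal.ofReal L * ∫⁻ v, ENNReal.ofReal (K x v) ∂ν ≤
      ∫⁻ v, ENNReal.ofReal (K x v) ∂P + ∫⁻ v, ENNReal.ofReal (K x v) ∂σ := by
    intro x
    have hle : ENNReal.ofReal L • ν ≤ P + σ := by
      have : ENNReal.ofReal L • ν ≤ ν.withDensity (P.rnDeriv ν) + W := by
        rw [← withDensity_const, hW, ← withDensity_add_left (Measure.measurable_rnDeriv P ν)]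
        apply withDensity_mono
        filter_upwards [hrn] with v hv
        rw [Pi.add_apply, hv, ← ofReal_norm, ← ENNReal.ofReal_add ENNReal.toReal_nonneg (norm_nonneg _)]
        apply ENNReal.ofReal_le_ofReal
        have := Real.le_norm_self (L - f v)
        rw [norm_sub_rev] at this
        linarith
      refine this.trans ?_
      apply add_le_add
      · conv_rhs => rw [hdec]
        exact Measure.le_add_left le_rfl
      · exact Measure.le_add_right le_rfl
    calc _ = ∫⁻ v, ENNReal.ofReal (K x v) ∂(ENNReal.ofReal L • ν) := by
            rw [lintegral_smul_measure, smul_eq_mul]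
      _ ≤ _ := lintegral_mono' hle le_rfl
      _ = _ := by rw [lintegral_add_measure]
  rw [Metric.tendsto_nhds]
  intro ε hε
  have kk := key hn hβ hz σ ν hν hσ m1 h' (ENNReal.ofReal (ε / 2)) (by simpa using hε)
    ENNReal.ofReal_ne_top
  filter_upwards [kk, lower hβ hz ν hν m1 1 (by simp), self_mem_nhdsWithin] with x k1 k2 hxs
  have hxn : ‖x‖ < 1 := by simpa using hxs.1
  have tP := K_lint_ne_top P hP hxn
  have tν := K_lint_ne_top ν hν hxn
  have tσ := K_lint_ne_top σ hσ hxn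
  have u1 := up x
  have d1 := dn x
  rw [K_int, K_int]
  set a := ∫⁻ v, ENNReal.ofReal (K x v) ∂P
  set b := ∫⁻ v, ENNReal.ofReal (K x v) ∂ν
  set s := ∫⁻ v, ENNReal.ofReal (K x v) ∂σ
  clear_value a b s
  lift a to NNReal using tP
  lift b to NNReal using tν
  lift s to NNReal using tσ
  have e1 : ENNReal.ofReal L = ((L.toNNReal : NNReal) : ENNReal) := rfl
  have e2 : ENNReal.ofReal (ε / 2) = (((ε / 2).toNNReal : NNReal) : ENNReal) := rfl
  rw [e1] at u1 d1
  rw [e2] at k1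
  norm_cast at u1 d1 k1 k2
  simp only [ENNReal.coe_toReal]
  have u1 : (a : ℝ) ≤ L * b + s := by
    have := NNReal.coe_le_coe.2 u1; push_cast [Real.coe_toNNReal _ hL0] at this; exact this
  have d1 : L * b ≤ (a : ℝ) + s := by
    have := NNReal.coe_le_coe.2 d1; push_cast [Real.coe_toNNReal _ hL0] at this; exact this
  have k1 : (s : ℝ) ≤ ε / 2 * b := by
    have := NNReal.coe_le_coe.2 k1; push_cast [Real.coe_toNNReal _ (half_pos hε).le] at this
    exact this
  have k2 : (1 : ℝ) ≤ b := by exact_mod_cast k2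
  have hb : (0 : ℝ) < b := by linarith
  rw [Real.dist_eq, abs_lt]
  constructor
  · rw [lt_sub_iff_add_lt, lt_div_iff₀ hb]; nlinarith
  · rw [sub_lt_iff_lt_add, div_lt_iff₀ hb]; nlinarith

lemma const_pos {n : ℕ} (hn : n ≠ 0) {α : ℝ} (hα : α ∈ Set.Ioo (0 : ℝ) 2) :
    0 < Real.Gamma (n / 2) * Real.pi ^ (-(n : ℝ) / 2 - 1) * Real.sin (Real.pi * α / 2) := by
  have h1 : 0 < Real.Gamma (n / 2) := Real.Gamma_pos_of_pos (by positivity)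
  have h2 : 0 < Real.sin (Real.pi * α / 2) := by
    have := Real.pi_pos
    apply Real.sin_pos_of_pos_of_lt_pi
    · have := hα.1; positivity
    · nlinarith [hα.2]
  have := Real.pi_pos
  positivity

lemma factor {n : ℕ} {α r : ℝ} (hr : 0 < r) {x v : EuclideanSpace ℝ (Fin n)} (hx : ‖x‖ < r)
    (hv : r < ‖v‖) : stablePoissonKernel n α 0 r x v =
      ((r ^ 2 - ‖x‖ ^ 2) / r ^ 2) ^ (α / 2) * (stablePoissonKernel n α 0 r 0 v * K x v) := by
  unfold stablePoissonKernel K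
  simp only [dist_zero_right, dist_zero_left, norm_zero]
  have hv0 : 0 < ‖v‖ := hr.trans hv
  have e1 : (r ^ 2 - ‖x‖ ^ 2) / (‖v‖ ^ 2 - r ^ 2) =
      ((r ^ 2 - ‖x‖ ^ 2) / r ^ 2) * ((r ^ 2 - 0 ^ 2) / (‖v‖ ^ 2 - r ^ 2)) := by
    field_simp; ring
  have p1 : 0 ≤ r ^ 2 - ‖x‖ ^ 2 := by nlinarith [norm_nonneg x]
  have p2 : 0 ≤ ‖v‖ ^ 2 - r ^ 2 := by nlinarith
  rw [e1, Real.mul_rpow (by positivity) (div_nonneg (by simp; positivity) p2)]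
  rw [Real.rpow_neg dist_nonneg, Real.rpow_neg (norm_nonneg v), Real.rpow_natCast,
    Real.rpow_natCast, div_pow]
  field_simp

lemma poisson_nonneg {n : ℕ} (hn : n ≠ 0) {α r : ℝ} (hα : α ∈ Set.Ioo (0 : ℝ) 2) (hr : 0 < r)
    {v : EuclideanSpace ℝ (Fin n)} (hv : r < ‖v‖) : 0 ≤ stablePoissonKernel n α 0 r 0 v := by
  unfold stablePoissonKernel
  have p2 : 0 ≤ dist v 0 ^ 2 - r ^ 2 := by rw [dist_zero_right]; nlinarith
  have p3 : 0 ≤ r ^ 2 - dist (0 : EuclideanSpace ℝ (Fin n)) 0 ^ 2 := by simp; positivity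
  have := const_pos hn hα
  have := div_nonneg p3 p2
  positivity

lemma poisson_tail {n : ℕ} (hn : n ≠ 0) {α r : ℝ} (hα : α ∈ Set.Ioo (0 : ℝ) 2) (hr : 0 < r)
    (hr1 : r < 1) {v : EuclideanSpace ℝ (Fin n)} (hv : 2 < ‖v‖) :
    stablePoissonKernel n α 0 r 0 v ≤
      (Real.Gamma (n / 2) * Real.pi ^ (-(n : ℝ) / 2 - 1) * Real.sin (Real.pi * α / 2)) *
        (4 ^ (α / 2) * 2 ^ n) * (1 + ‖v‖) ^ (-(n : ℝ) - α) := by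
  have hC := const_pos hn hα
  unfold stablePoissonKernel
  set C := Real.Gamma (n / 2) * Real.pi ^ (-(n : ℝ) / 2 - 1) * Real.sin (Real.pi * α / 2)
  simp only [dist_zero_right, dist_zero_left, norm_zero]
  have hα0 := hα.1
  have hp : 0 < ‖v‖ ^ 2 - r ^ 2 := by nlinarith
  have b1 : ((r ^ 2 - 0 ^ 2) / (‖v‖ ^ 2 - r ^ 2)) ^ (α / 2) ≤ 4 ^ (α / 2) * (1 + ‖v‖) ^ (-α) := by
    have : (4 : ℝ) ^ (α / 2) * (1 + ‖v‖) ^ (-α) = (4 / (1 + ‖v‖) ^ 2) ^ (α / 2) := by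
      rw [Real.div_rpow (by positivity) (by positivity), ← Real.rpow_natCast (1 + ‖v‖) 2,
        ← Real.rpow_mul (by positivity), Real.rpow_neg (by positivity), div_eq_mul_inv]
      congr 3; push_cast; ring
    rw [this]
    apply Real.rpow_le_rpow (div_nonneg (by simp; positivity) hp.le) _ (by positivity)
    rw [div_le_div_iff₀ hp (by positivity)]
    have hr2 : r ^ 2 ≤ 1 := by nlinarith
    have h4 : (1 + ‖v‖) ^ 2 ≤ 4 * (‖v‖ ^ 2 - 1) := by nlinarith
    nlinarith [sq_nonneg r, sq_nonneg (1 + ‖v‖)]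
  have b2 : ‖v‖ ^ (-(n : ℝ)) ≤ 2 ^ n * (1 + ‖v‖) ^ (-(n : ℝ)) := by
    have hv0 : 0 < ‖v‖ := by linarith
    rw [Real.rpow_neg hv0.le, Real.rpow_neg (by positivity), Real.rpow_natCast, Real.rpow_natCast,
      ← div_eq_mul_inv, ← div_pow, ← inv_pow]
    apply pow_le_pow_left₀ (by positivity)
    rw [inv_eq_one_div, div_le_div_iff₀ hv0 (by positivity)]
    linarith
  calc _ ≤ C * (4 ^ (α / 2) * (1 + ‖v‖) ^ (-α)) * (2 ^ n * (1 + ‖v‖) ^ (-(n : ℝ))) := by gcongr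
    _ = C * (4 ^ (α / 2) * 2 ^ n) * ((1 + ‖v‖) ^ (-(n : ℝ)) * (1 + ‖v‖) ^ (-α)) := by ring
    _ = _ := by rw [← Real.rpow_add (by positivity), sub_eq_add_neg]

lemma approx {n : ℕ} (hn : n ≠ 0) {α : ℝ} (hα : α ∈ Set.Ioo (0 : ℝ) 2)
    {u : EuclideanSpace ℝ (Fin n) → ℝ}
    (hu : IsAlphaHarmonic n α (ball (0 : EuclideanSpace ℝ (Fin n)) 1) u) :
    ∃ T : Measure (EuclideanSpace ℝ (Fin n)), IsFiniteMeasure T ∧ ∀ r : ℝ, 0 < r → r < 1 →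
      ∃ m : Measure (EuclideanSpace ℝ (Fin n)), m univ = ENNReal.ofReal (u 0) ∧
        m (closedBall 0 r) = 0 ∧
        (∀ A, MeasurableSet A → A ⊆ {v | 2 < ‖v‖} → m A ≤ T A) ∧
        ∀ x, ‖x‖ < r → u x = ((r ^ 2 - ‖x‖ ^ 2) / r ^ 2) ^ (α / 2) * ∫ v, K x v ∂m := by
  obtain ⟨hum, hu0, hui, huh⟩ := hu
  set C := (Real.Gamma (n / 2) * Real.pi ^ (-(n : ℝ) / 2 - 1) * Real.sin (Real.pi * α / 2)) *
        (4 ^ (α / 2) * 2 ^ n) with hC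
  refine ⟨volume.withDensity (fun v => ENNReal.ofReal (C * (u v * (1 + ‖v‖) ^ (-(n : ℝ) - α)))),
    ?_, ?_⟩
  · exact isFiniteMeasure_withDensity_ofReal (hui.const_mul C).2
  intro r hr hr1
  set S := {v : EuclideanSpace ℝ (Fin n) | r < dist v 0} with hS
  have hSm : MeasurableSet S := measurableSet_lt measurable_const (by fun_prop)
  set g : EuclideanSpace ℝ (Fin n) → ℝ := fun v => stablePoissonKernel n α 0 r 0 v * u v with hg
  have hgm : Measurable g := by
    rw [hg]; unfold stablePoissonKernel
    fun_prop
  have hcl : closedBall (0 : EuclideanSpace ℝ (Fin n)) r ⊆ ball 0 1 := closedBall_subset_ball hr1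
  have hg0 : ∀ v ∈ S, 0 ≤ g v := by
    intro v hv
    have : r < ‖v‖ := by simpa [hS] using hv
    exact mul_nonneg (poisson_nonneg hn hα hr this) (hu0 v)
  obtain ⟨i0, e0⟩ := huh 0 r hr hcl 0 (mem_ball_self hr)
  refine ⟨(volume.restrict S).withDensity (fun v => ENNReal.ofReal (g v)), ?_, ?_, ?_, ?_⟩
  · rw [withDensity_apply _ MeasurableSet.univ, Measure.restrict_univ, ← e0,
      ofReal_integral_eq_lintegral_ofReal i0]
    filter_upwards [ae_restrict_mem hSm] with v hv using hg0 v hv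
  · apply withDensity_absolutelyContinuous
    rw [Measure.restrict_apply measurableSet_closedBall]
    convert measure_empty (μ := volume)
    ext v; simp [hS]
  · intro A hA hA2
    rw [withDensity_apply _ hA, withDensity_apply _ hA, Measure.restrict_restrict hA]
    refine le_trans (lintegral_mono_set inter_subset_left) ?_
    apply setLIntegral_mono' hA
    intro v hv
    apply ENNReal.ofReal_le_ofReal
    have := poisson_tail hn hα hr hr1 (v := v) (hA2 hv)
    calc g v ≤ _ := mul_le_mul_of_nonneg_right this (hu0 v)
      _ = _ := by rw [hC]; ring
  · intro x hx
    obtain ⟨i1, e1⟩ := huh 0 r hr hcl x (by simpa using hx)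
    rw [← e1, integral_withDensity_eq_integral_toReal_smul (by fun_prop) (by simp),
      ← integral_const_mul]
    apply setIntegral_congr_fun hSm
    intro v hv
    have hv' : r < ‖v‖ := by simpa [hS] using hv
    simp only [ENNReal.toReal_ofReal (hg0 v hv), smul_eq_mul]
    rw [factor hr hx hv', hg]
    ring

lemma trunc_K {n : ℕ} {x : EuclideanSpace ℝ (Fin n)} (hx : ‖x‖ < 1) :
    ∃ g : BoundedContinuousFunction (EuclideanSpace ℝ (Fin n)) ℝ,
      ∀ v, (1 + ‖x‖) / 2 ≤ ‖v‖ → g v = K x v := by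
  set d := (1 - ‖x‖) / 2 with hd
  have hd0 : 0 < d := by rw [hd]; linarith
  have hp : ∀ v, 0 < max d (dist x v) := fun v => lt_max_of_lt_left hd0
  have hc : Continuous fun v : EuclideanSpace ℝ (Fin n) => (‖v‖ / max d (dist x v)) ^ n := by
    refine Continuous.pow (Continuous.div (by fun_prop) (by fun_prop) fun v => (hp v).ne') _
  refine ⟨BoundedContinuousFunction.ofNormedAddCommGroup _ hc ((1 + 1 / d) ^ n) ?_, ?_⟩
  · intro v
    have := hp v
    rw [Real.norm_of_nonneg (by positivity)]
    apply pow_le_pow_left₀ (by positivity)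
    have h1 : ‖v‖ ≤ dist x v + 1 := by
      rw [dist_comm, dist_eq_norm]
      have := norm_sub_norm_le v x
      linarith
    rw [div_le_iff₀ (hp v)]
    have h2 : 1 ≤ 1 / d * max d (dist x v) := by
      rw [one_div, inv_mul_eq_div, le_div_iff₀ hd0]; linarith [le_max_left d (dist x v)]
    linarith [le_max_right d (dist x v)]
  · intro v hv
    have : d ≤ dist x v := by
      rw [dist_comm, dist_eq_norm]
      have := norm_sub_norm_le v x
      rw [hd]; linarith
    simp [K, max_eq_right this]

lemma represent {n : ℕ} (hn : n ≠ 0) {α : ℝ} (hα : α ∈ Set.Ioo (0 : ℝ) 2)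
    {u : EuclideanSpace ℝ (Fin n) → ℝ}
    (hu : IsAlphaHarmonic n α (ball (0 : EuclideanSpace ℝ (Fin n)) 1) u) :
    ∃ P : Measure (EuclideanSpace ℝ (Fin n)), IsFiniteMeasure P ∧ P (ball 0 1) = 0 ∧
      ∀ x, ‖x‖ < 1 → u x = (1 - ‖x‖ ^ 2) ^ (α / 2) * ∫ v, K x v ∂P := by
  obtain ⟨T, hT, happ⟩ := approx hn hα hu
  have hr : ∀ k : ℕ, (0 : ℝ) < 1 - 1 / (k + 2) ∧ (1 : ℝ) - 1 / (k + 2) < 1 := by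
    intro k
    have : (0 : ℝ) < 1 / (k + 2) := by positivity
    have : (1 : ℝ) / (k + 2) < 1 := by
      rw [div_lt_one (by positivity)]
      have : (0 : ℝ) ≤ k := by positivity
      linarith
    constructor <;> linarith
  set r : ℕ → ℝ := fun k => 1 - 1 / (k + 2) with hrd
  have hrlim : Tendsto r atTop (nhds 1) := by
    have : Tendsto (fun k : ℕ => (1 : ℝ) / ((k : ℝ) + 2)) atTop (nhds 0) := by
      have := (tendsto_one_div_add_atTop_nhds_zero_nat (𝕜 := ℝ)).comp (tendsto_add_atTop_nat 1)
      refine this.congr fun k => ?_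
      simp only [Function.comp]; push_cast; ring
    simpa [hrd] using this.const_sub 1
  choose m hm1 hm2 hm3 hm4 using fun k => happ (r k) (hr k).1 (hr k).2
  have hexr : ∀ s < (1 : ℝ), ∃ k, s < r k := fun s hs => (hrlim.eventually (lt_mem_nhds hs)).exists
  rcases (hu.2.1 0).eq_or_lt with h0 | h0
  · refine ⟨0, inferInstance, by simp, fun x hx => ?_⟩
    obtain ⟨k, hk⟩ := hexr _ hx
    have : m k = 0 := by
      rw [← Measure.measure_univ_eq_zero, hm1, ← h0]; simp
    rw [hm4 k x hk, this]; simp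
  set c : ENNReal := ENNReal.ofReal (u 0) with hc
  have hc0 : c ≠ 0 := by simpa [hc] using h0
  have hct : c ≠ ⊤ := ENNReal.ofReal_ne_top
  have hpr : ∀ k, IsProbabilityMeasure (c⁻¹ • m k) := fun k => ⟨by
    rw [Measure.smul_apply, hm1, smul_eq_mul, ENNReal.inv_mul_cancel hc0 hct]⟩
  set p : ℕ → ProbabilityMeasure (EuclideanSpace ℝ (Fin n)) := fun k => ⟨c⁻¹ • m k, hpr k⟩ with hp
  have hpk : ∀ k, (p k : Measure (EuclideanSpace ℝ (Fin n))) = c⁻¹ • m k := fun k => rfl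
  have hmk : ∀ k, m k = c • (p k : Measure (EuclideanSpace ℝ (Fin n))) := fun k => by
    rw [hpk, smul_smul, ENNReal.mul_inv_cancel hc0 hct, one_smul]
  have htight : IsTightMeasureSet
      {((μ : ProbabilityMeasure (EuclideanSpace ℝ (Fin n))) : Measure (EuclideanSpace ℝ (Fin n))) |
        μ ∈ range p} := by
    have hTf : IsFiniteMeasure (c⁻¹ • T) := Measure.smul_finite T (ENNReal.inv_ne_top.2 hc0)
    have hTt := isTightMeasureSet_iff_exists_isCompact_measure_compl_le.1
      (isTightMeasureSet_singleton (μ := c⁻¹ • T))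
    rw [isTightMeasureSet_iff_exists_isCompact_measure_compl_le]
    intro ε hε
    obtain ⟨K0, hK0, hK1⟩ := hTt ε hε
    refine ⟨K0 ∪ closedBall 0 2, hK0.union (isCompact_closedBall 0 2), ?_⟩
    rintro _ ⟨_, ⟨k, rfl⟩, rfl⟩
    refine le_trans ?_ (hK1 _ rfl)
    rw [hpk, Measure.smul_apply, Measure.smul_apply]
    have h1 : m k (K0 ∪ closedBall 0 2)ᶜ ≤ T (K0 ∪ closedBall 0 2)ᶜ := by
      apply hm3
      · exact (hK0.measurableSet.union measurableSet_closedBall).compl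
      · intro v hv
        simp only [compl_union, mem_inter_iff, mem_compl_iff, mem_closedBall, dist_zero_right,
          not_le] at hv
        exact hv.2
    have h2 : T (K0 ∪ closedBall 0 2)ᶜ ≤ T K0ᶜ :=
      measure_mono (compl_subset_compl.2 subset_union_left)
    simp only [smul_eq_mul]
    exact mul_le_mul_right (h1.trans h2) _
  have hcomp := isCompact_closure_of_isTightMeasureSet htight
  set U : Ultrafilter ℕ := hyperfilter ℕ with hU
  have hUle : (U : Filter ℕ) ≤ atTop := by rw [← Nat.cofinite_eq_atTop]; exact hyperfilter_le_cofinite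
  obtain ⟨Q, -, hQ⟩ := hcomp.ultrafilter_le_nhds (U.map p) (by
    rw [le_principal_iff]
    exact Filter.mem_map.2 (Filter.univ_mem' fun k => subset_closure ⟨k, rfl⟩))
  have hQ : Tendsto p U (nhds Q) := hQ
  have hball : ∀ s < (1 : ℝ), (Q : Measure (EuclideanSpace ℝ (Fin n))) (ball 0 s) = 0 := by
    intro s hs
    have h1 := ProbabilityMeasure.le_liminf_measure_open_of_tendsto hQ
      (isOpen_ball (x := (0 : EuclideanSpace ℝ (Fin n))) (ε := s))
    have h2 : (fun k => (p k : Measure (EuclideanSpace ℝ (Fin n))) (ball 0 s)) =ᶠ[U]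
        fun _ => 0 := by
      filter_upwards [hUle (hrlim.eventually (lt_mem_nhds hs))] with k hk
      have hk : s < r k := hk
      rw [hpk, Measure.smul_apply, measure_mono_null (ball_subset_closedBall.trans
        (closedBall_subset_closedBall hk.le)) (hm2 k)]
      simp
    rw [liminf_congr h2, liminf_const] at h1
    exact le_antisymm h1 zero_le
  have hQ1 : (Q : Measure (EuclideanSpace ℝ (Fin n))) (ball 0 1) = 0 := by
    have : ball (0 : EuclideanSpace ℝ (Fin n)) 1 = ⋃ k, ball 0 (r k) := by
      ext v
      simp only [mem_ball, dist_zero_right, mem_iUnion]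
      exact ⟨fun h => hexr _ h, fun ⟨k, hk⟩ => hk.trans (hr k).2⟩
    rw [this, measure_iUnion_null_iff]
    exact fun k => hball _ (hr k).2
  refine ⟨c • (Q : Measure (EuclideanSpace ℝ (Fin n))), Measure.smul_finite _ hct, ?_, ?_⟩
  · rw [Measure.smul_apply, hQ1]; simp
  intro x hx
  obtain ⟨g, hg⟩ := trunc_K hx
  have hlim := (ProbabilityMeasure.tendsto_iff_forall_integral_tendsto.1 hQ) g
  have hrU : Tendsto r U (nhds 1) := hrlim.mono_left hUle
  have hs : (1 + ‖x‖) / 2 < 1 := by linarith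
  have hgQ : ∫ v, g v ∂(Q : Measure (EuclideanSpace ℝ (Fin n))) =
      ∫ v, K x v ∂(Q : Measure (EuclideanSpace ℝ (Fin n))) := by
    apply integral_congr_ae
    have := hball _ hs
    have h' : ∀ᵐ v ∂(Q : Measure (EuclideanSpace ℝ (Fin n))), (1 + ‖x‖) / 2 ≤ ‖v‖ := by
      rw [ae_iff]; convert this using 2; ext v; simp
    filter_upwards [h'] with v hv using hg v hv
  have hux : ∀ᶠ k in (U : Filter ℕ), ((r k ^ 2 - ‖x‖ ^ 2) / r k ^ 2) ^ (α / 2) *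
      (u 0 * ∫ v, g v ∂(p k : Measure (EuclideanSpace ℝ (Fin n)))) = u x := by
    filter_upwards [hUle (hrlim.eventually (lt_mem_nhds hs))] with k hk
    have hk : (1 + ‖x‖) / 2 < r k := hk
    rw [hm4 k x (by linarith), hmk, integral_smul_measure, hc, ENNReal.toReal_ofReal h0.le,
      smul_eq_mul]
    congr 2
    apply integral_congr_ae
    have h' : ∀ᵐ v ∂(p k : Measure (EuclideanSpace ℝ (Fin n))), (1 + ‖x‖) / 2 ≤ ‖v‖ := by
      rw [ae_iff, hpk, Measure.smul_apply, measure_mono_null _ (hm2 k)]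
      · simp
      · intro v hv
        simp only [not_le, mem_ofPred_eq] at hv
        simp only [mem_closedBall, dist_zero_right]
        linarith
    filter_upwards [h'] with v hv using hg v hv
  have hfac : Tendsto (fun k => ((r k ^ 2 - ‖x‖ ^ 2) / r k ^ 2) ^ (α / 2)) U
      (nhds ((1 - ‖x‖ ^ 2) ^ (α / 2))) := by
    have h1 : Tendsto (fun k => (r k ^ 2 - ‖x‖ ^ 2) / r k ^ 2) U
        (nhds ((1 ^ 2 - ‖x‖ ^ 2) / 1 ^ 2)) :=
      ((hrU.pow 2).sub_const _).div (hrU.pow 2) (by norm_num)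
    have h2 := h1.rpow_const (p := α / 2) (Or.inr (by have := hα.1; positivity))
    simpa using h2
  have hfin := hfac.mul (hlim.const_mul (u 0))
  have := tendsto_nhds_unique (tendsto_const_nhds.congr' (hux.mono fun k hk => hk.symm)) hfin
  rw [this, hgQ, integral_smul_measure, hc, ENNReal.toReal_ofReal h0.le, smul_eq_mul]

end RF

/-- Relative Fatou theorem in the unit ball: let `ν` be a nonzero
finite Borel measure on the unit sphere `S`, `h(x) = ∫_S M(x,w) ν(dw)`. For every
nonnegative α-harmonic `u` in `B`, for ν-a.e. `z ∈ S` and every `β > 1`, the limit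
of `u(x)/h(x)` as `x → z`, `x ∈ A^β_z`, exists and is finite. -/
theorem stmt12 (n : ℕ) (hn : 2 ≤ n) (α : ℝ) (hα : α ∈ Set.Ioo (0 : ℝ) 2)
    (ν : Measure (EuclideanSpace ℝ (Fin n))) [IsFiniteMeasure ν] (hν : ν ≠ 0)
    (hνS : ν (sphere (0 : EuclideanSpace ℝ (Fin n)) 1)ᶜ = 0)
    (u : EuclideanSpace ℝ (Fin n) → ℝ)
    (hu : IsAlphaHarmonic n α (ball (0 : EuclideanSpace ℝ (Fin n)) 1) u) :
    ∀ᵐ z ∂ν, ∀ β : ℝ, 1 < β → ∃ L : ℝ,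
      Tendsto (fun x => u x / ∫ w, martinKernel n α x w ∂ν)
        (nhdsWithin z (stolzSet n β z)) (nhds L) := by
  have hn0 : n ≠ 0 := by omega
  obtain ⟨P, hPf, hPb, hPu⟩ := RF.represent hn0 hα hu
  have hsph : ∀ᵐ z ∂ν, ‖z‖ = 1 := by
    rw [ae_iff]; convert hνS using 2; ext v; simp
  filter_upwards [RF.ratio hn0 P ν hνS hPb] with z hz β hβ
  obtain ⟨L, hL⟩ := hz β hβ
  refine ⟨L, hL.congr' ?_⟩
  filter_upwards [self_mem_nhdsWithin] with x hx
  have hxn : ‖x‖ < 1 := by simpa using hx.1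
  have hM : ∫ w, martinKernel n α x w ∂ν = (1 - ‖x‖ ^ 2) ^ (α / 2) * ∫ v, RF.K x v ∂ν := by
    rw [← integral_const_mul]
    apply integral_congr_ae
    filter_upwards [hsph] with w hw
    simp only [martinKernel, RF.K, hw]
    rw [Real.rpow_neg dist_nonneg, Real.rpow_natCast, one_div, inv_pow]
  have hpos : 0 < (1 - ‖x‖ ^ 2) ^ (α / 2) :=
    Real.rpow_pos_of_pos (by nlinarith [norm_nonneg x]) _
  rw [hM, hPu x hxn, mul_div_mul_left _ _ hpos.ne']
end

section
/- Let n ≥ 2, α ∈ (0,2), let ν be a nonzero finite Borel measure on the unit sphere S ⊆ ℝⁿ, and define h(x) := ∫_S M(x,w) ν(dw) for x in the open unit ball B. Let v be α-harmonic in B and positive on B, and suppose that for ν-almost every z ∈ S and every β > 1 the limit of v(x)/h(x) as x → z with x ∈ A^β_z exists and is nonzero. Then for every function u that is α-harmonic in B and positive on B, for ν-almost every z ∈ S and every β > 1, the limit of u(x)/v(x) as x → z with x ∈ A^β_z exists. -/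
open Metric Set MeasureTheory Filter

section aux
open scoped ENNReal NNReal Topology BoundedContinuousFunction

noncomputable def krn (n : ℕ) (x v : EuclideanSpace ℝ (Fin n)) : ℝ≥0∞ :=
  ENNReal.ofReal ((dist x v ^ n)⁻¹)

lemma krn_measurable (n : ℕ) (x : EuclideanSpace ℝ (Fin n)) : Measurable (krn n x) := by
  unfold krn; fun_prop

noncomputable def gk (n : ℕ) (δ : ℝ) (z v : EuclideanSpace ℝ (Fin n)) : ℝ≥0∞ :=
  ENNReal.ofReal ((max δ (dist v z) ^ n)⁻¹)

lemma gk_measurable (n : ℕ) (δ : ℝ) (z : EuclideanSpace ℝ (Fin n)) : Measurable (gk n δ z) := by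
  unfold gk; fun_prop

lemma layer (n : ℕ) (hn : n ≠ 0) (σ ν : Measure (EuclideanSpace ℝ (Fin n)))
    (z : EuclideanSpace ℝ (Fin n)) (r0 δ : ℝ) (hr0 : 0 < r0) (hδ : 0 < δ) (ε : ℝ≥0∞) (hε : ε ≠ ∞)
    (h : ∀ r, 0 < r → r ≤ r0 → σ (closedBall z r) ≤ ε * ν (closedBall z r)) :
    ∫⁻ v in closedBall z r0, gk n δ z v ∂σ ≤ ε * ∫⁻ v, gk n δ z v ∂ν := by
  unfold gk
  rw [lintegral_eq_lintegral_meas_le _ (Eventually.of_forall fun v => by positivity)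
      (by fun_prop),
    lintegral_eq_lintegral_meas_le ν (Eventually.of_forall fun v => by positivity)
      (by fun_prop), ← lintegral_const_mul' _ _ hε]
  refine setLIntegral_mono' measurableSet_Ioi fun t ht => ?_
  have ht : 0 < t := ht
  set s : ℝ := (t⁻¹) ^ ((n : ℝ)⁻¹) with hs
  have hs0 : 0 < s := by positivity
  have hsn : s ^ n = t⁻¹ := Real.rpow_inv_natCast_pow (by positivity) hn
  have key : ∀ v, (t ≤ (max δ (dist v z) ^ n)⁻¹) ↔ (δ ≤ s ∧ v ∈ closedBall z s) := by
    intro v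
    have hm : 0 < max δ (dist v z) := lt_max_of_lt_left hδ
    rw [le_inv_comm₀ ht (by positivity), ← hsn, pow_le_pow_iff_left₀ hm.le hs0.le hn, max_le_iff,
      mem_closedBall]
  simp only [key]
  rw [Measure.restrict_apply' measurableSet_closedBall]
  by_cases hds : δ ≤ s
  · simp only [hds, true_and, Set.ofPred_mem_eq]
    rcases le_total s r0 with h1 | h1
    · rw [inter_eq_left.2 (closedBall_subset_closedBall h1)]
      exact h s hs0 h1
    · rw [inter_eq_right.2 (closedBall_subset_closedBall h1)]
      refine (h r0 hr0 le_rfl).trans ?_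
      gcongr
  · simp [hds]

lemma krn_le (n : ℕ) (β : ℝ) (hβ : 1 < β) (x z v : EuclideanSpace ℝ (Fin n))
    (hx : x ∈ stolzSet n β z) (hxz : 0 < dist x z) (hv : 1 ≤ ‖v‖) :
    krn n x v ≤ ENNReal.ofReal ((1 + β) ^ n) * gk n (dist x z) z v := by
  obtain ⟨h1, h2, h3⟩ := hx
  have h1' : ‖x‖ < 1 := by simpa using h1
  have a1 : 1 - ‖x‖ ≤ dist x v := by
    have := norm_sub_norm_le v x
    rw [dist_comm, dist_eq_norm]; linarith
  have a0 : 0 < dist x v := by linarith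
  have a2 : dist x z ≤ (1 + β) * dist x v := by nlinarith
  have a3 : dist v z ≤ (1 + β) * dist x v := by
    have := dist_triangle_left v z x
    nlinarith
  unfold krn gk
  rw [← ENNReal.ofReal_mul (by positivity)]
  apply ENNReal.ofReal_le_ofReal
  have hm : 0 < max (dist x z) (dist v z) := lt_max_of_lt_left hxz
  rw [← div_eq_mul_inv, inv_eq_one_div, div_le_div_iff₀ (by positivity) (by positivity), one_mul,
    ← mul_pow]
  gcongr
  exact max_le a2 a3

lemma le_krn (n : ℕ) (x z v : EuclideanSpace ℝ (Fin n))
    (hxz : 0 < dist x z) (hxv : 0 < dist x v) :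
    gk n (dist x z) z v ≤ ENNReal.ofReal (2 ^ n) * krn n x v := by
  have a3 : dist x v ≤ 2 * max (dist x z) (dist v z) := by
    have := dist_triangle_right x v z
    have := le_max_left (dist x z) (dist v z)
    have := le_max_right (dist x z) (dist v z)
    linarith
  unfold krn gk
  rw [← ENNReal.ofReal_mul (by positivity)]
  apply ENNReal.ofReal_le_ofReal
  have hm : 0 < max (dist x z) (dist v z) := lt_max_of_lt_left hxz
  rw [← div_eq_mul_inv, inv_eq_one_div, div_le_div_iff₀ (by positivity) (by positivity), one_mul,
    ← mul_pow]
  gcongr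

lemma krn_le_zero (n : ℕ) (x v : EuclideanSpace ℝ (Fin n)) (hx : ‖x‖ < 1) (hv : 1 ≤ ‖v‖) :
    krn n x v ≤ ENNReal.ofReal (((1 - ‖x‖) ^ n)⁻¹) * krn n 0 v := by
  unfold krn
  rw [← ENNReal.ofReal_mul (by have : 0 < 1 - ‖x‖ := by linarith
                               positivity)]
  apply ENNReal.ofReal_le_ofReal
  have h0 : 0 < 1 - ‖x‖ := by linarith
  have hv0 : 0 < ‖v‖ := by linarith
  rw [dist_zero_left, ← mul_inv, ← mul_pow]
  have : (1 - ‖x‖) * ‖v‖ ≤ dist x v := by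
    have := norm_sub_norm_le v x
    rw [dist_comm, dist_eq_norm]
    nlinarith [norm_nonneg x]
  gcongr

lemma gk_le_far (n : ℕ) (δ r0 : ℝ) (hr0 : 0 < r0) (z v : EuclideanSpace ℝ (Fin n))
    (hz : ‖z‖ = 1) (hv : 1 ≤ ‖v‖) (hvz : r0 ≤ dist v z) :
    gk n δ z v ≤ ENNReal.ofReal ((1 + r0⁻¹) ^ n) * krn n 0 v := by
  unfold krn gk
  rw [← ENNReal.ofReal_mul (by positivity)]
  apply ENNReal.ofReal_le_ofReal
  have hv0 : 0 < ‖v‖ := by linarith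
  have hm : 0 < max δ (dist v z) := lt_max_of_lt_right (hr0.trans_le hvz)
  rw [dist_zero_left, ← div_eq_mul_inv, inv_eq_one_div,
    div_le_div_iff₀ (by positivity) (by positivity), one_mul, ← mul_pow]
  have h1 : ‖v‖ ≤ dist v z + 1 := by
    have := norm_sub_norm_le v z
    rw [dist_eq_norm]; linarith
  have h2 : 1 ≤ r0⁻¹ * dist v z := by
    rw [inv_mul_eq_div, le_div_iff₀ hr0]; linarith
  have h3 : ‖v‖ ≤ (1 + r0⁻¹) * dist v z := by linarith
  gcongr
  refine h3.trans ?_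
  gcongr
  exact le_max_right _ _


lemma stolz_dist (n : ℕ) (β : ℝ) (z : EuclideanSpace ℝ (Fin n)) (hz : ‖z‖ = 1) :
    Tendsto (fun x => dist x z) (𝓝[stolzSet n β z] z) (𝓝[>] 0) := by
  refine tendsto_nhdsWithin_iff.2 ⟨?_, ?_⟩
  · have : Tendsto (fun x => dist x z) (𝓝 z) (𝓝 (dist z z)) := by
      apply Continuous.tendsto; fun_prop
    rw [dist_self] at this
    exact this.mono_left nhdsWithin_le_nhds
  · filter_upwards [self_mem_nhdsWithin] with x hx
    have h1 : ‖x‖ < 1 := by simpa using hx.1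
    rw [mem_Ioi, dist_pos]
    rintro rfl
    linarith

lemma ev_le (n : ℕ) (σ ν : Measure (EuclideanSpace ℝ (Fin n))) [IsFiniteMeasure ν]
    (z : EuclideanSpace ℝ (Fin n))
    (h : Tendsto (fun r => σ (closedBall z r) / ν (closedBall z r)) (𝓝[>] 0) (𝓝 0))
    (ε : ℝ≥0∞) (h0 : ε ≠ 0) (h1 : ε ≠ ∞) :
    ∀ᶠ r in 𝓝[>] (0 : ℝ), σ (closedBall z r) ≤ ε * ν (closedBall z r) := by
  filter_upwards [ENNReal.tendsto_nhds_zero.1 h ε (pos_iff_ne_zero.2 h0)] with r hr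
  exact (ENNReal.div_le_iff_le_mul (Or.inr h1) (Or.inr h0)).1 hr

lemma ae_norm (n : ℕ) (σ : Measure (EuclideanSpace ℝ (Fin n)))
    (h : σ (ball 0 1) = 0) : ∀ᵐ v ∂σ, 1 ≤ ‖v‖ := by
  have : ∀ᵐ v ∂σ, v ∉ ball (0 : EuclideanSpace ℝ (Fin n)) 1 := measure_eq_zero_iff_ae_notMem.1 h
  filter_upwards [this] with v hv
  simpa using hv

lemma dist_pos_of (n : ℕ) (x v : EuclideanSpace ℝ (Fin n)) (hx : ‖x‖ < 1) (hv : 1 ≤ ‖v‖) :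
    0 < dist x v := by
  rw [dist_pos]; rintro rfl; linarith

lemma gk_int_le (n : ℕ) (β : ℝ) (ν : Measure (EuclideanSpace ℝ (Fin n)))
    (hνb : ν (ball 0 1) = 0) (z x : EuclideanSpace ℝ (Fin n))
    (hx : x ∈ stolzSet n β z) (hxz : 0 < dist x z) :
    ∫⁻ v, gk n (dist x z) z v ∂ν ≤ ENNReal.ofReal (2 ^ n) * ∫⁻ v, krn n x v ∂ν := by
  rw [← lintegral_const_mul' _ _ ENNReal.ofReal_ne_top]
  refine lintegral_mono_ae ?_
  filter_upwards [ae_norm n ν hνb] with v hv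
  exact le_krn n x z v hxz (dist_pos_of n x v (by simpa using hx.1) hv)

lemma b_top (n : ℕ) (ν : Measure (EuclideanSpace ℝ (Fin n))) [IsFiniteMeasure ν]
    (hνb : ν (ball 0 1) = 0) (z : EuclideanSpace ℝ (Fin n)) (hz : ‖z‖ = 1)
    (h : Tendsto (fun r => volume (closedBall z r) / ν (closedBall z r)) (𝓝[>] 0) (𝓝 0))
    (β : ℝ) :
    Tendsto (fun x => ∫⁻ v, krn n x v ∂ν) (𝓝[stolzSet n β z] z) (𝓝 ∞) := by
  rw [ENNReal.tendsto_nhds_top_iff_nnreal]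
  intro N
  set c : ℝ≥0∞ := volume (ball (0 : EuclideanSpace ℝ (Fin n)) 1) with hc
  have hc0 : c ≠ 0 := (measure_ball_pos _ _ one_pos).ne'
  have hct : c ≠ ∞ := measure_ball_lt_top.ne
  set A : ℝ≥0∞ := ENNReal.ofReal (2 ^ n) with hA
  have hA0 : A ≠ 0 := by simp [hA]
  have hAt : A ≠ ∞ := ENNReal.ofReal_ne_top
  have hN0 : (A * (N + 1 : ℝ≥0∞)) ≠ 0 := by simp [hA0]
  have hNt : (A * (N + 1 : ℝ≥0∞)) ≠ ∞ := by finiteness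
  have h1 := ev_le n volume ν z h (c * (A * (N + 1))⁻¹) (by simp [hc0, hAt, ENNReal.mul_eq_top])
    (ENNReal.mul_ne_top hct (ENNReal.inv_ne_top.2 hN0))
  filter_upwards [(stolz_dist n β z hz).eventually h1,
    (stolz_dist n β z hz).eventually self_mem_nhdsWithin, self_mem_nhdsWithin] with x hx hxz hxs
  have hxz : 0 < dist x z := hxz
  have hg := gk_int_le n β ν hνb z x hxs hxz
  set δ := dist x z
  rw [Measure.addHaar_closedBall _ _ hxz.le, finrank_euclideanSpace_fin, ← hc] at hx
  have hx2 : (A * (N + 1)) * ENNReal.ofReal (δ ^ n) ≤ ν (closedBall z δ) := by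
    have : c * ((A * (N + 1)) * ENNReal.ofReal (δ ^ n)) ≤ c * ν (closedBall z δ) := by
      calc c * ((A * (N + 1)) * ENNReal.ofReal (δ ^ n))
          = (A * (N + 1)) * (ENNReal.ofReal (δ ^ n) * c) := by ring
        _ ≤ (A * (N + 1)) * (c * (A * (N + 1))⁻¹ * ν (closedBall z δ)) := by gcongr
        _ = ((A * (N + 1)) * (A * (N + 1))⁻¹) * (c * ν (closedBall z δ)) := by ring
        _ = _ := by rw [ENNReal.mul_inv_cancel hN0 hNt, one_mul]
    exact (ENNReal.mul_le_mul_iff_right hc0 hct).1 this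
  have hd0 : ENNReal.ofReal (δ ^ n) ≠ 0 := by simp; positivity
  have h3 : (ENNReal.ofReal (δ ^ n))⁻¹ * ν (closedBall z δ) ≤ ∫⁻ v, gk n δ z v ∂ν := by
    calc (ENNReal.ofReal (δ ^ n))⁻¹ * ν (closedBall z δ)
        = ∫⁻ v in closedBall z δ, (ENNReal.ofReal (δ ^ n))⁻¹ ∂ν := by simp
      _ = ∫⁻ v in closedBall z δ, gk n δ z v ∂ν := by
          refine setLIntegral_congr_fun measurableSet_closedBall fun v hv => ?_
          have hv : dist v z ≤ δ := hv
          simp only [gk, max_eq_left hv]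
          rw [ENNReal.ofReal_inv_of_pos (by positivity)]
      _ ≤ _ := setLIntegral_le_lintegral _ _
  have h4 : A * (N + 1) ≤ A * ∫⁻ v, krn n x v ∂ν := by
    calc A * (N + 1) = (ENNReal.ofReal (δ ^ n))⁻¹ * ((A * (N + 1)) * ENNReal.ofReal (δ ^ n)) := by
          rw [mul_comm (A * (N + 1 : ℝ≥0∞)), ← mul_assoc,
            ENNReal.inv_mul_cancel hd0 ENNReal.ofReal_ne_top, one_mul]
      _ ≤ (ENNReal.ofReal (δ ^ n))⁻¹ * ν (closedBall z δ) := by gcongr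
      _ ≤ _ := h3.trans hg
  have h5 := (ENNReal.mul_le_mul_iff_right hA0 hAt).1 h4
  refine lt_of_lt_of_le ?_ h5
  exact_mod_cast lt_add_one N

lemma fatou_point (n : ℕ) (hn : n ≠ 0) (σ ν : Measure (EuclideanSpace ℝ (Fin n)))
    [IsFiniteMeasure ν] (hσb : σ (ball 0 1) = 0) (hσi : ∫⁻ v, krn n 0 v ∂σ ≠ ∞)
    (hνb : ν (ball 0 1) = 0) (z : EuclideanSpace ℝ (Fin n)) (hz : ‖z‖ = 1)
    (h : Tendsto (fun r => volume (closedBall z r) / ν (closedBall z r)) (𝓝[>] 0) (𝓝 0))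
    (hσ : Tendsto (fun r => σ (closedBall z r) / ν (closedBall z r)) (𝓝[>] 0) (𝓝 0))
    (β : ℝ) (hβ : 1 < β) :
    Tendsto (fun x => (∫⁻ v, krn n x v ∂σ) / ∫⁻ v, krn n x v ∂ν) (𝓝[stolzSet n β z] z) (𝓝 0) := by
  rw [ENNReal.tendsto_nhds_zero]
  intro η hη
  obtain ⟨ε', hε'0, hε'⟩ := ENNReal.lt_iff_exists_nnreal_btwn.1 hη
  set ε : ℝ≥0∞ := (↑ε' : ℝ≥0∞)
  have hε0 : ε ≠ 0 := hε'0.ne'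
  have hεt : ε ≠ ∞ := ENNReal.coe_ne_top
  set A : ℝ≥0∞ := ENNReal.ofReal (2 ^ n) with hA
  have hA0 : A ≠ 0 := by simp [hA]
  have hAt : A ≠ ∞ := ENNReal.ofReal_ne_top
  set D : ℝ≥0∞ := ENNReal.ofReal ((1 + β) ^ n) with hD
  have hD0 : D ≠ 0 := by simp [hD]; positivity
  have hDt : D ≠ ∞ := ENNReal.ofReal_ne_top
  have hDA0 : D * A ≠ 0 := mul_ne_zero hD0 hA0
  have hDAt : D * A ≠ ∞ := ENNReal.mul_ne_top hDt hAt
  set ε1 : ℝ≥0∞ := (ε / 2) * (D * A)⁻¹ with hε1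
  have hε10 : ε1 ≠ 0 := by
    simp only [hε1]
    exact mul_ne_zero (by simp [hε0]) (by simpa using hDAt)
  have hε1t : ε1 ≠ ∞ := ENNReal.mul_ne_top (ENNReal.div_ne_top hεt (by simp))
    (ENNReal.inv_ne_top.2 hDA0)
  obtain ⟨r0, hr0, hr⟩ := mem_nhdsGT_iff_exists_Ioc_subset.1 (ev_le n σ ν z hσ ε1 hε10 hε1t)
  have hr0 : 0 < r0 := hr0
  set T : ℝ≥0∞ := D * (ENNReal.ofReal ((1 + r0⁻¹) ^ n) * ∫⁻ v, krn n 0 v ∂σ) with hT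
  have hTt : T ≠ ∞ := by finiteness
  have hb := b_top n ν hνb z hz h β
  have hTb : Tendsto (fun x => T / ∫⁻ v, krn n x v ∂ν) (𝓝[stolzSet n β z] z) (𝓝 0) := by
    have := ENNReal.Tendsto.const_div (a := T) hb (Or.inr hTt)
    simpa using this
  have hTe := ENNReal.tendsto_nhds_zero.1 hTb (ε / 2) (pos_iff_ne_zero.2 (by simp [hε0]))
  filter_upwards [hTe, (stolz_dist n β z hz).eventually self_mem_nhdsWithin,
    self_mem_nhdsWithin] with x hx hxz hxs
  have hxz : 0 < dist x z := hxz
  have hg := gk_int_le n β ν hνb z x hxs hxz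
  have hl := layer n hn σ ν z r0 (dist x z) hr0 hxz ε1 hε1t (fun r h1 h2 => hr ⟨h1, h2⟩)
  have hfar : ∫⁻ v in (closedBall z r0)ᶜ, gk n (dist x z) z v ∂σ ≤
      ENNReal.ofReal ((1 + r0⁻¹) ^ n) * ∫⁻ v, krn n 0 v ∂σ := by
    rw [← lintegral_const_mul' _ _ ENNReal.ofReal_ne_top]
    refine le_trans ?_ (setLIntegral_le_lintegral (closedBall z r0)ᶜ _)
    refine lintegral_mono_ae ?_
    filter_upwards [ae_restrict_of_ae (ae_norm n σ hσb),
      ae_restrict_mem measurableSet_closedBall.compl] with v hv hv2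
    have : r0 < dist v z := by simpa using hv2
    exact gk_le_far n _ r0 hr0 z v hz hv this.le
  set b := ∫⁻ v, krn n x v ∂ν
  have hmain : ∫⁻ v, krn n x v ∂σ ≤ ε / 2 * b + T := by
    calc ∫⁻ v, krn n x v ∂σ ≤ ∫⁻ v, D * gk n (dist x z) z v ∂σ := by
          refine lintegral_mono_ae ?_
          filter_upwards [ae_norm n σ hσb] with v hv
          exact krn_le n β hβ x z v hxs hxz hv
      _ = D * ∫⁻ v, gk n (dist x z) z v ∂σ := lintegral_const_mul' _ _ hDt
      _ = D * (∫⁻ v in closedBall z r0, gk n (dist x z) z v ∂σ +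
            ∫⁻ v in (closedBall z r0)ᶜ, gk n (dist x z) z v ∂σ) := by
          rw [lintegral_add_compl _ measurableSet_closedBall]
      _ ≤ D * (ε1 * (A * b) + ENNReal.ofReal ((1 + r0⁻¹) ^ n) * ∫⁻ v, krn n 0 v ∂σ) := by
          gcongr
          exact hl.trans (by gcongr)
      _ = ε / 2 * b * ((D * A) * (D * A)⁻¹) + T := by rw [hT, hε1]; ring
      _ = _ := by rw [ENNReal.mul_inv_cancel hDA0 hDAt, mul_one]
  calc (∫⁻ v, krn n x v ∂σ) / b ≤ (ε / 2 * b + T) / b := by gcongr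
    _ = ε / 2 * b / b + T / b := ENNReal.add_div
    _ ≤ ε / 2 + ε / 2 := by
        refine add_le_add ?_ hx
        exact ENNReal.div_le_of_le_mul le_rfl
    _ = ε := ENNReal.add_halves ε
    _ ≤ η := hε'.le

lemma locfin (n : ℕ) (l : Measure (EuclideanSpace ℝ (Fin n)))
    (hlb : l (ball 0 1) = 0) (hli : ∫⁻ v, krn n 0 v ∂l ≠ ∞) : IsLocallyFiniteMeasure l := by
  refine ⟨fun x => ⟨ball 0 (‖x‖ + 1), isOpen_ball.mem_nhds (by simp), ?_⟩⟩
  set R := ‖x‖ + 1 with hR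
  have hR0 : 0 < R := by positivity
  have h1 : l (ball 0 R) = ∫⁻ v in ball 0 R, 1 ∂l := by simp
  rw [h1]
  have h2 : ∫⁻ v in ball 0 R, 1 ∂l ≤ ∫⁻ v, ENNReal.ofReal (R ^ n) * krn n 0 v ∂l := by
    refine le_trans ?_ (setLIntegral_le_lintegral (ball 0 R) _)
    refine lintegral_mono_ae ?_
    filter_upwards [ae_restrict_of_ae (ae_norm n l hlb),
      ae_restrict_mem measurableSet_ball] with v hv hv2
    have hv2 : ‖v‖ < R := by simpa using hv2
    have hv0 : 0 < ‖v‖ := by linarith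
    unfold krn
    rw [← ENNReal.ofReal_mul (by positivity), ENNReal.one_le_ofReal, dist_zero_left,
      ← div_eq_mul_inv, one_le_div (by positivity)]
    gcongr
  rw [lintegral_const_mul' _ _ ENNReal.ofReal_ne_top] at h2
  exact h2.trans_lt (ENNReal.mul_lt_top ENNReal.ofReal_lt_top hli.lt_top)

lemma krn_int_ne_top (n : ℕ) (l : Measure (EuclideanSpace ℝ (Fin n)))
    (hlb : l (ball 0 1) = 0) (hli : ∫⁻ v, krn n 0 v ∂l ≠ ∞) (x : EuclideanSpace ℝ (Fin n))
    (hx : ‖x‖ < 1) : ∫⁻ v, krn n x v ∂l ≠ ∞ := by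
  have : ∫⁻ v, krn n x v ∂l ≤ ∫⁻ v, ENNReal.ofReal (((1 - ‖x‖) ^ n)⁻¹) * krn n 0 v ∂l := by
    refine lintegral_mono_ae ?_
    filter_upwards [ae_norm n l hlb] with v hv
    exact krn_le_zero n x v hx hv
  rw [lintegral_const_mul' _ _ ENNReal.ofReal_ne_top] at this
  exact (this.trans_lt (ENNReal.mul_lt_top ENNReal.ofReal_lt_top hli.lt_top)).ne

lemma krn_zero_int_fin (n : ℕ) (ν : Measure (EuclideanSpace ℝ (Fin n))) [IsFiniteMeasure ν]
    (hνb : ν (ball 0 1) = 0) : ∫⁻ v, krn n 0 v ∂ν ≠ ∞ := by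
  have : ∫⁻ v, krn n 0 v ∂ν ≤ ∫⁻ v, 1 ∂ν := by
    refine lintegral_mono_ae ?_
    filter_upwards [ae_norm n ν hνb] with v hv
    unfold krn
    rw [dist_zero_left, ENNReal.ofReal_le_one]
    exact inv_le_one_of_one_le₀ (one_le_pow₀ hv)
  exact (this.trans_lt (by simp)).ne

lemma enn_real_tendsto {X : Type*} (F : Filter X) (a b s : X → ℝ≥0∞) (c : ℝ≥0)
    (ha : ∀ᶠ x in F, a x ≠ ∞) (hb : ∀ᶠ x in F, b x ≠ ∞) (hs : ∀ᶠ x in F, s x ≠ ∞)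
    (hb0 : ∀ᶠ x in F, b x ≠ 0)
    (h1 : ∀ᶠ x in F, a x ≤ c * b x + s x) (h2 : ∀ᶠ x in F, c * b x ≤ a x + s x)
    (hsb : Tendsto (fun x => s x / b x) F (𝓝 0)) :
    Tendsto (fun x => (a x).toReal / (b x).toReal) F (𝓝 (c : ℝ)) := by
  have hr : Tendsto (fun x => (s x / b x).toReal) F (𝓝 0) := by
    exact (ENNReal.tendsto_toReal ENNReal.zero_ne_top).comp hsb
  rw [tendsto_iff_dist_tendsto_zero]
  refine squeeze_zero' (Eventually.of_forall fun _ => dist_nonneg) ?_ hr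
  filter_upwards [ha, hb, hs, hb0, h1, h2] with x ha hb hs hb0 h1 h2
  have hbp : 0 < (b x).toReal := ENNReal.toReal_pos hb0 hb
  have h1' := ENNReal.toReal_mono (by finiteness) h1
  have h2' := ENNReal.toReal_mono (by finiteness) h2
  rw [ENNReal.toReal_add (by finiteness) hs, ENNReal.toReal_mul, ENNReal.coe_toReal] at h1'
  rw [ENNReal.toReal_add ha hs, ENNReal.toReal_mul, ENNReal.coe_toReal] at h2'
  rw [ENNReal.toReal_div, Real.dist_eq, abs_le]
  constructor
  · rw [neg_le_sub_iff_le_add, ← add_div, le_div_iff₀ hbp]; linarith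
  · rw [sub_le_iff_le_add, ← sub_le_iff_le_add', ← sub_div, div_le_iff₀ hbp]
    linarith

lemma wle (n : ℕ) (ν : Measure (EuclideanSpace ℝ (Fin n))) (k p q r : EuclideanSpace ℝ (Fin n) → ℝ≥0∞)
    (hk : Measurable k) (hq : Measurable q) (h : ∀ v, p v ≤ q v + r v) :
    ∫⁻ v, p v * k v ∂ν ≤ ∫⁻ v, q v * k v ∂ν + ∫⁻ v, r v * k v ∂ν := by
  rw [← lintegral_add_left (by fun_prop : Measurable fun v => q v * k v)]
  refine lintegral_mono fun v => ?_
  rw [← add_mul]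
  gcongr
  exact h v

lemma fatou_ae (n : ℕ) (hn : n ≠ 0) (l ν : Measure (EuclideanSpace ℝ (Fin n)))
    [IsFiniteMeasure ν] (hlb : l (ball 0 1) = 0) (hli : ∫⁻ v, krn n 0 v ∂l ≠ ∞)
    (hνS : ν (sphere (0 : EuclideanSpace ℝ (Fin n)) 1)ᶜ = 0) :
    ∀ᵐ z ∂ν, ∀ β : ℝ, 1 < β → ∃ L : ℝ,
      Tendsto (fun x => (∫⁻ v, krn n x v ∂l).toReal / (∫⁻ v, krn n x v ∂ν).toReal)
        (𝓝[stolzSet n β z] z) (𝓝 L) := by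
  have := locfin n l hlb hli
  have hνb : ν (ball 0 1) = 0 := measure_mono_null (fun v hv => by
    have : ‖v‖ < 1 := by simpa using hv
    simpa using this.ne) hνS
  have hsing : (volume : Measure (EuclideanSpace ℝ (Fin n))) ⟂ₘ ν := by
    refine ⟨sphere 0 1, isClosed_sphere.measurableSet, ?_, hνS⟩
    have : Nontrivial (EuclideanSpace ℝ (Fin n)) := by
      have : Nonempty (Fin n) := ⟨⟨0, Nat.pos_of_ne_zero hn⟩⟩
      infer_instance
    exact Measure.addHaar_sphere _ _ _
  set f := l.rnDeriv ν with hf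
  have hfm : Measurable f := Measure.measurable_rnDeriv l ν
  set F : EuclideanSpace ℝ (Fin n) → ℝ := fun v => (f v).toReal with hF
  have hFm : Measurable F := hfm.ennreal_toReal
  have hfF : ∀ᵐ v ∂ν, f v = ENNReal.ofReal (F v) := by
    filter_upwards [Measure.rnDeriv_ne_top l ν] with v hv
    exact (ENNReal.ofReal_toReal hv).symm
  have hdec : l = l.singularPart ν + ν.withDensity f := Measure.haveLebesgueDecomposition_add l ν
  have hFint : LocallyIntegrable F ν := by
    intro x
    obtain ⟨U, hU, hUf⟩ := (inferInstance : IsLocallyFiniteMeasure l).finiteAtNhds x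
    refine ⟨U, hU, ?_⟩
    refine integrable_toReal_of_lintegral_ne_top hfm.aemeasurable ?_
    exact ((Measure.setLIntegral_rnDeriv_le U).trans_lt hUf).ne
  filter_upwards [(Besicovitch.vitaliFamily ν).ae_tendsto_lintegral_enorm_sub_div hFint,
    (Besicovitch.vitaliFamily ν).ae_eventually_measure_zero_of_singular
      (Measure.mutuallySingular_singularPart l ν),
    (Besicovitch.vitaliFamily ν).ae_eventually_measure_zero_of_singular hsing,
    measure_eq_zero_iff_ae_notMem.1 hνS] with z h1 h2 h3 hz β hβ
  have hz : ‖z‖ = 1 := by simpa using hz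
  have t := Besicovitch.tendsto_filterAt ν z
  set d : EuclideanSpace ℝ (Fin n) → ℝ≥0∞ := fun y => ‖F y - F z‖ₑ with hd
  have hdm : Measurable d := by fun_prop
  set σ := l.singularPart ν + ν.withDensity d with hσ
  have hσt : Tendsto (fun r => σ (closedBall z r) / ν (closedBall z r)) (𝓝[>] 0) (𝓝 0) := by
    have := (h2.comp t).add (h1.comp t)
    rw [add_zero] at this
    refine this.congr fun r => ?_
    simp only [Function.comp, hσ, Measure.add_apply, ENNReal.add_div]
    rw [withDensity_apply _ measurableSet_closedBall]
  have intσ : ∀ x, ∫⁻ v, krn n x v ∂σ =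
      ∫⁻ v, krn n x v ∂(l.singularPart ν) + ∫⁻ v, d v * krn n x v ∂ν := by
    intro x
    rw [hσ, lintegral_add_measure, lintegral_withDensity_eq_lintegral_mul _ hdm (krn_measurable n x)]
    rfl
  have intl : ∀ x, ∫⁻ v, krn n x v ∂l =
      ∫⁻ v, krn n x v ∂(l.singularPart ν) + ∫⁻ v, ENNReal.ofReal (F v) * krn n x v ∂ν := by
    intro x
    conv_lhs => rw [hdec]
    rw [lintegral_add_measure, lintegral_withDensity_eq_lintegral_mul _ hfm (krn_measurable n x)]
    congr 1
    refine lintegral_congr_ae ?_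
    filter_upwards [hfF] with v hv
    simp [hv]
  have F0 : ∀ v, 0 ≤ F v := fun v => ENNReal.toReal_nonneg
  have dle : ∀ v, d v ≤ ENNReal.ofReal (F v) + ENNReal.ofReal (F z) := by
    intro v
    rw [hd, ← ENNReal.ofReal_add (F0 v) (F0 z)]
    simp only [Real.enorm_eq_ofReal_abs]
    apply ENNReal.ofReal_le_ofReal
    rw [abs_le]; constructor <;> linarith [F0 v, F0 z]
  have le1 : ∀ v, ENNReal.ofReal (F v) ≤ ENNReal.ofReal (F z) + d v := by
    intro v
    simp only [hd, Real.enorm_eq_ofReal_abs]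
    rw [← ENNReal.ofReal_add (F0 z) (abs_nonneg _)]
    apply ENNReal.ofReal_le_ofReal
    linarith [le_abs_self (F v - F z)]
  have le2 : ∀ v, ENNReal.ofReal (F z) ≤ ENNReal.ofReal (F v) + d v := by
    intro v
    simp only [hd, Real.enorm_eq_ofReal_abs]
    rw [← ENNReal.ofReal_add (F0 v) (abs_nonneg _)]
    apply ENNReal.ofReal_le_ofReal
    linarith [neg_abs_le (F v - F z)]
  have hνi := krn_zero_int_fin n ν hνb
  have mulc : ∀ x, ∫⁻ v, ENNReal.ofReal (F z) * krn n x v ∂ν =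
      ENNReal.ofReal (F z) * ∫⁻ v, krn n x v ∂ν := fun x =>
    lintegral_const_mul' _ _ ENNReal.ofReal_ne_top
  have hσi : ∫⁻ v, krn n 0 v ∂σ ≠ ∞ := by
    have : ∫⁻ v, krn n 0 v ∂σ ≤ ∫⁻ v, krn n 0 v ∂l +
        ENNReal.ofReal (F z) * ∫⁻ v, krn n 0 v ∂ν := by
      rw [intσ, intl, add_assoc, ← mulc]
      gcongr
      exact wle n ν _ _ _ _ (krn_measurable n 0) hFm.ennreal_ofReal dle
    exact (this.trans_lt (by finiteness)).ne
  have hσb : σ (ball 0 1) = 0 := by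
    rw [hσ, Measure.add_apply, withDensity_absolutelyContinuous _ _ hνb,
      Measure.absolutelyContinuous_of_le (Measure.singularPart_le l ν) hlb, add_zero]
  have hmain := fatou_point n hn σ ν hσb hσi hνb z hz (h3.comp t) hσt β hβ
  have hbt := b_top n ν hνb z hz (h3.comp t) β
  have ins : ∀ᶠ x in 𝓝[stolzSet n β z] z, ‖x‖ < 1 := by
    filter_upwards [self_mem_nhdsWithin] with x hx
    simpa using hx.1
  refine ⟨(F z).toNNReal, enn_real_tendsto _ _ _ (fun x => ∫⁻ v, krn n x v ∂σ) _ ?_ ?_ ?_ ?_ ?_ ?_ hmain⟩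
  · filter_upwards [ins] with x hx using krn_int_ne_top n l hlb hli x hx
  · filter_upwards [ins] with x hx using krn_int_ne_top n ν hνb hνi x hx
  · filter_upwards [ins] with x hx using krn_int_ne_top n σ hσb hσi x hx
  · filter_upwards [hbt.eventually (lt_mem_nhds (show (0 : ℝ≥0∞) < ∞ by simp))] with x hx
    exact hx.ne'
  · refine Eventually.of_forall fun x => ?_
    change _ ≤ ENNReal.ofReal (F z) * _ + _
    rw [intσ, intl, ← mulc, add_left_comm]
    gcongr
    exact wle n ν _ _ _ _ (krn_measurable n x) measurable_const le1
  · refine Eventually.of_forall fun x => ?_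
    change ENNReal.ofReal (F z) * _ ≤ _
    rw [intσ, intl, ← mulc]
    exact (wle n ν _ _ _ _ (krn_measurable n x) hFm.ennreal_ofReal le2).trans
      (add_le_add le_add_self le_add_self)

lemma weakLimit (n : ℕ) (m : ℕ → Measure (EuclideanSpace ℝ (Fin n))) (C : ℝ≥0)
    (hC : ∀ k, m k univ ≤ C) (hK : ∀ k, m k (closedBall 0 1)ᶜ = 0) (r : ℕ → ℝ)
    (hr : Tendsto r atTop (𝓝 1)) (hb : ∀ k, m k (ball 0 (r k)) = 0) :
    ∃ μ : Measure (EuclideanSpace ℝ (Fin n)), IsFiniteMeasure μ ∧ μ (ball 0 1) = 0 ∧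
      ∃ U : Ultrafilter ℕ, (U : Filter ℕ) ≤ atTop ∧
        ∀ f : EuclideanSpace ℝ (Fin n) → ℝ, Continuous f → (∃ B, ∀ v, ‖f v‖ ≤ B) →
          Tendsto (fun k => ∫⁻ v, ENNReal.ofReal (f v) ∂(m k)) U
            (𝓝 (∫⁻ v, ENNReal.ofReal (f v) ∂μ)) := by
  have hfin : ∀ k, IsFiniteMeasure (m k) := fun k => ⟨(hC k).trans_lt ENNReal.coe_lt_top⟩
  let M : ℕ → FiniteMeasure (EuclideanSpace ℝ (Fin n)) := fun k => ⟨m k, hfin k⟩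
  have hcomp := isCompact_setOfPred_finiteMeasure_le_of_isCompact
    (E := EuclideanSpace ℝ (Fin n)) C (isCompact_closedBall 0 1)
  let U : Ultrafilter ℕ := Ultrafilter.of atTop
  have hU : (U : Filter ℕ) ≤ atTop := Ultrafilter.of_le _
  obtain ⟨μ, -, hμ⟩ := hcomp.ultrafilter_le_nhds (U.map M) (by
    rw [le_principal_iff, Ultrafilter.coe_map]
    refine mem_map.2 (Filter.Eventually.of_forall (f := (U : Filter ℕ)) fun k => ?_)
    refine ⟨?_, ?_⟩
    · rw [← ENNReal.coe_le_coe, FiniteMeasure.ennreal_mass]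
      exact hC k
    · rw [← ENNReal.coe_eq_zero, FiniteMeasure.ennreal_coeFn_eq_coeFn_toMeasure]
      exact hK k)
  have hμ' : Tendsto M U (𝓝 μ) := hμ
  have key : ∀ f : EuclideanSpace ℝ (Fin n) → ℝ, Continuous f → (∃ B, ∀ v, ‖f v‖ ≤ B) →
          Tendsto (fun k => ∫⁻ v, ENNReal.ofReal (f v) ∂(m k)) U
            (𝓝 (∫⁻ v, ENNReal.ofReal (f v) ∂(μ : Measure (EuclideanSpace ℝ (Fin n))))) := by
    rintro f hf ⟨B, hB⟩
    have := (FiniteMeasure.tendsto_iff_forall_lintegral_tendsto.1 hμ')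
      (BoundedContinuousFunction.ofNormedAddCommGroup f hf B hB).nnrealPart
    exact this
  refine ⟨μ, inferInstance, ?_, U, hU, key⟩
  have h1 : ∀ j : ℕ, ∀ᵐ v ∂(μ : Measure (EuclideanSpace ℝ (Fin n))), 1 - 1 / ((j : ℝ) + 1) ≤ ‖v‖ := by
    intro j
    set ρ : ℝ := 1 - 1 / ((j : ℝ) + 1) with hρ
    have hρ1 : ρ < 1 := by
      have : (0 : ℝ) < 1 / ((j : ℝ) + 1) := by positivity
      linarith
    have hρ0 : 0 ≤ ρ := by
      rw [hρ, sub_nonneg, div_le_one (by positivity)]; linarith [(Nat.cast_nonneg j : (0 : ℝ) ≤ j)]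
    have ht := key (fun v => max 0 (ρ - ‖v‖)) (by fun_prop) ⟨ρ, fun v => by
      rw [Real.norm_of_nonneg (le_max_left _ _)]
      exact max_le hρ0 (by linarith [norm_nonneg v])⟩
    have hz : ∀ᶠ k in (U : Filter ℕ), ∫⁻ v, ENNReal.ofReal (max 0 (ρ - ‖v‖)) ∂(m k) = 0 := by
      filter_upwards [hU (hr.eventually (lt_mem_nhds hρ1))] with k hk
      rw [lintegral_eq_zero_iff (by fun_prop)]
      filter_upwards [measure_eq_zero_iff_ae_notMem.1 (hb k)] with v hv
      have : r k ≤ ‖v‖ := by simpa using hv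
      have hk : ρ < r k := hk
      simp only [Pi.zero_apply, ENNReal.ofReal_eq_zero]
      exact max_le le_rfl (by linarith)
    have h0 := tendsto_nhds_unique ht (tendsto_const_nhds.congr' (hz.mono fun k hk => hk.symm))
    rw [lintegral_eq_zero_iff (by fun_prop)] at h0
    filter_upwards [h0] with v hv
    simp only [Pi.zero_apply, ENNReal.ofReal_eq_zero] at hv
    linarith [(le_max_right 0 (ρ - ‖v‖)).trans hv]
  rw [measure_eq_zero_iff_ae_notMem]
  filter_upwards [ae_all_iff.2 h1] with v hv hvb
  have hvb : ‖v‖ < 1 := by simpa using hvb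
  obtain ⟨j, hj⟩ := exists_nat_one_div_lt (sub_pos.2 hvb)
  linarith [hv j]

noncomputable def Wd (n : ℕ) (c α : ℝ) (u : EuclideanSpace ℝ (Fin n) → ℝ) (s : ℝ)
    (v : EuclideanSpace ℝ (Fin n)) : ℝ≥0∞ :=
  ENNReal.ofReal (c * (((‖v‖ ^ 2 - s ^ 2) ^ (α / 2))⁻¹) * u v)

lemma Wd_measurable (n : ℕ) (c α : ℝ) (u : EuclideanSpace ℝ (Fin n) → ℝ) (hu : Measurable u)
    (s : ℝ) : Measurable (Wd n c α u s) := by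
  unfold Wd; fun_prop

noncomputable def cst (n : ℕ) (α : ℝ) : ℝ :=
  Real.Gamma (n / 2) * Real.pi ^ (-(n : ℝ) / 2 - 1) * Real.sin (Real.pi * α / 2)

lemma cst_nonneg (n : ℕ) (hn : 2 ≤ n) (α : ℝ) (hα : α ∈ Set.Ioo (0 : ℝ) 2) : 0 ≤ cst n α := by
  have h1 : 0 < Real.Gamma (n / 2) := Real.Gamma_pos_of_pos (by
    have : (0 : ℝ) < n := by exact_mod_cast (by omega : 0 < n)
    positivity)
  have h2 : 0 ≤ Real.sin (Real.pi * α / 2) := by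
    apply Real.sin_nonneg_of_nonneg_of_le_pi
    · have := hα.1; positivity
    · nlinarith [hα.2, Real.pi_pos]
  unfold cst
  have := Real.pi_pos
  positivity

lemma rep_r (n : ℕ) (hn : 2 ≤ n) (α : ℝ) (hα : α ∈ Set.Ioo (0 : ℝ) 2)
    (u : EuclideanSpace ℝ (Fin n) → ℝ)
    (hu : IsAlphaHarmonic n α (ball (0 : EuclideanSpace ℝ (Fin n)) 1) u)
    (r : ℝ) (hr0 : 0 < r) (hr1 : r < 1) (x : EuclideanSpace ℝ (Fin n)) (hx : ‖x‖ < r) :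
    ENNReal.ofReal (u x) = ENNReal.ofReal ((r ^ 2 - ‖x‖ ^ 2) ^ (α / 2)) *
      ∫⁻ v in {v | r < ‖v‖}, Wd n (cst n α) α u r v * krn n x v := by
  obtain ⟨hum, hu0, -, hu⟩ := hu
  have hc := cst_nonneg n hn α hα
  obtain ⟨h1, h2⟩ := hu 0 r hr0 (closedBall_subset_ball hr1) x (by simpa using hx)
  simp only [dist_zero_right] at h1 h2
  have hms : MeasurableSet {v : EuclideanSpace ℝ (Fin n) | r < ‖v‖} :=
    measurableSet_lt measurable_const measurable_norm
  have hxr : 0 ≤ r ^ 2 - ‖x‖ ^ 2 := by nlinarith [norm_nonneg x]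
  have hform : ∀ v ∈ {v : EuclideanSpace ℝ (Fin n) | r < ‖v‖}, stablePoissonKernel n α 0 r x v * u v =
      (r ^ 2 - ‖x‖ ^ 2) ^ (α / 2) *
        ((cst n α * (((‖v‖ ^ 2 - r ^ 2) ^ (α / 2))⁻¹) * u v) * (dist x v ^ n)⁻¹) := by
    intro v hv
    have hv : r < ‖v‖ := hv
    have hvr : 0 ≤ ‖v‖ ^ 2 - r ^ 2 := by nlinarith
    unfold stablePoissonKernel cst
    rw [dist_zero_right, dist_zero_right, Real.div_rpow hxr hvr, Real.rpow_neg dist_nonneg,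
      Real.rpow_natCast]
    ring
  have hpos : ∀ v ∈ {v : EuclideanSpace ℝ (Fin n) | r < ‖v‖},
      0 ≤ cst n α * (((‖v‖ ^ 2 - r ^ 2) ^ (α / 2))⁻¹) * u v := by
    intro v hv
    have hv : r < ‖v‖ := hv
    have hvr : 0 ≤ ‖v‖ ^ 2 - r ^ 2 := by nlinarith
    have := hu0 v
    positivity
  rw [← h2, ofReal_integral_eq_lintegral_ofReal h1, ← lintegral_const_mul' _ _ ENNReal.ofReal_ne_top]
  · refine setLIntegral_congr_fun hms fun v hv => ?_
    rw [hform v hv, ENNReal.ofReal_mul (by positivity), ENNReal.ofReal_mul (hpos v hv)]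
    rfl
  · filter_upwards [ae_restrict_mem hms] with v hv
    rw [hform v hv]
    have := hpos v hv
    simp only [Pi.zero_apply]
    positivity

lemma rep (n : ℕ) (hn : 2 ≤ n) (α : ℝ) (hα : α ∈ Set.Ioo (0 : ℝ) 2)
    (u : EuclideanSpace ℝ (Fin n) → ℝ)
    (hu : IsAlphaHarmonic n α (ball (0 : EuclideanSpace ℝ (Fin n)) 1) u) :
    ∃ l : Measure (EuclideanSpace ℝ (Fin n)), l (ball 0 1) = 0 ∧ ∫⁻ v, krn n 0 v ∂l ≠ ∞ ∧
      ∀ x, ‖x‖ < 1 → ENNReal.ofReal (u x) = ENNReal.ofReal ((1 - ‖x‖ ^ 2) ^ (α / 2)) *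
        ∫⁻ v, krn n x v ∂l := by
  have hc := cst_nonneg n hn α hα
  have hα0 : 0 < α := hα.1
  have hum := hu.1
  have hu0 := hu.2.1
  set c := cst n α with hcdef
  set r : ℕ → ℝ := fun k => 1 - 1 / ((k : ℝ) + 2) with hrdef
  have hr1 : ∀ k, r k < 1 := fun k => by
    have : (0 : ℝ) < 1 / ((k : ℝ) + 2) := by positivity
    simp only [hrdef]; linarith
  have hr2 : ∀ k, 1 / 2 ≤ r k := fun k => by
    have : 1 / ((k : ℝ) + 2) ≤ 1 / 2 := by
      apply one_div_le_one_div_of_le <;> linarith [(Nat.cast_nonneg k : (0 : ℝ) ≤ k)]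
    simp only [hrdef]; linarith
  have hrmono : Monotone r := by
    intro a b hab
    have : 1 / ((b : ℝ) + 2) ≤ 1 / ((a : ℝ) + 2) := by
      have : (a : ℝ) ≤ b := by exact_mod_cast hab
      apply one_div_le_one_div_of_le <;> [positivity; linarith]
    simp only [hrdef]; linarith
  have hrt : Tendsto r atTop (𝓝 1) := by
    have h : Tendsto (fun k : ℕ => 1 / ((k : ℝ) + 2)) atTop (𝓝 0) := by
      have h0 := (tendsto_add_atTop_iff_nat 1).2 (tendsto_one_div_add_atTop_nhds_zero_nat (𝕜 := ℝ))
      refine h0.congr fun k => ?_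
      push_cast
      congr 1
      ring
    have := h.const_sub 1
    rwa [sub_zero] at this
  set W := Wd n c α u with hW
  have hWm : ∀ s, Measurable (W s) := fun s => Wd_measurable n c α u hum s
  have hmsB : MeasurableSet {v : EuclideanSpace ℝ (Fin n) | 1 < ‖v‖} :=
    measurableSet_lt measurable_const measurable_norm
  have hmsA : ∀ s : ℝ, MeasurableSet ({v : EuclideanSpace ℝ (Fin n) | s < ‖v‖} \ {v | 1 < ‖v‖}) :=
    fun s => (measurableSet_lt measurable_const measurable_norm).diff hmsB
  set m : ℕ → Measure (EuclideanSpace ℝ (Fin n)) := fun k =>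
    (volume.restrict ({v | r k < ‖v‖} \ {v | 1 < ‖v‖})).withDensity (W (r k)) with hm
  set lo : ℕ → Measure (EuclideanSpace ℝ (Fin n)) := fun k =>
    (volume.restrict {v | 1 < ‖v‖}).withDensity (W (r k)) with hlo
  set le : Measure (EuclideanSpace ℝ (Fin n)) :=
    (volume.restrict {v | 1 < ‖v‖}).withDensity (W 1) with hle
  -- the finite radius identity
  have hid : ∀ k x, ‖x‖ < r k → ENNReal.ofReal (u x) =
      ENNReal.ofReal ((r k ^ 2 - ‖x‖ ^ 2) ^ (α / 2)) *
        (∫⁻ v, krn n x v ∂(lo k) + ∫⁻ v, krn n x v ∂(m k)) := by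
    intro k x hx
    rw [rep_r n hn α hα u hu (r k) (by linarith [hr2 k]) (hr1 k) x hx, hlo, hm]
    simp only []
    rw [lintegral_withDensity_eq_lintegral_mul _ (hWm _) (krn_measurable n x),
      lintegral_withDensity_eq_lintegral_mul _ (hWm _) (krn_measurable n x)]
    congr 1
    rw [← lintegral_inter_add_sdiff _ {v : EuclideanSpace ℝ (Fin n) | r k < ‖v‖} hmsB]
    congr 1
    rw [inter_eq_right.2]
    · rfl
    · intro v (hv : 1 < ‖v‖)
      exact (hr1 k).trans hv
  -- monotone convergence outside
  have hout : ∀ x, Tendsto (fun k => ∫⁻ v, krn n x v ∂(lo k)) atTop (𝓝 (∫⁻ v, krn n x v ∂le)) := by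
    intro x
    simp only [hlo, hle]
    simp_rw [lintegral_withDensity_eq_lintegral_mul _ (hWm _) (krn_measurable n x)]
    refine lintegral_tendsto_of_tendsto_of_monotone
      (fun k => ((hWm _).mul (krn_measurable n x)).aemeasurable) ?_ ?_
    · filter_upwards [ae_restrict_mem hmsB] with v hv a b hab
      have hv : 1 < ‖v‖ := hv
      simp only [Pi.mul_apply, hW, Wd]
      have h1 := hrmono hab
      have h2 := hr2 a
      have h3 := hr1 b
      have h4 : 0 < ‖v‖ ^ 2 - r b ^ 2 := by nlinarith
      have := hu0 v
      gcongr
    · filter_upwards [ae_restrict_mem hmsB] with v hv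
      have hv : 1 < ‖v‖ := hv
      simp only [Pi.mul_apply, hW, Wd]
      refine ENNReal.Tendsto.mul_const ?_ (Or.inr ENNReal.ofReal_ne_top)
      refine ENNReal.tendsto_ofReal ?_
      refine Tendsto.mul_const _ (Tendsto.const_mul _ ?_)
      have h4 : 0 < ‖v‖ ^ 2 - 1 ^ 2 := by nlinarith
      refine Tendsto.inv₀ ?_ (by positivity)
      exact ((hrt.pow 2).const_sub _).rpow_const (Or.inl h4.ne')
  -- mass bounds
  set A : ℝ≥0∞ := ENNReal.ofReal ((1 / 4 : ℝ) ^ (α / 2)) with hA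
  have hA0 : A ≠ 0 := by simp only [hA, ne_eq, ENNReal.ofReal_eq_zero, not_le]; positivity
  have hAt : A ≠ ∞ := ENNReal.ofReal_ne_top
  have hCt : ENNReal.ofReal (u 0) / A ≠ ∞ := ENNReal.div_ne_top ENNReal.ofReal_ne_top hA0
  have hsum : ∀ k, ∫⁻ v, krn n 0 v ∂(lo k) + ∫⁻ v, krn n 0 v ∂(m k) ≤ ENNReal.ofReal (u 0) / A := by
    intro k
    rw [ENNReal.le_div_iff_mul_le (Or.inl hA0) (Or.inl hAt),
      hid k 0 (by rw [norm_zero]; linarith [hr2 k]), mul_comm]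
    refine mul_le_mul_left (ENNReal.ofReal_le_ofReal ?_) _
    refine Real.rpow_le_rpow (by norm_num) ?_ (by positivity)
    rw [norm_zero]
    nlinarith [hr2 k]
  obtain ⟨C, hCe⟩ : ∃ C : ℝ≥0, (C : ℝ≥0∞) = ENNReal.ofReal (u 0) / A :=
    ⟨_, ENNReal.coe_toNNReal hCt⟩
  rw [← hCe] at hsum
  have hmA : ∀ k, ∀ᵐ v ∂(m k), r k < ‖v‖ ∧ ‖v‖ ≤ 1 := by
    intro k
    have : ∀ᵐ v ∂(volume.restrict ({v : EuclideanSpace ℝ (Fin n) | r k < ‖v‖} \ {v | 1 < ‖v‖})),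
        r k < ‖v‖ ∧ ‖v‖ ≤ 1 := by
      filter_upwards [ae_restrict_mem (hmsA (r k))] with v hv
      exact ⟨hv.1, not_lt.1 hv.2⟩
    exact (withDensity_absolutelyContinuous _ _).ae_le this
  have hmass : ∀ k, m k univ ≤ C := by
    intro k
    refine le_trans ?_ (le_add_self.trans (hsum k))
    rw [← lintegral_one]
    refine lintegral_mono_ae ?_
    filter_upwards [hmA k] with v hv
    have : 0 < ‖v‖ := by linarith [hr2 k]
    unfold krn
    rw [dist_zero_left, ENNReal.one_le_ofReal]
    exact (one_le_inv₀ (by positivity)).2 (pow_le_one₀ this.le hv.2)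
  obtain ⟨μ, hμf, hμb, U, hU, hlim⟩ := weakLimit n m C hmass
    (fun k => by
      rw [measure_eq_zero_iff_ae_notMem]
      filter_upwards [hmA k] with v hv
      simpa using hv.2) r hrt
    (fun k => by
      rw [measure_eq_zero_iff_ae_notMem]
      filter_upwards [hmA k] with v hv
      simpa using hv.1.le)
  have hleb : le (ball 0 1) = 0 := by
    refine withDensity_absolutelyContinuous _ _ ?_
    rw [Measure.restrict_apply measurableSet_ball]
    convert measure_empty (μ := (volume : Measure (EuclideanSpace ℝ (Fin n))))
    ext v
    simp only [mem_inter_iff, mem_ball_zero_iff, mem_setOf_eq, mem_empty_iff_false, iff_false]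
    intro h; linarith [h.1, h.2]
  have hlb : (le + μ) (ball 0 1) = 0 := by
    rw [Measure.add_apply, hleb, hμb, add_zero]
  have hlei : ∫⁻ v, krn n 0 v ∂le ≤ C :=
    le_of_tendsto' (hout 0) fun k => le_self_add.trans (hsum k)
  have hli : ∫⁻ v, krn n 0 v ∂(le + μ) ≠ ∞ := by
    rw [lintegral_add_measure]
    exact ENNReal.add_ne_top.2 ⟨(hlei.trans_lt ENNReal.coe_lt_top).ne, krn_zero_int_fin n μ hμb⟩
  refine ⟨le + μ, hlb, hli, fun x hx => ?_⟩
  -- the limit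
  have hin : Tendsto (fun k => ∫⁻ v, krn n x v ∂(m k)) U (𝓝 (∫⁻ v, krn n x v ∂μ)) := by
    set e := (1 - ‖x‖) / 2 with he
    have he0 : 0 < e := by simp only [he]; linarith
    have h1 := hlim (fun v => (max (dist x v) e ^ n)⁻¹) (by
      refine Continuous.inv₀ (by fun_prop) fun v => ?_
      have : 0 < max (dist x v) e := lt_max_of_lt_right he0
      positivity) ⟨(e ^ n)⁻¹, fun v => by
        have : 0 < max (dist x v) e := lt_max_of_lt_right he0
        rw [Real.norm_of_nonneg (by positivity)]
        gcongr
        exact le_max_right _ _⟩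
    have hk : ∀ v, (1 + ‖x‖) / 2 ≤ ‖v‖ →
        ENNReal.ofReal ((max (dist x v) e ^ n)⁻¹) = krn n x v := by
      intro v hv
      have : e ≤ dist x v := by
        have := norm_sub_norm_le v x
        rw [dist_comm, dist_eq_norm]; simp only [he]; linarith
      rw [max_eq_left this]; rfl
    have h2 : ∫⁻ v, ENNReal.ofReal ((max (dist x v) e ^ n)⁻¹) ∂μ = ∫⁻ v, krn n x v ∂μ := by
      refine lintegral_congr_ae ?_
      filter_upwards [ae_norm n μ hμb] with v hv
      exact hk v (by linarith)
    rw [h2] at h1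
    refine h1.congr' ?_
    filter_upwards [hU (hrt.eventually (lt_mem_nhds (show (1 + ‖x‖) / 2 < 1 by linarith)))] with k hk2
    refine lintegral_congr_ae ?_
    filter_upwards [hmA k] with v hv
    exact hk v (le_trans (show (1 + ‖x‖) / 2 < r k from hk2).le hv.1.le)
  have hsumlim := ((hout x).mono_left hU).add hin
  rw [← lintegral_add_measure] at hsumlim
  have hx2 : 0 < 1 ^ 2 - ‖x‖ ^ 2 := by nlinarith [norm_nonneg x]
  have ha : Tendsto (fun k => ENNReal.ofReal ((r k ^ 2 - ‖x‖ ^ 2) ^ (α / 2))) U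
      (𝓝 (ENNReal.ofReal ((1 ^ 2 - ‖x‖ ^ 2) ^ (α / 2)))) := by
    refine ENNReal.tendsto_ofReal ?_
    exact (((hrt.mono_left hU).pow 2).sub_const _).rpow_const (Or.inl hx2.ne')
  have hprod := ENNReal.Tendsto.mul ha (Or.inr (krn_int_ne_top n _ hlb hli x hx)) hsumlim
    (Or.inr ENNReal.ofReal_ne_top)
  rw [one_pow] at hprod
  refine tendsto_nhds_unique (tendsto_const_nhds.congr' ?_) hprod
  filter_upwards [hU (hrt.eventually (lt_mem_nhds hx))] with k hk
  exact hid k x hk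

lemma martin_eq (n : ℕ) (α : ℝ) (ν : Measure (EuclideanSpace ℝ (Fin n)))
    (x : EuclideanSpace ℝ (Fin n)) :
    ∫ w, martinKernel n α x w ∂ν = (1 - ‖x‖ ^ 2) ^ (α / 2) * (∫⁻ v, krn n x v ∂ν).toReal := by
  unfold martinKernel
  rw [integral_const_mul]
  congr 1
  rw [integral_eq_lintegral_of_nonneg_ae (Eventually.of_forall fun v => by positivity)
    (Measurable.aestronglyMeasurable (by measurability))]
  congr 1
  refine lintegral_congr fun v => ?_
  unfold krn
  rw [Real.rpow_neg dist_nonneg, Real.rpow_natCast]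

end aux

/-- let `ν` be a nonzero finite Borel measure on the unit sphere,
`h(x) = ∫_S M(x,w) ν(dw)`. If `v` is positive α-harmonic in `B` and for ν-a.e.
`z ∈ S` and every `β > 1` the limit of `v(x)/h(x)` along `A^β_z` exists and is
nonzero, then for every positive α-harmonic `u` in `B`, for ν-a.e. `z ∈ S` and every
`β > 1`, the limit of `u(x)/v(x)` along `A^β_z` exists. -/
theorem stmt13 (n : ℕ) (hn : 2 ≤ n) (α : ℝ) (hα : α ∈ Set.Ioo (0 : ℝ) 2)
    (ν : Measure (EuclideanSpace ℝ (Fin n))) [IsFiniteMeasure ν] (hν : ν ≠ 0)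
    (hνS : ν (sphere (0 : EuclideanSpace ℝ (Fin n)) 1)ᶜ = 0)
    (v : EuclideanSpace ℝ (Fin n) → ℝ)
    (hv : IsAlphaHarmonic n α (ball (0 : EuclideanSpace ℝ (Fin n)) 1) v)
    (hvpos : ∀ x ∈ ball (0 : EuclideanSpace ℝ (Fin n)) 1, 0 < v x)
    (hvlim : ∀ᵐ z ∂ν, ∀ β : ℝ, 1 < β → ∃ L : ℝ, L ≠ 0 ∧
      Tendsto (fun x => v x / ∫ w, martinKernel n α x w ∂ν)
        (nhdsWithin z (stolzSet n β z)) (nhds L)) :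
    ∀ u : EuclideanSpace ℝ (Fin n) → ℝ,
      IsAlphaHarmonic n α (ball (0 : EuclideanSpace ℝ (Fin n)) 1) u →
      (∀ x ∈ ball (0 : EuclideanSpace ℝ (Fin n)) 1, 0 < u x) →
      ∀ᵐ z ∂ν, ∀ β : ℝ, 1 < β → ∃ L : ℝ,
        Tendsto (fun x => u x / v x)
          (nhdsWithin z (stolzSet n β z)) (nhds L) := by
  intro u hu hupos
  obtain ⟨l, hlb, hli, hrep⟩ := rep n hn α hα u hu
  have hfa := fatou_ae n (by omega) l ν hlb hli hνS
  filter_upwards [hfa, hvlim] with z h1 h2 β hβ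
  obtain ⟨L1, hL1⟩ := h1 β hβ
  obtain ⟨L2, hL20, hL2⟩ := h2 β hβ
  refine ⟨L1 / L2, ?_⟩
  refine (hL1.div hL2 hL20).congr' ?_
  have hne : ∀ᶠ x in nhdsWithin z (stolzSet n β z),
      v x / ∫ w, martinKernel n α x w ∂ν ≠ 0 := hL2.eventually_ne hL20
  filter_upwards [self_mem_nhdsWithin, hne] with x hx hx0
  have hx1 : ‖x‖ < 1 := by simpa using hx.1
  have hp : 0 < (1 - ‖x‖ ^ 2) ^ (α / 2) := by
    have : 0 < 1 - ‖x‖ ^ 2 := by nlinarith [norm_nonneg x]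
    positivity
  have hux : u x = (1 - ‖x‖ ^ 2) ^ (α / 2) * (∫⁻ v, krn n x v ∂l).toReal := by
    have := congrArg ENNReal.toReal (hrep x hx1)
    rwa [ENNReal.toReal_ofReal (hupos x hx.1).le, ENNReal.toReal_mul,
      ENNReal.toReal_ofReal hp.le] at this
  have hvx := hvpos x hx.1
  have hb : (∫⁻ v, krn n x v ∂ν).toReal ≠ 0 := by
    intro h
    apply hx0
    rw [martin_eq, h, mul_zero, div_zero]
  simp only [Pi.div_apply]
  rw [martin_eq, hux]
  field_simp
end
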